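/- arXiv:2203.17107 — 2 statements merged into one kernel-verified Lean document; each statement's English description precedes it below -/
import Mathlib

section
/- Assume (SP) is feasible and: (1) there exist p ∈ N^⊥, m ∈ L¹(P) and ε > 0 such that h(x,ω) ≥ λ x·p(ω) − m(ω) for all x ∈ ℝⁿ, all λ ∈ [1−ε,1+ε], and a.e. ω (equivalently, h(x,ω) ≥ x·p(ω) + ε|x·p(ω)| − m(ω)); and (2) { x ∈ N : h^∞(x(·),·) ≤ 0 a.s. } is a linear space. Then, with k(x,ω) := h(x,ω) − x·p(ω): k is lower bounded (k(x,ω) ≥ −m(ω) for all x a.e.), E[k(x(·),·)] = E[h(x(·),·)] for every x ∈ N, and { x ∈ N : h^∞(x(·),·) ≤ 0 a.s. } = { x ∈ N : k^∞(x(·),·) ≤ 0 a.s. } (hence the latter is a linear space). -/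
/-!
The heart of the matter is that `E[x · p] = 0` for every adapted `x`, bounded or not, such that
`(x · p)⁺` is integrable (`InNperp.integrable_sdot`). This is the discrete-time fact that a
generalized martingale transform with integrable positive part has mean zero; it is proved in
`integrable_transform` by conditioning successively on `F_T, F_{T-1}, …`, each step removing one
term of the sum. The lower bounds with `λ = 1` for `h` and `λ = 1 + ε` for `k = h - x · p` show
that `(x · p)⁺` is integrable as soon as the positive part of either integrand is, so the two
expectations are either both `+∞` or differ by `E[x · p] = 0`.

For the recession sets, a linear minorant of an integrand is nonpositive in its recession
directions (`nonpos_of_recessionFn_le`). If `h^∞(x) ≤ 0`, this applies to `x` and, by linearity,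
to `-x`, so `x · p = 0`; if `k^∞(x) ≤ 0`, the minorants `± ε x · p - m` of `k` give `x · p = 0`.
In a direction orthogonal to `p` the recession functions of `h` and `k` agree
(`recessionFn_sub_eq`).
-/


open MeasureTheory ENNReal
open scoped RealInnerProductSpace

noncomputable section

namespace PaperDP

variable {Ω : Type*}

def ePos (x : EReal) : ℝ≥0∞ := if x = ⊤ then ⊤ else ENNReal.ofReal x.toReal

def EInt {mΩ : MeasurableSpace Ω} (μ : Measure Ω) (ξ : Ω → EReal) : EReal :=
  if (∫⁻ ω, ePos (ξ ω) ∂μ) = ⊤ then ⊤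
  else ((∫⁻ ω, ePos (ξ ω) ∂μ : ℝ≥0∞) : EReal) - ((∫⁻ ω, ePos (-(ξ ω)) ∂μ : ℝ≥0∞) : EReal)

def QuasiIntegrable {mΩ : MeasurableSpace Ω} (μ : Measure Ω) (ξ : Ω → EReal) : Prop :=
  (∫⁻ ω, ePos (ξ ω) ∂μ) ≠ ⊤ ∨ (∫⁻ ω, ePos (-(ξ ω)) ∂μ) ≠ ⊤

def IsCondExpER {mΩ : MeasurableSpace Ω} (μ : Measure Ω) (G : MeasurableSpace Ω)
    (ξ ξ' : Ω → EReal) : Prop :=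
  Measurable[G] ξ' ∧
  ∀ α : Ω → ℝ, Measurable[G] α → (∀ ω, 0 ≤ α ω) → (∃ C, ∀ ω, α ω ≤ C) →
    EInt μ (fun ω => (α ω : EReal) * ξ' ω) = EInt μ (fun ω => (α ω : EReal) * ξ ω)

def IsNormalIntegrand {E : Type*} [TopologicalSpace E] [MeasurableSpace E]
    (m : MeasurableSpace Ω) (h : E → Ω → EReal) : Prop :=
  Measurable[MeasurableSpace.prod inferInstance m] (fun p : E × Ω => h p.1 p.2) ∧
  (∀ ω, LowerSemicontinuous fun x => h x ω) ∧ ∀ x ω, h x ω ≠ ⊥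

def LBounded {E : Type*} [NormedAddCommGroup E] {mΩ : MeasurableSpace Ω} (μ : Measure Ω)
    (h : E → Ω → EReal) : Prop :=
  ∃ ρ m : Ω → ℝ, Integrable ρ μ ∧ Integrable m μ ∧ (∀ ω, 0 ≤ ρ ω) ∧ (∀ ω, 0 ≤ m ω) ∧
    ∀ᵐ ω ∂μ, ∀ x : E, (↑(-(ρ ω * ‖x‖ + m ω)) : EReal) ≤ h x ω

def IsCondNI {E : Type*} [TopologicalSpace E] [MeasurableSpace E] {mΩ : MeasurableSpace Ω}
    (μ : Measure Ω) (G : MeasurableSpace Ω) (h hG : E → Ω → EReal) : Prop :=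
  IsNormalIntegrand G hG ∧
  ∀ x : Ω → E, Measurable[G] x → QuasiIntegrable μ (fun ω => h (x ω) ω) →
    IsCondExpER μ G (fun ω => h (x ω) ω) (fun ω => hG (x ω) ω)

def recessionFn {E : Type*} [AddCommGroup E] [Module ℝ E] (g : E → EReal) (y : E) : EReal :=
  ⨅ z : {z : E // g z < ⊤}, ⨆ r : {r : ℝ // 0 < r},
    ((r.1⁻¹ : ℝ) : EReal) * (g (z.1 + r.1 • y) - g z.1)

def ConvexEFn {E : Type*} [AddCommGroup E] [Module ℝ E] (g : E → EReal) : Prop :=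
  ∀ x y : E, ∀ a b : ℝ, 0 ≤ a → 0 ≤ b → a + b = 1 →
    g (a • x + b • y) ≤ (a : EReal) * g x + (b : EReal) * g y

def ConvexIntegrand {E : Type*} [AddCommGroup E] [Module ℝ E]
    (h : E → Ω → EReal) : Prop :=
  ∀ ω, ConvexEFn (fun x => h x ω)

/-! ### Multistage setting -/

/-- The space `ℝⁿ = ℝ^{n₀} × ⋯ × ℝ^{n_T}` of deterministic strategies. -/
abbrev Strat (T : ℕ) (nn : ℕ → ℕ) := (t : Fin (T + 1)) → EuclideanSpace ℝ (Fin (nn t.1))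

/-- The scalar product `x · v = Σ_t x_t · v_t` on `Strat T nn`. -/
def sdot {T : ℕ} {nn : ℕ → ℕ} (x v : Strat T nn) : ℝ :=
  ∑ t : Fin (T + 1), ⟪x t, v t⟫

/-- An adapted process: `x_t` is `F_t`-measurable for every `t`. -/
def AdaptedProc (T : ℕ) (nn : ℕ → ℕ)
    (𝓕 : ℕ → MeasurableSpace Ω) (x : Ω → Strat T nn) : Prop :=
  ∀ t : Fin (T + 1), Measurable[𝓕 t.1] fun ω => x ω t

/-- `v ∈ N^⊥`: `v` is integrable and `E[x·v] = 0` for every bounded adapted `x`. -/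
def InNperp {mΩ : MeasurableSpace Ω} (μ : Measure Ω) (T : ℕ) (nn : ℕ → ℕ)
    (𝓕 : ℕ → MeasurableSpace Ω) (v : Ω → Strat T nn) : Prop :=
  Integrable v μ ∧
  ∀ x : Ω → Strat T nn, AdaptedProc T nn 𝓕 x → (∃ C, ∀ ω, ‖x ω‖ ≤ C) →
    ∫ ω, sdot (x ω) (v ω) ∂μ = 0

/-- `(H t)_{t ≤ T}` solves the Bellman equations (BE) for `h`:  each `H t` depends only on
the coordinates `x₀,…,x_t`; `H T` is an `F_T`-conditional expectation of `h`; and there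
are normal integrands `Ht t` with `Ht t = inf over `x_{t+1}` of `H (t+1)` and `H t` an
`F_t`-conditional expectation of `Ht t`. -/
def IsBellman {mΩ : MeasurableSpace Ω} (μ : Measure Ω) (T : ℕ) (nn : ℕ → ℕ)
    (𝓕 : ℕ → MeasurableSpace Ω) (h : Strat T nn → Ω → EReal)
    (H : ℕ → Strat T nn → Ω → EReal) : Prop :=
  (∀ t : ℕ, t ≤ T → ∀ x y : Strat T nn, ∀ ω : Ω,
      (∀ s : Fin (T + 1), s.1 ≤ t → x s = y s) → H t x ω = H t y ω) ∧
  IsCondNI μ (𝓕 T) h (H T) ∧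
  ∃ Ht : ℕ → Strat T nn → Ω → EReal, ∀ t : ℕ, (ht : t < T) →
    IsNormalIntegrand mΩ (Ht t) ∧
    (∀ (x : Strat T nn) (ω : Ω),
      Ht t x ω = ⨅ ξ : EuclideanSpace ℝ (Fin (nn (t + 1))),
        H (t + 1) (Function.update x ⟨t + 1, by omega⟩ ξ) ω) ∧
    IsCondNI μ (𝓕 t) (Ht t) (H t)

/-- The set `N_t(ω)` associated with a Bellman solution. -/
def Nset {T : ℕ} {nn : ℕ → ℕ} (H : ℕ → Strat T nn → Ω → EReal) (t : Fin (T + 1))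
    (ω : Ω) : Set (EuclideanSpace ℝ (Fin (nn t.1))) :=
  {ξ | recessionFn (fun z => H t.1 z ω) (Function.update 0 t ξ) ≤ 0}

/-- The optimum value of the stochastic optimization problem (SP). -/
def SPval {mΩ : MeasurableSpace Ω} (μ : Measure Ω) (T : ℕ) (nn : ℕ → ℕ)
    (𝓕 : ℕ → MeasurableSpace Ω) (h : Strat T nn → Ω → EReal) : EReal :=
  ⨅ x : {x : Ω → Strat T nn // AdaptedProc T nn 𝓕 x}, EInt μ (fun ω => h (x.1 ω) ω)

/-- `xbar` solves (SP): it is adapted and minimizes the objective over adapted processes. -/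
def Solves {mΩ : MeasurableSpace Ω} (μ : Measure Ω) (T : ℕ) (nn : ℕ → ℕ)
    (𝓕 : ℕ → MeasurableSpace Ω) (h : Strat T nn → Ω → EReal) (xbar : Ω → Strat T nn) : Prop :=
  AdaptedProc T nn 𝓕 xbar ∧
  ∀ x : Ω → Strat T nn, AdaptedProc T nn 𝓕 x →
    EInt μ (fun ω => h (xbar ω) ω) ≤ EInt μ (fun ω => h (x ω) ω)


/-! ### Transforms with integrable positive part -/

/-- Adapted transforms of a sequence `r` with `E[r t | G t] = 0` have mean zero as soon as their
positive part is integrable, even when the multipliers `b t` are unbounded. The induction replaces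
each `r t` by `E[r t | G n]`, which removes the last term of the sum; the truncation sets
`A M = {|b t| ≤ M for all t ≤ n}` belong to `G n` and justify the exchange. -/
theorem integrable_transform {mΩ : MeasurableSpace Ω} (μ : Measure Ω) [IsFiniteMeasure μ]
    (G : ℕ → MeasurableSpace Ω) (hle : ∀ t, G t ≤ mΩ) (hmono : ∀ s t, s ≤ t → G s ≤ G t)
    (b : ℕ → Ω → ℝ) (hb : ∀ t, Measurable[G t] (b t)) (n : ℕ) :
    ∀ r : ℕ → Ω → ℝ, (∀ t < n, Integrable (r t) μ) → (∀ t < n, μ[r t | G t] =ᵐ[μ] 0) →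
      Integrable (fun ω => max (∑ t ∈ Finset.range n, b t ω * r t ω) 0) μ →
      Integrable (fun ω => ∑ t ∈ Finset.range n, b t ω * r t ω) μ ∧
        ∫ ω, ∑ t ∈ Finset.range n, b t ω * r t ω ∂μ = 0 := by
  induction n with
  | zero => intro r _ _ _; simp
  | succ n ih =>
    intro r hr hr0 hpos
    set S : Ω → ℝ := fun ω => ∑ t ∈ Finset.range (n + 1), b t ω * r t ω with hS
    set r' : ℕ → Ω → ℝ := fun t => μ[r t | G n] with hr'
    set S' : Ω → ℝ := fun ω => ∑ t ∈ Finset.range n, b t ω * r' t ω with hS'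
    have hbn : ∀ t ≤ n, Measurable[G n] (b t) := fun t ht => (hb t).mono (hmono t n ht) le_rfl
    have hr'm : ∀ t, Measurable[G n] (r' t) := fun t => stronglyMeasurable_condExp.measurable
    have hS'm : Measurable[G n] S' := by
      refine Finset.measurable_fun_sum _ fun t ht => ?_
      exact (hbn t (Finset.mem_range.1 ht).le).mul (hr'm t)
    let A : ℕ → Set Ω := fun M => {ω | ∀ t ∈ Finset.range (n + 1), |b t ω| ≤ M}
    have hAm : ∀ M, MeasurableSet[G n] (A M) := by
      intro M
      have : A M = ⋂ t ∈ Finset.range (n + 1), {ω | |b t ω| ≤ M} := by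
        ext ω; simp [A]
      rw [this]
      refine Finset.measurableSet_biInter _ fun t ht => ?_
      have h1 := hbn t (Nat.lt_succ_iff.1 (Finset.mem_range.1 ht))
      exact measurableSet_le (continuous_abs.measurable.comp h1) measurable_const
    have hcover : AECover μ Filter.atTop A := by
      refine ⟨Filter.Eventually.of_forall fun ω => ?_, fun M => hle n _ (hAm M)⟩
      obtain ⟨M, hM⟩ := exists_nat_ge (∑ t ∈ Finset.range (n + 1), |b t ω|)
      filter_upwards [Filter.eventually_ge_atTop M] with K hMK t ht
      calc |b t ω| ≤ ∑ t ∈ Finset.range (n + 1), |b t ω| :=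
            Finset.single_le_sum (f := fun t => |b t ω|) (fun i _ => abs_nonneg _) ht
        _ ≤ M := hM
        _ ≤ K := by exact_mod_cast hMK
    -- On a `G n`-measurable set inside `A M`, conditioning on `G n` turns each term of `S`
    -- into the corresponding term of `S'`.
    have hterm : ∀ M : ℕ, ∀ s, MeasurableSet[G n] s → s ⊆ A M → ∀ t ≤ n,
        IntegrableOn (fun ω => b t ω * r t ω) s μ ∧ IntegrableOn (fun ω => b t ω * r' t ω) s μ ∧
        ∫ ω in s, b t ω * r t ω ∂μ = ∫ ω in s, b t ω * r' t ω ∂μ := by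
      intro M s hs hsA t ht
      have hs0 := hle n _ hs
      have ha : StronglyMeasurable[G n] (s.indicator (b t)) :=
        ((hbn t ht).indicator hs).stronglyMeasurable
      have hbd : ∀ ω, ‖s.indicator (b t) ω‖ ≤ M := by
        intro ω
        by_cases hω : ω ∈ s
        · rw [Set.indicator_of_mem hω]
          exact hsA hω t (Finset.mem_range.2 (Nat.lt_succ_iff.2 ht))
        · rw [Set.indicator_of_notMem hω]; simp
      have hrt := hr t (Nat.lt_succ_iff.2 ht)
      have hi1 : Integrable (fun ω => s.indicator (b t) ω * r t ω) μ :=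
        hrt.bdd_mul (ha.mono (hle n)).aestronglyMeasurable (Filter.Eventually.of_forall hbd)
      have hi2 : Integrable (fun ω => s.indicator (b t) ω * r' t ω) μ :=
        integrable_condExp.bdd_mul (ha.mono (hle n)).aestronglyMeasurable
          (Filter.Eventually.of_forall hbd)
      have he : ∀ f : Ω → ℝ, (fun ω => s.indicator (b t) ω * f ω)
          = s.indicator (fun ω => b t ω * f ω) := by
        intro f; ext ω; by_cases hω : ω ∈ s <;> simp [hω]
      refine ⟨?_, ?_, ?_⟩
      · rw [← integrable_indicator_iff hs0, ← he]; exact hi1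
      · rw [← integrable_indicator_iff hs0, ← he]; exact hi2
      · rw [← integral_indicator hs0, ← integral_indicator hs0, ← he, ← he,
          ← integral_condExp (hle n)]
        exact integral_congr_ae (condExp_mul_of_stronglyMeasurable_left ha hi1 hrt)
    have hset : ∀ M : ℕ, ∀ s, MeasurableSet[G n] s → s ⊆ A M →
        IntegrableOn S s μ ∧ IntegrableOn S' s μ ∧ ∫ ω in s, S ω ∂μ = ∫ ω in s, S' ω ∂μ := by
      intro M s hs hsA
      have H := hterm M s hs hsA
      refine ⟨integrable_finsetSum _ fun t ht =>
          (H t (Nat.lt_succ_iff.1 (Finset.mem_range.1 ht))).1,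
        integrable_finsetSum _ fun t ht => (H t (Finset.mem_range.1 ht).le).2.1, ?_⟩
      rw [integral_finsetSum _ fun t ht => (H t (Nat.lt_succ_iff.1 (Finset.mem_range.1 ht))).1,
        integral_finsetSum _ fun t ht => (H t (Finset.mem_range.1 ht).le).2.1,
        Finset.sum_range_succ, (H n le_rfl).2.2]
      have h0 : ∫ ω in s, b n ω * r' n ω ∂μ = 0 := by
        rw [integral_eq_zero_of_ae]
        filter_upwards [ae_restrict_of_ae (hr0 n (Nat.lt_succ_self n))] with ω hω
        simp [hr', hω]
      rw [h0, add_zero]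
      exact Finset.sum_congr rfl fun t ht => (H t (Finset.mem_range.1 ht).le).2.2
    have hS'pos : Integrable (fun ω => max (S' ω) 0) μ := by
      refine hcover.integrable_of_integral_bounded_of_nonneg_ae (∫ ω, max (S ω) 0 ∂μ)
        (fun M => (hset M _ (hAm M) subset_rfl).2.1.pos_part)
        (Filter.Eventually.of_forall fun ω => le_max_right _ _)
        (Filter.Eventually.of_forall fun M => ?_)
      set B : Set Ω := {ω | 0 < S' ω}
      have hB : MeasurableSet[G n] B := measurableSet_lt measurable_const hS'm
      obtain ⟨h1, h2, h3⟩ := hset M (B ∩ A M) (hB.inter (hAm M)) Set.inter_subset_right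
      have e1 : (fun ω => max (S' ω) 0) = B.indicator S' := by
        ext ω
        by_cases hω : 0 < S' ω
        · rw [Set.indicator_of_mem (show ω ∈ B from hω), max_eq_left hω.le]
        · rw [Set.indicator_of_notMem (show ω ∉ B from hω), max_eq_right (not_lt.1 hω)]
      calc ∫ ω in A M, max (S' ω) 0 ∂μ = ∫ ω in B ∩ A M, S' ω ∂μ := by
            rw [e1, integral_indicator (hle n _ hB), Measure.restrict_restrict (hle n _ hB)]
        _ = ∫ ω in B ∩ A M, S ω ∂μ := h3.symm
        _ ≤ ∫ ω in B ∩ A M, max (S ω) 0 ∂μ :=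
            integral_mono h1 hpos.integrableOn fun ω => le_max_left _ _
        _ ≤ ∫ ω, max (S ω) 0 ∂μ :=
            setIntegral_le_integral hpos (Filter.Eventually.of_forall fun ω => le_max_right _ _)
    obtain ⟨hS'i, hS'0⟩ := ih r' (fun t _ => integrable_condExp)
      (fun t ht => (condExp_condExp_of_le (hmono t n ht.le) (hle n)).trans
        (hr0 t (ht.trans (Nat.lt_succ_self n)))) hS'pos
    have hneg : Integrable (fun ω => max (S ω) 0 - S ω) μ := by
      refine hcover.integrable_of_integral_bounded_of_nonneg_ae
        (∫ ω, max (S ω) 0 ∂μ + ∫ ω, |S' ω| ∂μ)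
        (fun M => hpos.integrableOn.sub (hset M _ (hAm M) subset_rfl).1)
        (Filter.Eventually.of_forall fun ω => sub_nonneg.2 (le_max_left _ _))
        (Filter.Eventually.of_forall fun M => ?_)
      obtain ⟨h1, h2, h3⟩ := hset M _ (hAm M) subset_rfl
      rw [integral_sub hpos.integrableOn h1, h3, sub_eq_add_neg]
      refine add_le_add
        (setIntegral_le_integral hpos (Filter.Eventually.of_forall fun ω => le_max_right _ _)) ?_
      calc -∫ ω in A M, S' ω ∂μ ≤ |∫ ω in A M, S' ω ∂μ| := neg_le_abs _
        _ ≤ ∫ ω in A M, |S' ω| ∂μ := abs_integral_le_integral_abs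
        _ ≤ ∫ ω, |S' ω| ∂μ :=
            setIntegral_le_integral hS'i.abs (Filter.Eventually.of_forall fun ω => abs_nonneg _)
    have hSi : Integrable S μ := by
      exact (hpos.sub hneg).congr (Filter.Eventually.of_forall fun ω => sub_sub_cancel _ _)
    refine ⟨hSi, ?_⟩
    have l1 := hcover.integral_tendsto_of_countably_generated hSi
    have l2 := hcover.integral_tendsto_of_countably_generated hS'i
    rw [← hS'0]
    exact tendsto_nhds_unique l1 (l2.congr fun M => (hset M _ (hAm M) subset_rfl).2.2.symm)

/-! ### Adapted processes and annihilators -/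

theorem sdot_add_left {T : ℕ} {nn : ℕ → ℕ} (x y v : Strat T nn) :
    sdot (x + y) v = sdot x v + sdot y v := by
  simp [sdot, inner_add_left, Finset.sum_add_distrib]

theorem sdot_smul_left {T : ℕ} {nn : ℕ → ℕ} (c : ℝ) (x v : Strat T nn) :
    sdot (c • x) v = c * sdot x v := by
  simp [sdot, inner_smul_left, Finset.mul_sum]

theorem AdaptedProc.measurable {mΩ : MeasurableSpace Ω} {T : ℕ} {nn : ℕ → ℕ}
    {𝓕 : ℕ → MeasurableSpace Ω} (hle : ∀ t, 𝓕 t ≤ mΩ) {x : Ω → Strat T nn}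
    (hx : AdaptedProc T nn 𝓕 x) : Measurable x :=
  measurable_pi_lambda _ fun t => (hx t).mono (hle t.1) le_rfl

/-- An annihilator `p` of the bounded adapted processes also annihilates an unbounded adapted `x`
whenever `(x · p)⁺` is integrable. Each `x_t` is normalized by `1 + ‖x_t‖`, so that
`x_t · p_t = (1 + ‖x_t‖) r_t` with `r_t` integrable and `E[r_t | F_t] = 0`. -/
theorem InNperp.integrable_sdot {mΩ : MeasurableSpace Ω} {μ : Measure Ω} [IsProbabilityMeasure μ]
    {T : ℕ} {nn : ℕ → ℕ} {𝓕 : ℕ → MeasurableSpace Ω}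
    (hle : ∀ t, 𝓕 t ≤ mΩ) (hmono : ∀ s t, s ≤ t → 𝓕 s ≤ 𝓕 t)
    {p x : Ω → Strat T nn} (hp : InNperp μ T nn 𝓕 p) (hx : AdaptedProc T nn 𝓕 x)
    (hpos : Integrable (fun ω => max (sdot (x ω) (p ω)) 0) μ) :
    Integrable (fun ω => sdot (x ω) (p ω)) μ ∧ ∫ ω, sdot (x ω) (p ω) ∂μ = 0 := by
  let u : (t : Fin (T + 1)) → Ω → EuclideanSpace ℝ (Fin (nn t.1)) :=
    fun t ω => (1 + ‖x ω t‖)⁻¹ • x ω t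
  have hum : ∀ t, Measurable[𝓕 t.1] (u t) := fun t => by
    have hc : Continuous fun v : EuclideanSpace ℝ (Fin (nn t.1)) => (1 + ‖v‖)⁻¹ • v :=
      ((continuous_const.add continuous_norm).inv₀ fun v =>
        (add_pos_of_pos_of_nonneg one_pos (norm_nonneg v)).ne').smul continuous_id
    exact hc.measurable.comp (hx t)
  have hub : ∀ t ω, ‖u t ω‖ ≤ 1 := by
    intro t ω
    have h0 : 0 ≤ ‖x ω t‖ := norm_nonneg _
    simp only [u, norm_smul, norm_inv, Real.norm_eq_abs]
    rw [abs_of_pos (by positivity), inv_mul_le_iff₀ (by positivity)]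
    linarith
  -- Beyond the horizon the sequences are extended by `1` and `0`.
  let b : ℕ → Ω → ℝ := fun t ω => if ht : t < T + 1 then 1 + ‖x ω ⟨t, ht⟩‖ else 1
  let r : ℕ → Ω → ℝ := fun t ω =>
    if ht : t < T + 1 then ⟪u ⟨t, ht⟩ ω, p ω ⟨t, ht⟩⟫ else 0
  have hbm : ∀ t, Measurable[𝓕 t] (b t) := by
    intro t
    by_cases ht : t < T + 1
    · simp only [b, ht, dite_true]
      have hc : Continuous fun v : EuclideanSpace ℝ (Fin (nn t)) => 1 + ‖v‖ :=
        continuous_const.add continuous_norm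
      exact hc.measurable.comp (hx ⟨t, ht⟩)
    · simp only [b, ht, dite_false]
      exact measurable_const
  have hri : ∀ t < T + 1, Integrable (r t) μ := by
    intro t ht
    simp only [r, ht, dite_true]
    have hpt : Integrable (fun ω => p ω ⟨t, ht⟩) μ := hp.1.eval _
    refine hpt.mono ?_ (Filter.Eventually.of_forall fun ω => ?_)
    · exact (((hum ⟨t, ht⟩).mono (hle t) le_rfl).aestronglyMeasurable).inner
        hpt.aestronglyMeasurable
    · refine (norm_inner_le_norm _ _).trans ?_
      exact mul_le_of_le_one_left (norm_nonneg _) (hub _ _)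
  have hr0 : ∀ t < T + 1, μ[r t | 𝓕 t] =ᵐ[μ] 0 := by
    intro t ht
    symm
    refine ae_eq_condExp_of_forall_setIntegral_eq (hle t) (hri t ht) (fun s _ _ => ?_)
      (fun s hs _ => ?_) ?_
    · exact integrableOn_zero
    · classical
      let y : Ω → Strat T nn := fun ω => Pi.single ⟨t, ht⟩ (s.indicator (u ⟨t, ht⟩) ω)
      have hy : AdaptedProc T nn 𝓕 y := by
        intro t'
        by_cases h' : t' = ⟨t, ht⟩
        · subst h'
          simp only [y, Pi.single_eq_same]
          exact (hum ⟨t, ht⟩).indicator hs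
        · simp only [y, Pi.single_eq_of_ne h']
          exact measurable_const
      have hyb : ∃ C, ∀ ω, ‖y ω‖ ≤ C := by
        refine ⟨1, fun ω => (pi_norm_le_iff_of_nonneg zero_le_one).2 fun t' => ?_⟩
        by_cases h' : t' = ⟨t, ht⟩
        · subst h'
          simp only [y, Pi.single_eq_same]
          exact (norm_indicator_le_norm_self _ _).trans (hub _ _)
        · simp [y, Pi.single_eq_of_ne h']
      have h0 := hp.2 y hy hyb
      have he : (fun ω => sdot (y ω) (p ω)) = s.indicator (r t) := by
        ext ω
        rw [sdot, Finset.sum_eq_single ⟨t, ht⟩]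
        · by_cases hω : ω ∈ s <;> simp only [y, r, hω, ht, Pi.single_eq_same, dite_true,
            Set.indicator_of_mem, Set.indicator_of_notMem, not_false_eq_true, inner_zero_left]
        · intro t' _ h'
          simp [y, Pi.single_eq_of_ne h']
        · simp
      rw [he, integral_indicator (hle t _ hs)] at h0
      simp [h0]
    · exact aestronglyMeasurable_zero
  have he : (fun ω => sdot (x ω) (p ω)) =
      fun ω => ∑ t ∈ Finset.range (T + 1), b t ω * r t ω := by
    ext ω
    rw [Finset.sum_range, sdot]
    refine Finset.sum_congr rfl fun t _ => ?_
    have h0 : 1 + ‖x ω t‖ ≠ 0 := by positivity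
    simp only [b, r, u, t.2, dite_true, Fin.eta, real_inner_smul_left]
    rw [← mul_assoc, mul_inv_cancel₀ h0, one_mul]
  have hpos' : Integrable (fun ω => max (∑ t ∈ Finset.range (T + 1), b t ω * r t ω) 0) μ :=
    hpos.congr (Filter.Eventually.of_forall fun ω => congrArg (max · 0) (congrFun he ω))
  rw [he]
  exact integrable_transform μ 𝓕 hle hmono b hbm (T + 1) r hri hr0 hpos'

/-! ### The extended expectation -/

@[simp] theorem ePos_coe (a : ℝ) : ePos (a : EReal) = ENNReal.ofReal a := by
  simp [ePos]

theorem ePos_add_coe_le (a : EReal) (c : ℝ) :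
    ePos (a + (c : EReal)) ≤ ePos a + ENNReal.ofReal |c| := by
  induction a with
  | bot => simp [ePos]
  | top => simp [ePos]
  | coe a =>
    rw [← EReal.coe_add, ePos_coe, ePos_coe]
    exact (ENNReal.ofReal_le_ofReal (by gcongr; exact le_abs_self c)).trans
      ENNReal.ofReal_add_le

theorem ofReal_le_ePos {a : ℝ} {b : EReal} (hab : (a : EReal) ≤ b) :
    ENNReal.ofReal a ≤ ePos b := by
  induction b with
  | bot => simp at hab
  | top => simp [ePos]
  | coe b => rw [ePos_coe]; exact ENNReal.ofReal_le_ofReal (EReal.coe_le_coe_iff.1 hab)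

theorem EInt_congr_ae {mΩ : MeasurableSpace Ω} {μ : Measure Ω} {ξ η : Ω → EReal}
    (hξ : ξ =ᵐ[μ] η) : EInt μ ξ = EInt μ η := by
  have h1 : ∫⁻ ω, ePos (ξ ω) ∂μ = ∫⁻ ω, ePos (η ω) ∂μ :=
    lintegral_congr_ae (hξ.mono fun ω hω => by simp only [hω])
  have h2 : ∫⁻ ω, ePos (-ξ ω) ∂μ = ∫⁻ ω, ePos (-η ω) ∂μ :=
    lintegral_congr_ae (hξ.mono fun ω hω => by simp only [hω])
  simp only [EInt, h1, h2]

theorem EInt_coe {mΩ : MeasurableSpace Ω} {μ : Measure Ω} {f : Ω → ℝ} (hf : Integrable f μ) :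
    EInt μ (fun ω => (f ω : EReal)) = ((∫ ω, f ω ∂μ : ℝ) : EReal) := by
  have h1 : ∫⁻ ω, ENNReal.ofReal (f ω) ∂μ ≠ ⊤ := hf.lintegral_lt_top.ne
  have h2 : ∫⁻ ω, ENNReal.ofReal (-f ω) ∂μ ≠ ⊤ := hf.neg.lintegral_lt_top.ne
  simp only [EInt, ← EReal.coe_neg, ePos_coe, if_neg h1]
  rw [integral_eq_lintegral_pos_part_sub_lintegral_neg_part hf, EReal.coe_sub,
    EReal.coe_ennreal_toReal h1, EReal.coe_ennreal_toReal h2]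

/-- Subtracting an integrable `D` of mean zero does not change the extended expectation, provided
the integrand has an integrable minorant and an integrable positive part. -/
theorem EInt_sub_eq {mΩ : MeasurableSpace Ω} {μ : Measure Ω} {ξ : Ω → EReal} {D c : Ω → ℝ}
    (hξ : Measurable ξ) (hpos : ∫⁻ ω, ePos (ξ ω) ∂μ ≠ ⊤)
    (hc : Integrable c μ) (hlb : ∀ᵐ ω ∂μ, (c ω : EReal) ≤ ξ ω)
    (hD : Integrable D μ) (hD0 : ∫ ω, D ω ∂μ = 0) :
    EInt μ (fun ω => ξ ω - (D ω : EReal)) = EInt μ ξ := by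
  have hePos : Measurable ePos := by
    refine Measurable.ite (measurableSet_singleton _) measurable_const ?_
    exact ENNReal.measurable_ofReal.comp measurable_ereal_toReal
  have hfin : ∀ᵐ ω ∂μ, ξ ω = ((ξ ω).toReal : EReal) := by
    filter_upwards [ae_lt_top (hePos.comp hξ) hpos, hlb] with ω h1 h2
    refine (EReal.coe_toReal (fun h => ?_) (fun h => ?_)).symm
    · simp [ePos, h] at h1
    · simp [h] at h2
  have hf : Integrable (fun ω => (ξ ω).toReal) μ := by
    have hg : Integrable (fun ω => (ePos (ξ ω)).toReal + |c ω|) μ :=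
      (integrable_toReal_of_lintegral_ne_top (hePos.comp hξ).aemeasurable hpos).add hc.abs
    refine hg.mono hξ.ereal_toReal.aestronglyMeasurable ?_
    filter_upwards [hfin, hlb] with ω h1 h2
    rw [h1] at h2
    have h3 : c ω ≤ (ξ ω).toReal := EReal.coe_le_coe_iff.1 h2
    have h4 : (ePos (ξ ω)).toReal = max (ξ ω).toReal 0 := by
      rw [h1, ePos_coe, ENNReal.toReal_ofReal', EReal.toReal_coe]
    rw [h4, Real.norm_eq_abs, Real.norm_eq_abs]
    refine le_trans ?_ (le_abs_self _)
    have h5 := neg_abs_le (c ω)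
    have h6 := abs_nonneg (c ω)
    exact abs_le.2 ⟨by linarith [le_max_right (ξ ω).toReal 0],
      by linarith [le_max_left (ξ ω).toReal 0]⟩
  have e1 : EInt μ ξ = ((∫ ω, (ξ ω).toReal ∂μ : ℝ) : EReal) :=
    (EInt_congr_ae hfin).trans (EInt_coe hf)
  have e2 : EInt μ (fun ω => ξ ω - (D ω : EReal)) =
      ((∫ ω, ((ξ ω).toReal - D ω) ∂μ : ℝ) : EReal) := by
    refine (EInt_congr_ae ?_).trans (EInt_coe (hf.sub hD))
    filter_upwards [hfin] with ω hω
    rw [EReal.coe_sub, ← hω]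
  rw [e1, e2, integral_sub hf hD, hD0, sub_zero]

/-! ### Recession functions -/

/-- A linear minorant of `g` (up to a constant) is nonpositive in the recession directions of `g`;
neither convexity nor lower semicontinuity of `g` is involved. -/
theorem nonpos_of_recessionFn_le {E : Type*} [AddCommGroup E] [Module ℝ E] {g : E → EReal}
    (l : E → ℝ) (hadd : ∀ x y, l (x + y) = l x + l y) (hsmul : ∀ (c : ℝ) x, l (c • x) = c * l x)
    (c : ℝ) (hlb : ∀ z, ((l z - c : ℝ) : EReal) ≤ g z) {y : E} (hy : recessionFn g y ≤ 0) :
    l y ≤ 0 := by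
  refine le_of_forall_pos_lt_add fun δ hδ => ?_
  have hlt : recessionFn g y < ((δ / 2 : ℝ) : EReal) :=
    hy.trans_lt (by exact_mod_cast half_pos hδ)
  obtain ⟨⟨z, hz⟩, hz'⟩ := iInf_lt_iff.1 hlt
  have hzb : g z ≠ ⊥ := fun h => EReal.coe_ne_bot _ (le_bot_iff.1 (h ▸ hlb z))
  obtain ⟨a, ha⟩ : ∃ a : ℝ, g z = a := ⟨_, (EReal.coe_toReal hz.ne hzb).symm⟩
  have key : ∀ r : ℝ, 0 < r → l z + r * l y - c ≤ a + r * (δ / 2) := by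
    intro r hr
    have h1 := (le_iSup (fun r : {r : ℝ // 0 < r} =>
      ((r.1⁻¹ : ℝ) : EReal) * (g (z + r.1 • y) - g z)) ⟨r, hr⟩).trans hz'.le
    have h2 := hlb (z + r • y)
    rw [hadd, hsmul] at h2
    simp only [ha] at h1
    generalize g (z + r • y) = w at h1 h2
    induction w with
    | bot => exact absurd (le_bot_iff.1 h2) (EReal.coe_ne_bot _)
    | top =>
      rw [EReal.top_sub_coe, EReal.coe_mul_top_of_pos (inv_pos.2 hr)] at h1
      exact absurd h1 (by simp)
    | coe w =>
      have h1' : r⁻¹ * (w - a) ≤ δ / 2 := by exact_mod_cast h1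
      have h2' : l z + r * l y - c ≤ w := by exact_mod_cast h2
      rw [inv_mul_le_iff₀ hr] at h1'
      linarith
  -- If `l y ≥ δ`, a step longer than `2 (a + c - l z) / δ` contradicts `key`.
  by_contra hcon
  have hcon : δ ≤ l y := by linarith [not_lt.1 hcon]
  have hr : 0 < (|a + c - l z| + 1) * (2 / δ) := by positivity
  have h1 := key _ hr
  have h2 : (|a + c - l z| + 1) * (2 / δ) * (δ / 2) = |a + c - l z| + 1 := by field_simp
  have h3 : (|a + c - l z| + 1) * (2 / δ) * δ ≤ (|a + c - l z| + 1) * (2 / δ) * l y :=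
    mul_le_mul_of_nonneg_left hcon hr.le
  linarith [le_abs_self (a + c - l z)]

theorem recessionFn_sub_eq {E : Type*} [AddCommGroup E] [Module ℝ E] {g : E → EReal}
    (l : E → ℝ) (hadd : ∀ x y, l (x + y) = l x + l y) (hsmul : ∀ (c : ℝ) x, l (c • x) = c * l x)
    (hg : ∀ z, g z ≠ ⊥) {y : E} (hy : l y = 0) :
    recessionFn (fun z => g z - (l z : EReal)) y = recessionFn g y := by
  simp only [recessionFn, iInf_subtype]
  refine iInf_congr fun z => ?_
  have hdom : g z - (l z : EReal) < ⊤ ↔ g z < ⊤ := by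
    have := hg z
    generalize g z = a at *
    induction a with
    | bot => simp at this
    | top => simp
    | coe a => exact iff_of_true (EReal.coe_lt_top (a - l z)) (EReal.coe_lt_top a)
  refine iInf_congr_Prop hdom fun hz => ?_
  refine iSup_congr fun r => ?_
  congr 1
  have h1 : l (z + r.1 • y) = l z := by rw [hadd, hsmul, hy, mul_zero, add_zero]
  have hz' := hg z
  have hw' := hg (z + r.1 • y)
  rw [h1]
  generalize g z = a at *
  generalize g (z + r.1 • y) = w at *
  induction a with
  | bot => simp at hz'
  | top => simp at hz
  | coe a =>
    induction w with
    | bot => simp at hw'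
    | top => rw [EReal.top_sub_coe, ← EReal.coe_sub, EReal.top_sub_coe, EReal.top_sub_coe]
    | coe w => norm_cast; ring

/-! ### Comparison of `h` and `h - x · p` -/

/-- Lemma 4.8: sufficient conditions for Assumption 4.7.  If (SP) is
feasible, `h(x,ω) ≥ λ x·p(ω) - m(ω)` for all `λ ∈ [1-ε,1+ε]`, and
`{x ∈ N : h^∞(x) ≤ 0 a.s.}` is a linear space, then with `k := h - x·p`: `k ≥ -m`,
`E k(x) = E h(x)` on `N`, and the recession sets for `h` and `k` coincide. -/
theorem statement16 {Ω : Type*} {mΩ : MeasurableSpace Ω} (μ : Measure Ω)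
    [IsProbabilityMeasure μ] (hcompl : μ.IsComplete)
    (T : ℕ) (nn : ℕ → ℕ) (𝓕 : ℕ → MeasurableSpace Ω)
    (hle : ∀ t, 𝓕 t ≤ mΩ) (hmono : ∀ s t, s ≤ t → 𝓕 s ≤ 𝓕 t)
    (h : Strat T nn → Ω → EReal) (hNI : IsNormalIntegrand mΩ h)
    (hconv : ConvexIntegrand h)
    (hfeas : ∃ x : Ω → Strat T nn, AdaptedProc T nn 𝓕 x ∧
      EInt μ (fun ω => h (x ω) ω) < ⊤)
    (p : Ω → Strat T nn) (hp : InNperp μ T nn 𝓕 p)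
    (m : Ω → ℝ) (hm : Integrable m μ) (ε : ℝ) (hε : 0 < ε)
    (hlb : ∀ᵐ ω ∂μ, ∀ x : Strat T nn, ∀ l ∈ Set.Icc (1 - ε) (1 + ε),
      ((l * sdot x (p ω) - m ω : ℝ) : EReal) ≤ h x ω)
    (hlin : ∃ S : Submodule ℝ (Ω → Strat T nn),
      {x : Ω → Strat T nn | AdaptedProc T nn 𝓕 x ∧
        ∀ᵐ ω ∂μ, recessionFn (fun z => h z ω) (x ω) ≤ 0} = ↑S) :
    (∀ᵐ ω ∂μ, ∀ x : Strat T nn,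
      ((-(m ω) : ℝ) : EReal) ≤ h x ω - ((sdot x (p ω) : ℝ) : EReal)) ∧
    (∀ x : Ω → Strat T nn, AdaptedProc T nn 𝓕 x →
      EInt μ (fun ω => h (x ω) ω - ((sdot (x ω) (p ω) : ℝ) : EReal)) =
        EInt μ (fun ω => h (x ω) ω)) ∧
    {x : Ω → Strat T nn | AdaptedProc T nn 𝓕 x ∧
        ∀ᵐ ω ∂μ, recessionFn (fun z => h z ω) (x ω) ≤ 0} =
      {x : Ω → Strat T nn | AdaptedProc T nn 𝓕 x ∧
        ∀ᵐ ω ∂μ, recessionFn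
          (fun z => h z ω - ((sdot z (p ω) : ℝ) : EReal)) (x ω) ≤ 0} := by
  classical
  have h1mem : (1 : ℝ) ∈ Set.Icc (1 - ε) (1 + ε) := ⟨by linarith, by linarith⟩
  have hplus : (1 + ε : ℝ) ∈ Set.Icc (1 - ε) (1 + ε) := ⟨by linarith, by linarith⟩
  have hminus : (1 - ε : ℝ) ∈ Set.Icc (1 - ε) (1 + ε) := ⟨by linarith, by linarith⟩
  have hshift : ∀ (a d : ℝ) (w : EReal), ((a + d : ℝ) : EReal) ≤ w → (a : EReal) ≤ w - (d : EReal) := by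
    intro a d w hw
    rw [EReal.le_sub_iff_add_le (Or.inl (EReal.coe_ne_bot _)) (Or.inl (EReal.coe_ne_top _))]
    exact_mod_cast hw
  have hk1 : ∀ᵐ ω ∂μ, ∀ x : Strat T nn, ∀ l ∈ Set.Icc (1 - ε) (1 + ε),
      (((l - 1) * sdot x (p ω) - m ω : ℝ) : EReal) ≤ h x ω - ((sdot x (p ω) : ℝ) : EReal) := by
    filter_upwards [hlb] with ω hω x l hl
    refine hshift _ _ _ ?_
    convert hω x l hl using 2
    ring
  refine ⟨?_, ?_, ?_⟩
  · filter_upwards [hk1] with ω hω x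
    simpa using hω x 1 h1mem
  · intro x hx
    have hxm : Measurable x := hx.measurable hle
    set D : Ω → ℝ := fun ω => sdot (x ω) (p ω) with hD
    have hξ : Measurable fun ω => h (x ω) ω := hNI.1.comp (hxm.prodMk measurable_id)
    have hDm : AEStronglyMeasurable D μ := by
      refine Finset.aestronglyMeasurable_fun_sum _ fun t _ => ?_
      exact ((measurable_pi_apply t).comp hxm).aestronglyMeasurable.inner
        (hp.1.eval t).aestronglyMeasurable
    have hmfin : ∫⁻ ω, ENNReal.ofReal |m ω| ∂μ ≠ ⊤ := hm.abs.lintegral_lt_top.ne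
    -- Each of the two integrands dominates a positive multiple of `x · p` up to `m`, so
    -- integrability of its positive part forces that of `(x · p)⁺`.
    have hmain : ∀ (η : Ω → EReal) (c : ℝ), 0 < c →
        (∀ᵐ ω ∂μ, ((c * D ω - m ω : ℝ) : EReal) ≤ η ω) → ∫⁻ ω, ePos (η ω) ∂μ ≠ ⊤ →
        Integrable D μ ∧ ∫ ω, D ω ∂μ = 0 := by
      intro η c hc hη hfin
      refine hp.integrable_sdot hle hmono hx ?_
      have hcD : Integrable (fun ω => max (c * D ω) 0) μ := by
        have hmeas : AEStronglyMeasurable (fun ω => max (c * D ω) 0) μ :=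
          (hDm.const_mul c).sup aestronglyMeasurable_const
        refine ⟨hmeas, ?_⟩
        have hnn : 0 ≤ᵐ[μ] fun ω => max (c * D ω) 0 :=
          Filter.Eventually.of_forall fun ω => le_max_right _ _
        rw [hasFiniteIntegral_iff_ofReal hnn]
        calc ∫⁻ ω, ENNReal.ofReal (max (c * D ω) 0) ∂μ
            ≤ ∫⁻ ω, (ePos (η ω) + ENNReal.ofReal |m ω|) ∂μ := by
              refine lintegral_mono_ae ?_
              filter_upwards [hη] with ω hω
              rw [ENNReal.ofReal_max, ENNReal.ofReal_zero, max_eq_left zero_le]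
              have : c * D ω = (c * D ω - m ω) + m ω := by ring
              rw [this]
              refine ENNReal.ofReal_add_le.trans (add_le_add (ofReal_le_ePos hω) ?_)
              exact ENNReal.ofReal_le_ofReal (le_abs_self _)
          _ = ∫⁻ ω, ePos (η ω) ∂μ + ∫⁻ ω, ENNReal.ofReal |m ω| ∂μ :=
              lintegral_add_right' _ hm.abs.aemeasurable.ennreal_ofReal
          _ < ⊤ := ENNReal.add_lt_top.2 ⟨hfin.lt_top, hmfin.lt_top⟩
      refine (hcD.const_mul c⁻¹).congr (Filter.Eventually.of_forall fun ω => ?_)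
      simp only [mul_max_of_nonneg _ _ (inv_pos.2 hc).le, inv_mul_cancel_left₀ hc.ne', mul_zero, hD]
    have hlbh : ∀ᵐ ω ∂μ, ((1 * D ω - m ω : ℝ) : EReal) ≤ h (x ω) ω := by
      filter_upwards [hlb] with ω hω using hω _ 1 h1mem
    have hlbk : ∀ᵐ ω ∂μ, ((ε * D ω - m ω : ℝ) : EReal) ≤ h (x ω) ω - (D ω : EReal) := by
      filter_upwards [hk1] with ω hω
      simpa using hω (x ω) (1 + ε) hplus
    by_cases hfh : ∫⁻ ω, ePos (h (x ω) ω) ∂μ = ⊤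
    · have hfk : ∫⁻ ω, ePos (h (x ω) ω - (D ω : EReal)) ∂μ = ⊤ := by
        by_contra hfk
        obtain ⟨hDi, -⟩ := hmain _ ε hε hlbk hfk
        have hDfin : ∫⁻ ω, ENNReal.ofReal |D ω| ∂μ ≠ ⊤ := hDi.abs.lintegral_lt_top.ne
        have hle' : ∫⁻ ω, ePos (h (x ω) ω) ∂μ ≤
            ∫⁻ ω, ePos (h (x ω) ω - (D ω : EReal)) ∂μ + ∫⁻ ω, ENNReal.ofReal |D ω| ∂μ := by
          rw [← lintegral_add_right' _ hDi.abs.aemeasurable.ennreal_ofReal]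
          refine lintegral_mono fun ω => ?_
          have := ePos_add_coe_le (h (x ω) ω - (D ω : EReal)) (D ω)
          rwa [EReal.sub_add_cancel] at this
        rw [hfh] at hle'
        exact ENNReal.add_ne_top.2 ⟨hfk, hDfin⟩ (top_le_iff.1 hle')
      rw [EInt, EInt, if_pos hfk, if_pos hfh]
    · obtain ⟨hDi, hD0⟩ := hmain _ 1 one_pos hlbh hfh
      exact EInt_sub_eq hξ hfh ((hDi.const_mul 1).sub hm) hlbh hDi hD0
  · obtain ⟨S, hS⟩ := hlin
    have hrec : ∀ (x : Ω → Strat T nn) (ω : Ω), sdot (x ω) (p ω) = 0 →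
        recessionFn (fun z => h z ω - ((sdot z (p ω) : ℝ) : EReal)) (x ω) =
          recessionFn (fun z => h z ω) (x ω) := fun x ω h0 =>
      recessionFn_sub_eq (fun z => sdot z (p ω)) (fun _ _ => sdot_add_left _ _ _)
        (fun _ _ => sdot_smul_left _ _ _) (fun z => hNI.2.2 z ω) h0
    have hnonpos : ∀ x : Ω → Strat T nn, (∀ᵐ ω ∂μ, recessionFn (fun z => h z ω) (x ω) ≤ 0) →
        ∀ᵐ ω ∂μ, sdot (x ω) (p ω) ≤ 0 := by
      intro x hx
      filter_upwards [hx, hlb] with ω h1 h2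
      exact nonpos_of_recessionFn_le (fun z => sdot z (p ω)) (fun _ _ => sdot_add_left _ _ _)
        (fun _ _ => sdot_smul_left _ _ _) (m ω) (fun z => by simpa using h2 z 1 h1mem) h1
    ext x
    constructor
    · intro hx
      -- Both `x` and `-x` are recession directions, hence `x · p = 0`.
      have hnx : -x ∈ (S : Set (Ω → Strat T nn)) := by
        rw [hS] at hx
        exact S.neg_mem hx
      rw [← hS] at hnx
      refine ⟨hx.1, ?_⟩
      filter_upwards [hx.2, hnonpos x hx.2, hnonpos (-x) hnx.2] with ω h1 h2 h3
      have h4 : sdot ((-x) ω) (p ω) = -sdot (x ω) (p ω) := by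
        rw [Pi.neg_apply, ← neg_one_smul ℝ, sdot_smul_left]; ring
      rw [hrec x ω (by linarith)]
      exact h1
    · rintro ⟨hxa, hx⟩
      refine ⟨hxa, ?_⟩
      filter_upwards [hx, hk1] with ω h1 h2
      -- The choices `l = 1 ± ε` bound `± ε (x · p)` by the recession function of `k`.
      have hb : ∀ l ∈ Set.Icc (1 - ε) (1 + ε), (l - 1) * sdot (x ω) (p ω) ≤ 0 := fun l hl =>
        nonpos_of_recessionFn_le (fun z => (l - 1) * sdot z (p ω))
          (fun _ _ => by rw [sdot_add_left, mul_add])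
          (fun _ _ => by rw [sdot_smul_left]; ring) (m ω) (fun z => h2 z l hl) h1
      have hb1 := hb _ hplus
      have hb2 := hb _ hminus
      have h0 : sdot (x ω) (p ω) = 0 := by
        have h3 : ε * sdot (x ω) (p ω) = 0 := by linarith
        exact (mul_eq_zero.1 h3).resolve_left hε.ne'
      rw [← hrec x ω h0]
      exact h1


end PaperDP
end
end

section
/- Consider the hedging problem (ALM): minimize E[ V( c − Σ_{t=0}^{T−1} x_t·Δs_{t+1} , · ) ] over adapted processes x = (x_t)_{t=0}^{T−1} subject to x_t ∈ D_t a.s. for all t. Assume: (1) there exist a random variable y and ε > 0 such that for all t and all λ ∈ [1−ε,1+ε], the random variables c·y, y·Δs_{t+1} (each component), σ_{D_t}(E_t[yΔs_{t+1}]) and V*(λy,·) are integrable; and (2) the set L := { x adapted : Σ_{t=0}^{T−1} x_t·Δs_{t+1} ≥ 0 a.s. and x_t ∈ D_t^∞ a.s. for all t } is a linear space. Then (ALM) admits an optimal solution. -/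
/-!
The minimum is attained by a compactness argument for strategies modulo the linear space `L` of
lossless strategies, that is, strategies in the recession directions with nonnegative terminal
value.

Write `Z(x) = ∑ x_t · Δs_{t+1}`, let `η_t = y Δs_{t+1} - E_t[y Δs_{t+1}]`, and put
`M(x) = ∑ x_t · η_t`. This is a martingale transform, so it is integrable with mean zero as soon as
its negative part is integrable (`integral_transform_eq_zero`). Fenchel's inequality at the
multiples `1 - ε`, `1`, `1 + ε` of `y`, together with the support functions of the constraints,
provides an integrable `m` with `V(c - Z(x)) + M(x) ≥ ε |y Z(x)| - m` for every feasible `x`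
(`exists_dualBound`). Hence for strategies of finite cost the integrand `V(c - Z(x)) + M(x)` is
bounded below by an integrable variable and has the same expectation as `V(c - Z(x))`.

Take a minimising sequence. By a forward convex combination argument of Komlós type
(`exists_convex_bdd`) the integrands may be assumed almost surely bounded along the sequence; the
dual bound then bounds the costs `V(c - Z(x))` themselves, and as `V` is unbounded above, the
terminal values `Z(x)` are bounded below (`DualBound.exists_cost_bdd`, `exists_strategy_bdd`).

Adding lossless strategies changes neither feasibility nor `Z`: since `L` is linear, lossless
strategies have terminal value zero. So each strategy may be replaced by one whose position at
every time `t` has, up to an error of one, the smallest norm among those obtained by adding lossless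
strategies that start at `t` (`exists_shift`). Such a sequence is almost surely bounded
(`NearMinSeq.bddAbove`): at the first time of unboundedness, a normalised sequence converges after
convex combinations to a lossless strategy pointing in nearly the same direction as arbitrarily
large positions, and subtracting a multiple of it would make them much smaller. Near-minimality
replaces the orthogonal projection onto the directions of `L`, and so no measurable description of
these directions is needed.

Finally, convex combinations of the bounded sequence converge almost surely
(`exists_convex_tendsto`), and Fatou's lemma with the integrable lower bound `-m` shows that the
limit is optimal (`DualBound.costLE_of_tendsto`). A feasible strategy exists by measurable selection
from the constraint sets (`exists_ae_selection`).
-/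

open MeasureTheory ENNReal
open scoped RealInnerProductSpace

noncomputable section

namespace PaperDP

variable {Ω : Type*}

/-- The recession cone of a set `C`: directions `y` with `x + r y ∈ C` for all `x ∈ C`
and `r ≥ 0`. -/
def recCone {E : Type*} [AddCommGroup E] [Module ℝ E] (C : Set E) : Set E :=
  {y | ∀ x ∈ C, ∀ r : ℝ, 0 ≤ r → x + r • y ∈ C}

/-! ### Measurable selection from graphs with closed convex values -/

section Selection

open Set Filter Topology

/-- The initial constraints `x i ≤ n i`, `i < k`, eventually force membership in any open
neighbourhood of the compact box `{x | ∀ i, x i ≤ n i}` of the Baire space. -/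
lemma box_eventually_subset (n : ℕ → ℕ) {U : Set (ℕ → ℕ)} (hU : IsOpen U)
    (hKU : {x : ℕ → ℕ | ∀ i, x i ≤ n i} ⊆ U) :
    ∃ k, {x : ℕ → ℕ | ∀ i < k, x i ≤ n i} ⊆ U := by
  by_contra hcon
  push Not at hcon
  have hcon' : ∀ k, ∃ x : ℕ → ℕ, (∀ i < k, x i ≤ n i) ∧ x ∉ U := by
    intro k
    obtain ⟨x, hx, hxU⟩ := not_subset.1 (hcon k)
    exact ⟨x, hx, hxU⟩
  choose x hx hxU using hcon'
  have hcomp : IsCompact {x : ℕ → ℕ | ∀ i, x i ≤ n i} := by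
    have := isCompact_univ_pi (X := fun _ : ℕ => ℕ) (s := fun i => Iic (n i))
      (fun i => (finite_Iic (n i)).isCompact)
    convert this using 1
    ext x; simp [Pi.le_def]
  -- truncating `x k` moves it into the box without changing its first `k` coordinates
  obtain ⟨a, ha, φ, hφ, hlim⟩ := hcomp.tendsto_subseq (x := fun k i => min (x k i) (n i))
    (fun k i => min_le_right _ _)
  have hlim2 : Tendsto (fun j => x (φ j)) atTop (𝓝 a) := by
    rw [tendsto_pi_nhds] at hlim ⊢
    intro i
    refine (hlim i).congr' ?_
    filter_upwards [hφ.tendsto_atTop.eventually_gt_atTop i] with j hj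
    exact min_eq_left (hx _ i hj)
  obtain ⟨j, hj⟩ := (hlim2.eventually (hU.mem_nhds (hKU ha))).exists
  exact hxU _ hj

lemma nullMeasurableSet_range_baire {Y : Type*} [TopologicalSpace Y] [T2Space Y]
    [MeasurableSpace Y] [BorelSpace Y] (ν : Measure Y) [IsFiniteMeasure ν]
    {f : (ℕ → ℕ) → Y} (hf : Continuous f) : NullMeasurableSet (range f) ν := by
  have key : ∀ ε : ℝ≥0∞, ε ≠ 0 → ∃ K : Set Y, MeasurableSet K ∧ K ⊆ range f ∧
      ν (range f) ≤ ν K + ε := by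
    intro ε hε
    obtain ⟨δ, hδ, hδsum⟩ := ENNReal.exists_pos_sum_of_countable' hε ℕ
    have hstep : ∀ (S : Set (ℕ → ℕ)) (k : ℕ), ∃ n : ℕ,
        ν (f '' S) ≤ ν (f '' (S ∩ {x | x k ≤ n})) + δ k := by
      intro S k
      have hU : f '' S = ⋃ n : ℕ, f '' (S ∩ {x | x k ≤ n}) := by
        rw [← image_iUnion, ← inter_iUnion]
        congr 1
        refine (inter_eq_left.2 fun x _ => ?_).symm
        exact mem_iUnion.2 ⟨x k, le_refl (x k)⟩
      have hmono : Monotone fun n : ℕ => f '' (S ∩ {x | x k ≤ n}) := fun a b hab =>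
        image_mono (inter_subset_inter_right _ fun x hx => le_trans hx hab)
      have hsup := hmono.measure_iUnion (μ := ν)
      rw [← hU] at hsup
      by_contra hcon
      push Not at hcon
      have hle : ν (f '' S) + δ k ≤ ν (f '' S) := by
        conv_rhs => rw [hsup]
        rw [hsup, ENNReal.iSup_add]
        refine iSup_le fun n => ?_
        rw [← hsup]
        exact (hcon n).le
      exact absurd hle (not_le.2 (ENNReal.lt_add_right (measure_ne_top _ _) (hδ k).ne'))
    choose N hN using hstep
    let S : ℕ → Set (ℕ → ℕ) := fun k => Nat.rec univ (fun k S => S ∩ {x | x k ≤ N S k}) k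
    have hSs : ∀ k, S (k + 1) = S k ∩ {x | x k ≤ N (S k) k} := fun k => rfl
    let n : ℕ → ℕ := fun k => N (S k) k
    have hS : ∀ k, S k = {x : ℕ → ℕ | ∀ i < k, x i ≤ n i} := by
      intro k
      induction k with
      | zero => ext x; simp [S]
      | succ k ih =>
        rw [hSs]
        ext x
        have : x ∈ S k ↔ ∀ i < k, x i ≤ n i := by rw [ih]; rfl
        simp only [mem_inter_iff, this, mem_ofPred_eq, Nat.lt_succ_iff_lt_or_eq]
        exact ⟨fun h i hi => hi.elim (h.1 i) (fun e => e ▸ h.2),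
          fun h => ⟨fun i hi => h i (Or.inl hi), h k (Or.inr rfl)⟩⟩
    let K : Set (ℕ → ℕ) := {x | ∀ i, x i ≤ n i}
    have hcomp : IsCompact K := by
      have := isCompact_univ_pi (X := fun _ : ℕ => ℕ) (s := fun i => Iic (n i))
        (fun i => (finite_Iic (n i)).isCompact)
      convert this using 1
      ext x; simp [Pi.le_def, K]
    have hfK : IsCompact (f '' K) := hcomp.image hf
    have hmeas : ∀ k, ν (range f) ≤ ν (f '' S k) + ∑ i ∈ Finset.range k, δ i := by
      intro k
      induction k with
      | zero => simp [S]
      | succ k ih =>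
        rw [Finset.sum_range_succ, add_comm _ (δ k), ← add_assoc]
        exact ih.trans (add_le_add_left (hN (S k) k) _)
    have hsub : (⋂ k, closure (f '' S k)) ⊆ f '' K := by
      intro y hy
      by_contra hyK
      obtain ⟨U, W, hU, hW, hKU, hyW, hUW⟩ :=
        (SeparatedNhds.of_isCompact_isCompact hfK isCompact_singleton
          (disjoint_singleton_right.2 hyK))
      obtain ⟨k, hk⟩ := box_eventually_subset n (hU.preimage hf)
        (fun x hx => hKU (mem_image_of_mem f hx))
      have hyk := mem_iInter.1 hy k
      obtain ⟨z, hzW, hz⟩ := mem_closure_iff.1 hyk W hW (hyW rfl)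
      obtain ⟨x, hx, rfl⟩ := hz
      rw [hS] at hx
      exact disjoint_left.1 hUW (hk hx) hzW
    have hanti : Antitone fun k => closure (f '' S k) := by
      refine antitone_nat_of_succ_le fun k => closure_mono (image_mono ?_)
      rw [hSs]; exact inter_subset_left
    have hlim := tendsto_measure_iInter_atTop (μ := ν) (s := fun k => closure (f '' S k))
      (fun k => isClosed_closure.measurableSet.nullMeasurableSet) hanti ⟨0, measure_ne_top _ _⟩
    refine ⟨f '' K, hfK.measurableSet, image_subset_range _ _, ?_⟩
    have h2 : ν (range f) ≤ ν (⋂ k, closure (f '' S k)) + ε := by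
      refine ge_of_tendsto' (hlim.add_const ε) fun k => ?_
      exact (hmeas k).trans (add_le_add (measure_mono subset_closure)
        ((ENNReal.sum_le_tsum _).trans hδsum.le))
    exact h2.trans (add_le_add_left (measure_mono hsub) _)
  have key' : ∀ j : ℕ, ∃ K : Set Y, MeasurableSet K ∧ K ⊆ range f ∧
      ν (range f) ≤ ν K + ((j : ℝ≥0∞) + 1)⁻¹ := fun j =>
    key _ (ENNReal.inv_ne_zero.2 (by finiteness))
  choose K hKm hKs hK using key'
  have hU : MeasurableSet (⋃ j, K j) := MeasurableSet.iUnion hKm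
  have hle : ν (range f) ≤ ν (⋃ j, K j) := by
    have hl : Tendsto (fun j : ℕ => ν (⋃ j, K j) + ((j : ℝ≥0∞) + 1)⁻¹) atTop
        (𝓝 (ν (⋃ j, K j) + 0)) := by
      refine tendsto_const_nhds.add ?_
      have := (tendsto_add_atTop_iff_nat 1).2 ENNReal.tendsto_inv_nat_nhds_zero
      simpa using this
    rw [add_zero] at hl
    exact ge_of_tendsto' hl fun j =>
      (hK j).trans (add_le_add_left (measure_mono (subset_iUnion K j)) _)
  have := ae_eq_of_subset_of_measure_ge (iUnion_subset hKs) hle hU.nullMeasurableSet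
    (measure_ne_top _ _)
  exact hU.nullMeasurableSet.congr this

/-- A measurable subset of a product depends on the second variable only through a measurable
map to the Cantor space. -/
lemma exists_cantor_factor {E Ω : Type*} [MeasurableSpace E] [MeasurableSpace Ω]
    {G : Set (E × Ω)} (hG : MeasurableSet G) :
    ∃ φ : Ω → (ℕ → Bool), Measurable φ ∧ ∃ G' : Set (E × (ℕ → Bool)), MeasurableSet G' ∧
      G = {q | (q.1, φ q.2) ∈ G'} := by
  let P : Set (E × Ω) → Prop := fun G =>
    ∃ φ : Ω → (ℕ → Bool), Measurable φ ∧ ∃ G' : Set (E × (ℕ → Bool)), MeasurableSet G' ∧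
      G = {q | (q.1, φ q.2) ∈ G'}
  let M : MeasurableSpace (E × Ω) :=
    { MeasurableSet' := P
      measurableSet_empty := ⟨fun _ _ => true, measurable_const, ∅, MeasurableSet.empty, by simp⟩
      measurableSet_compl := by
        rintro _ ⟨φ, hφ, G', hG', rfl⟩
        exact ⟨φ, hφ, G'ᶜ, hG'.compl, rfl⟩
      measurableSet_iUnion := by
        intro g hg
        choose φ hφ G' hG' hgG using hg
        refine ⟨fun ω k => φ k.unpair.1 ω k.unpair.2, ?_,
          ⋃ n, (fun q : E × (ℕ → Bool) => (q.1, fun j => q.2 (Nat.pair n j))) ⁻¹' G' n, ?_, ?_⟩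
        · exact measurable_pi_iff.2 fun k => (measurable_pi_iff.1 (hφ _)) _
        · refine MeasurableSet.iUnion fun n => ?_
          refine Measurable.prodMk measurable_fst ?_ (hG' n)
          exact measurable_pi_iff.2 fun j => (measurable_pi_apply _).comp measurable_snd
        · ext q
          simp only [mem_iUnion, mem_preimage, mem_ofPred_eq, Nat.unpair_pair]
          exact exists_congr fun n => by rw [hgG n]; rfl }
  have hle : (Prod.instMeasurableSpace : MeasurableSpace (E × Ω)) ≤ M := by
    refine sup_le (α := MeasurableSpace (E × Ω)) ?_ ?_
    · rintro _ ⟨s, hs, rfl⟩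
      exact ⟨fun _ _ => true, measurable_const, Prod.fst ⁻¹' s, measurable_fst hs, rfl⟩
    · classical
      rintro _ ⟨s, hs, rfl⟩
      refine ⟨fun ω _ => decide (ω ∈ s), ?_, {q | q.2 0 = true}, ?_, ?_⟩
      · refine measurable_pi_iff.2 fun _ => measurable_to_bool ?_
        simpa [preimage] using hs
      · exact measurableSet_eq_fun ((measurable_pi_apply 0).comp measurable_snd) measurable_const
      · ext q; simp
  exact hle _ hG

/-- Measurable projection: the projection of a measurable set along a Polish factor is null
measurable. -/
lemma nullMeasurableSet_proj {E Ω : Type*} [TopologicalSpace E] [PolishSpace E]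
    [MeasurableSpace E] [BorelSpace E] [MeasurableSpace Ω] (μ : Measure Ω) [IsFiniteMeasure μ]
    {G : Set (E × Ω)} (hG : MeasurableSet G) :
    NullMeasurableSet {ω | ∃ e, (e, ω) ∈ G} μ := by
  obtain ⟨φ, hφ, G', hG', rfl⟩ := exists_cantor_factor hG
  have hBool : SecondCountableTopology Bool := inferInstance
  have hCantor : SecondCountableTopology (ℕ → Bool) := inferInstance
  have hPol : PolishSpace (E × (ℕ → Bool)) := inferInstance
  have han : AnalyticSet (Prod.snd '' G') := hG'.analyticSet.image_of_continuous continuous_snd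
  have hn : NullMeasurableSet (Prod.snd '' G') (μ.map φ) := by
    rw [AnalyticSet] at han
    rcases han with h | ⟨f, hf, h⟩
    · rw [h]; exact nullMeasurableSet_empty
    · rw [← h]; exact nullMeasurableSet_range_baire _ hf
  have := hn.preimage (f := φ) ⟨hφ, Measure.AbsolutelyContinuous.rfl⟩
  convert this using 1
  ext ω
  simp

/-- A measurable random index `κ` with `ω ∈ A (κ ω)` whenever `ω` lies in some `A k`. -/
lemma exists_measurable_index {Ω : Type*} [MeasurableSpace Ω] (A : ℕ → Set Ω)
    (hA : ∀ k, MeasurableSet (A k)) :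
    ∃ κ : Ω → ℕ, Measurable κ ∧ ∀ ω, (∃ k, ω ∈ A k) → ω ∈ A (κ ω) := by
  classical
  have hp : ∀ ω, ∃ k, ω ∈ A k ∪ (⋃ j, A j)ᶜ := fun ω => by
    by_cases h : ∃ k, ω ∈ A k
    · exact h.imp fun k hk => Or.inl hk
    · exact ⟨0, Or.inr (by simpa using h)⟩
  refine ⟨fun ω => Nat.find (hp ω), measurable_find hp
    fun k => (hA k).union (MeasurableSet.iUnion hA).compl, fun ω h => ?_⟩
  refine (Nat.find_spec (hp ω)).resolve_right fun h' => ?_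
  exact h' (mem_iUnion.2 h)

/-- Near-minimisers of the norm over a closed convex set, taken within distance `δ n → 0` of the
set, converge to a point of the set (parallelogram identity). -/
lemma tendsto_of_near_min_norm {E : Type*} [NormedAddCommGroup E] [InnerProductSpace ℝ E]
    [CompleteSpace E] {K : Set E} (hne : K.Nonempty) (hcl : IsClosed K) (hcv : Convex ℝ K)
    {q : ℕ → E} {δ : ℕ → ℝ} (hδ : Tendsto δ atTop (𝓝 0))
    (h1 : ∀ n, Metric.infDist (q n) K < δ n)
    (h2 : ∀ n, ‖q n‖ < Metric.infDist 0 K + δ n) :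
    ∃ p ∈ K, Tendsto q atTop (𝓝 p) := by
  obtain ⟨p, hp, hpmin⟩ := exists_norm_eq_iInf_of_complete_convex hne hcl.isComplete hcv 0
  have hpd : Metric.infDist 0 K = ‖p‖ := by
    rw [Metric.infDist_eq_iInf, ← norm_neg p, ← zero_sub, hpmin]
    simp [dist_eq_norm]
  rw [hpd] at h2
  have hex : ∀ n, ∃ e ∈ K, dist (q n) e < δ n := fun n =>
    (Metric.infDist_lt_iff hne).1 (h1 n)
  choose e he hed using hex
  have hmin : ∀ x ∈ K, ‖p‖ ≤ ‖x‖ := fun x hx => by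
    rw [← hpd]; simpa using Metric.infDist_le_dist_of_mem (x := (0 : E)) hx
  have hen : ∀ n, ‖e n‖ ≤ ‖p‖ + 2 * δ n := fun n => by
    have h3 : ‖e n‖ ≤ ‖q n‖ + dist (q n) (e n) := by
      rw [dist_eq_norm]
      calc ‖e n‖ = ‖q n - (q n - e n)‖ := by congr 1; abel
        _ ≤ _ := norm_sub_le _ _
    linarith [h2 n, hed n]
  have hsq : ∀ n, ‖e n - p‖ ^ 2 ≤ 2 * (‖p‖ + 2 * δ n) ^ 2 - 2 * ‖p‖ ^ 2 := fun n => by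
    have hpar := parallelogram_law_with_norm ℝ (e n) p
    have hmid : ‖p‖ ≤ ‖(1 / 2 : ℝ) • e n + (1 / 2 : ℝ) • p‖ :=
      hmin _ (hcv (he n) hp (by norm_num) (by norm_num) (by norm_num))
    rw [← smul_add, norm_smul, Real.norm_of_nonneg (by norm_num)] at hmid
    have ha : ‖e n‖ ^ 2 ≤ (‖p‖ + 2 * δ n) ^ 2 := pow_le_pow_left₀ (norm_nonneg _) (hen n) 2
    nlinarith [norm_nonneg p, norm_nonneg (e n + p)]
  have hlim0 : Tendsto (fun n => 2 * (‖p‖ + 2 * δ n) ^ 2 - 2 * ‖p‖ ^ 2) atTop (𝓝 0) := by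
    have : Tendsto (fun n => 2 * (‖p‖ + 2 * δ n) ^ 2 - 2 * ‖p‖ ^ 2) atTop
        (𝓝 (2 * (‖p‖ + 2 * 0) ^ 2 - 2 * ‖p‖ ^ 2)) :=
      (((hδ.const_mul 2).const_add _).pow 2 |>.const_mul 2).sub_const _
    simpa using this
  have hsq0 : Tendsto (fun n => ‖e n - p‖ ^ 2) atTop (𝓝 0) :=
    squeeze_zero (fun n => sq_nonneg _) hsq hlim0
  have hnorm : Tendsto (fun n => ‖e n - p‖) atTop (𝓝 0) := by
    have := (Real.continuous_sqrt.tendsto 0).comp hsq0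
    simpa [Function.comp_def, Real.sqrt_sq (norm_nonneg _)] using this
  refine ⟨p, hp, tendsto_iff_norm_sub_tendsto_zero.2 ?_⟩
  refine squeeze_zero (fun n => norm_nonneg _) (fun n => ?_) (by simpa using hnorm.add hδ)
  calc ‖q n - p‖ = ‖(e n - p) + (q n - e n)‖ := by congr 1; abel
    _ ≤ ‖e n - p‖ + ‖q n - e n‖ := norm_add_le _ _
    _ ≤ _ := by rw [← dist_eq_norm (q n)]; linarith [hed n]

/-- A random nonempty closed convex set with measurable graph has an almost sure measurable
selection: the minimal-norm point, computed from the distance functions. -/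
lemma exists_ae_selection {E Ω : Type*} [NormedAddCommGroup E] [InnerProductSpace ℝ E]
    [FiniteDimensional ℝ E] [MeasurableSpace E] [BorelSpace E] [MeasurableSpace Ω]
    (μ : Measure Ω) [IsFiniteMeasure μ] (D : Ω → Set E)
    (hD : MeasurableSet {q : E × Ω | q.1 ∈ D q.2}) (hne : ∀ ω, (D ω).Nonempty)
    (hcl : ∀ ω, IsClosed (D ω)) (hcv : ∀ ω, Convex ℝ (D ω)) :
    ∃ f : Ω → E, Measurable f ∧ ∀ᵐ ω ∂μ, f ω ∈ D ω := by
  have hdist : ∀ q : E, AEMeasurable (fun ω => Metric.infDist q (D ω)) μ := by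
    intro q
    refine NullMeasurable.aemeasurable ?_
    have hIio : ∀ r : ℝ, NullMeasurableSet {ω | Metric.infDist q (D ω) < r} μ := by
      intro r
      have := nullMeasurableSet_proj μ
        (hD.inter (measurable_fst (Metric.isOpen_ball (x := q) (ε := r)).measurableSet))
      convert this using 1
      ext ω
      simp only [mem_ofPred_eq, Metric.infDist_lt_iff (hne ω), mem_inter_iff, mem_preimage,
        Metric.mem_ball, dist_comm q]
    have hm : @Measurable (NullMeasurableSpace Ω μ) ℝ _ _
        (fun ω => Metric.infDist q (D ω)) :=
      @measurable_of_Iio ℝ (NullMeasurableSpace Ω μ) _ _ _ _ _ _ _ _ (fun r => hIio r)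
    exact fun s hs => hm hs
  let u : ℕ → E := TopologicalSpace.denseSeq E
  have hu : DenseRange u := TopologicalSpace.denseRange_denseSeq E
  let d : E → Ω → ℝ := fun q => (hdist q).mk
  have hd : ∀ q, Measurable (d q) := fun q => (hdist q).measurable_mk
  let A : ℕ → ℕ → Set Ω := fun n k =>
    {ω | d (u k) ω < ((n : ℝ) + 1)⁻¹ ∧ ‖u k‖ < d 0 ω + ((n : ℝ) + 1)⁻¹}
  have hA : ∀ n k, MeasurableSet (A n k) := fun n k =>
    (measurableSet_lt (hd _) measurable_const).inter
      (measurableSet_lt measurable_const ((hd 0).add_const _))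
  choose κ hκ hκA using fun n => exists_measurable_index (A n) (hA n)
  let Q : ℕ → Ω → E := fun n ω => u (κ n ω)
  have hQ : ∀ n, Measurable (Q n) := fun n => measurable_from_nat.comp (hκ n)
  have hlim : ∀ᵐ ω ∂μ, ∃ p ∈ D ω, Tendsto (fun n => Q n ω) atTop (𝓝 p) := by
    have hall : ∀ᵐ ω ∂μ, ∀ k, Metric.infDist (u k) (D ω) = d (u k) ω :=
      ae_all_iff.2 fun k => (hdist (u k)).ae_eq_mk
    filter_upwards [hall, (hdist 0).ae_eq_mk] with ω h1 h0
    have hex : ∀ n, ∃ k, ω ∈ A n k := by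
      intro n
      have hpos : (0 : ℝ) < ((n : ℝ) + 1)⁻¹ := by positivity
      obtain ⟨e, he, hed⟩ := (Metric.infDist_lt_iff (x := (0 : E)) (hne ω)).1
        (lt_add_of_pos_right (Metric.infDist 0 (D ω)) hpos)
      rw [dist_zero_left] at hed
      have hopen : IsOpen ({x : E | dist x e < ((n : ℝ) + 1)⁻¹} ∩
          {x | ‖x‖ < Metric.infDist 0 (D ω) + ((n : ℝ) + 1)⁻¹}) :=
        (isOpen_lt (by fun_prop) (by fun_prop)).inter (isOpen_lt (by fun_prop) (by fun_prop))
      obtain ⟨k, hk1, hk2⟩ := hu.exists_mem_open hopen ⟨e, by simpa using hpos, hed⟩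
      refine ⟨k, ?_, ?_⟩
      · rw [← h1 k]; exact (Metric.infDist_le_dist_of_mem he).trans_lt hk1
      · show _ < (hdist 0).mk _ ω + _
        rw [← h0]; exact hk2
    have hmem : ∀ n, ω ∈ A n (κ n ω) := fun n => hκA n ω (hex n)
    refine tendsto_of_near_min_norm (hne ω) (hcl ω) (hcv ω)
      (δ := fun n : ℕ => ((n : ℝ) + 1)⁻¹) ?_ (fun n => ?_) (fun n => ?_)
    · simpa [one_div] using tendsto_one_div_add_atTop_nhds_zero_nat (𝕜 := ℝ)
    · have := (hmem n).1
      rw [← h1] at this; exact this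
    · rw [h0]; exact (hmem n).2
  obtain ⟨f, hf, hfl⟩ := measurable_limit_of_tendsto_metrizable_ae
    (fun n => (hQ n).aemeasurable) (hlim.mono fun ω h => h.imp fun p hp => hp.2)
  refine ⟨f, hf, ?_⟩
  filter_upwards [hlim, hfl] with ω ⟨p, hp, hpl⟩ h2
  rwa [tendsto_nhds_unique h2 hpl]

end Selection

/-! ### Forward convex combinations -/

section ForwardConvex

open Set Filter Topology

/-- Let `F` be a bounded functional on a convex set whose midpoint convexity defect controls the
`L²`-distance of the images under `q`. Then near-minimisers of `∫ F` over the tails of the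
convex hull of a sequence have almost surely convergent images. -/
lemma exists_ae_cauchySeq {X Ω H : Type*} [AddCommGroup X] [Module ℝ X] [MeasurableSpace Ω]
    (μ : Measure Ω) [NormedAddCommGroup H] (p : ℕ → X) (S : Set X) (hS : Convex ℝ S)
    (hp : ∀ k, p k ∈ S) (F : X → Ω → ℝ) (hF : ∀ x ∈ S, Integrable (F x) μ)
    (hF0 : ∀ x ∈ S, 0 ≤ᵐ[μ] F x) (B : ℝ) (hB : ∀ x ∈ S, ∫ ω, F x ω ∂μ ≤ B)
    (q : X → Ω → H) (hq : ∀ x ∈ S, AEStronglyMeasurable (q x) μ)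
    (hd : ∀ a ∈ S, ∀ b ∈ S, ∀ᵐ ω ∂μ, ‖q b ω - q a ω‖ ^ 2 ≤
      4 * ((F a ω + F b ω) / 2 - F ((1 / 2 : ℝ) • a + (1 / 2 : ℝ) • b) ω)) :
    ∃ u : ℕ → X, (∀ n, u n ∈ convexHull ℝ (p '' Ici n)) ∧
      ∀ᵐ ω ∂μ, CauchySeq fun n => q (u n) ω := by
  let C : ℕ → Set X := fun n => convexHull ℝ (p '' Ici n)
  have hCS : ∀ n, C n ⊆ S := fun n =>
    convexHull_min (by rintro _ ⟨k, -, rfl⟩; exact hp k) hS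
  have hCanti : Antitone C := fun m n h => convexHull_mono (image_mono (Ici_subset_Ici.2 h))
  have hpC : ∀ n, p n ∈ C n := fun n => subset_convexHull _ _ ⟨n, le_refl n, rfl⟩
  let Φ : X → ℝ := fun x => ∫ ω, F x ω ∂μ
  have hΦ0 : ∀ x ∈ S, 0 ≤ Φ x := fun x hx => integral_nonneg_of_ae (hF0 x hx)
  let I : ℕ → ℝ := fun n => sInf (Φ '' C n)
  have hbdd : ∀ n, BddBelow (Φ '' C n) := fun n =>
    ⟨0, by rintro _ ⟨x, hx, rfl⟩; exact hΦ0 x (hCS n hx)⟩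
  have hne : ∀ n, (Φ '' C n).Nonempty := fun n => ⟨_, p n, hpC n, rfl⟩
  have hIle : ∀ n, ∀ x ∈ C n, I n ≤ Φ x := fun n x hx => csInf_le (hbdd n) ⟨x, hx, rfl⟩
  have hImono : Monotone I := fun m n h =>
    csInf_le_csInf (hbdd m) (hne n) (image_mono (hCanti h))
  have hIB : BddAbove (range I) := ⟨B, by
    rintro _ ⟨n, rfl⟩
    exact (hIle n _ (hpC n)).trans (hB _ (hp n))⟩
  let L : ℝ := ⨆ n, I n
  have hIL : ∀ n, I n ≤ L := fun n => le_ciSup hIB n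
  let δ : ℕ → ℝ := fun n => (1 / 16 : ℝ) ^ n
  have hδ : ∀ n, 0 < δ n := fun n => by positivity
  have hN0 : ∀ n, ∃ N, L - δ n < I N := fun n =>
    exists_lt_of_lt_ciSup (sub_lt_self L (hδ n))
  choose N0 hN0 using hN0
  let N : ℕ → ℕ := fun n => n + ∑ i ∈ Finset.range (n + 1), N0 i
  have hNmono : Monotone N := fun m n h => add_le_add h
    (Finset.sum_le_sum_of_subset (Finset.range_mono (by omega)))
  have hN : ∀ n, L - δ n < I (N n) := fun n => (hN0 n).trans_le (hImono (by
    have : N0 n ≤ ∑ i ∈ Finset.range (n + 1), N0 i :=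
      Finset.single_le_sum (f := N0) (fun i _ => Nat.zero_le _) (Finset.self_mem_range_succ n)
    show N0 n ≤ n + _
    omega))
  have hu : ∀ n, ∃ x ∈ C (N n), Φ x < L + δ n := by
    intro n
    obtain ⟨_, ⟨x, hx, rfl⟩, hlt⟩ := exists_lt_of_csInf_lt (hne (N n))
      (lt_of_le_of_lt (hIL (N n)) (lt_add_of_pos_right L (hδ n)))
    exact ⟨x, hx, hlt⟩
  choose u huC huΦ using hu
  refine ⟨u, fun n => hCanti (show n ≤ N n from Nat.le_add_right _ _) (huC n), ?_⟩
  have hint : ∀ n, ∫⁻ ω, ENNReal.ofReal (4 ^ n) * ‖q (u (n + 1)) ω - q (u n) ω‖ₑ ^ 2 ∂μ ≤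
      ENNReal.ofReal (8 * (1 / 4) ^ n) := by
    intro n
    have ha := huC n
    have hb : u (n + 1) ∈ C (N n) := hCanti (hNmono (Nat.le_succ n)) (huC (n + 1))
    have haS := hCS _ ha
    have hbS := hCS _ hb
    have hm : (1 / 2 : ℝ) • u n + (1 / 2 : ℝ) • u (n + 1) ∈ C (N n) :=
      convex_convexHull ℝ _ ha hb (by norm_num) (by norm_num) (by norm_num)
    have hmS := hCS _ hm
    have hg : Integrable (fun ω => 4 * ((F (u n) ω + F (u (n + 1)) ω) / 2 -
        F ((1 / 2 : ℝ) • u n + (1 / 2 : ℝ) • u (n + 1)) ω)) μ :=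
      ((((hF _ haS).add (hF _ hbS)).div_const 2).sub (hF _ hmS)).const_mul 4
    rw [lintegral_const_mul' _ _ ENNReal.ofReal_ne_top]
    have h1 : ∫⁻ ω, ‖q (u (n + 1)) ω - q (u n) ω‖ₑ ^ 2 ∂μ ≤ ENNReal.ofReal
        (∫ ω, 4 * ((F (u n) ω + F (u (n + 1)) ω) / 2 -
          F ((1 / 2 : ℝ) • u n + (1 / 2 : ℝ) • u (n + 1)) ω) ∂μ) := by
      rw [ofReal_integral_eq_lintegral_ofReal hg
        ((hd _ haS _ hbS).mono fun ω h => (sq_nonneg _).trans h)]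
      refine lintegral_mono_ae ((hd _ haS _ hbS).mono fun ω h => ?_)
      rw [← ofReal_norm, ← ENNReal.ofReal_pow (norm_nonneg _)]
      exact ENNReal.ofReal_le_ofReal h
    have h2 : ∫ ω, 4 * ((F (u n) ω + F (u (n + 1)) ω) / 2 -
          F ((1 / 2 : ℝ) • u n + (1 / 2 : ℝ) • u (n + 1)) ω) ∂μ ≤ 8 * δ n := by
      have hab : Integrable (fun ω => F (u n) ω + F (u (n + 1)) ω) μ := (hF _ haS).add (hF _ hbS)
      rw [integral_const_mul, integral_sub (hab.div_const 2) (hF _ hmS),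
        integral_div, integral_add (hF _ haS) (hF _ hbS)]
      have e1 := huΦ n
      have e2 := huΦ (n + 1)
      have e3 := (hN n).trans_le (hIle _ _ hm)
      have e4 : δ (n + 1) ≤ δ n := pow_le_pow_of_le_one (by norm_num) (by norm_num) n.le_succ
      simp only [Φ] at e1 e2 e3
      linarith
    calc _ ≤ ENNReal.ofReal (4 ^ n) * ENNReal.ofReal (8 * δ n) := by
          gcongr; exact h1.trans (ENNReal.ofReal_le_ofReal h2)
      _ = _ := by
          rw [← ENNReal.ofReal_mul (by positivity)]
          congr 1
          have : (4 : ℝ) ^ n * (1 / 16) ^ n = (1 / 4) ^ n := by rw [← mul_pow]; norm_num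
          calc (4 : ℝ) ^ n * (8 * (1 / 16) ^ n) = 8 * (4 ^ n * (1 / 16) ^ n) := by ring
            _ = _ := by rw [this]
  have hmeas : ∀ n, AEMeasurable
      (fun ω => ENNReal.ofReal (4 ^ n) * ‖q (u (n + 1)) ω - q (u n) ω‖ₑ ^ 2) μ := fun n =>
    (((hq _ (hCS _ (huC _))).sub (hq _ (hCS _ (huC _)))).enorm.pow_const 2).const_mul _
  have hsum : ∫⁻ ω, ∑' n, ENNReal.ofReal (4 ^ n) * ‖q (u (n + 1)) ω - q (u n) ω‖ₑ ^ 2 ∂μ ≠ ⊤ := by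
    rw [lintegral_tsum hmeas]
    refine ne_top_of_le_ne_top ?_ (ENNReal.tsum_le_tsum hint)
    have hs : Summable fun n : ℕ => 8 * (1 / 4 : ℝ) ^ n :=
      (summable_geometric_of_lt_one (by norm_num) (by norm_num)).mul_left 8
    exact hs.tsum_ofReal_ne_top
  filter_upwards [ae_lt_top' (AEMeasurable.tsum hmeas) hsum] with ω hω
  set s := ∑' n, ENNReal.ofReal (4 ^ n) * ‖q (u (n + 1)) ω - q (u n) ω‖ₑ ^ 2 with hs
  refine cauchySeq_of_le_geometric (1 / 2) (Real.sqrt s.toReal) (by norm_num) fun n => ?_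
  have hn : ENNReal.ofReal (4 ^ n) * ‖q (u (n + 1)) ω - q (u n) ω‖ₑ ^ 2 ≤ s :=
    ENNReal.le_tsum n
  rw [← ofReal_norm, ← ENNReal.ofReal_pow (norm_nonneg _),
    ← ENNReal.ofReal_mul (by positivity)] at hn
  have hn' := (ENNReal.ofReal_le_iff_le_toReal hω.ne).1 hn
  have h4 : (4 : ℝ) ^ n = (2 ^ n) ^ 2 := by rw [← pow_mul, mul_comm, pow_mul]; norm_num
  rw [h4, ← mul_pow] at hn'
  have hle := Real.le_sqrt_of_sq_le hn'
  rw [dist_comm, dist_eq_norm, one_div, inv_pow, ← div_eq_mul_inv, le_div_iff₀ (by positivity)]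
  linarith

/-- Forward convex combinations of an `L¹`-bounded sequence of nonnegative functions (carried
along by a sequence in a vector space) can be chosen almost surely bounded. -/
lemma exists_convex_bdd {X Ω : Type*} [AddCommGroup X] [Module ℝ X] [MeasurableSpace Ω]
    (μ : Measure Ω) [IsProbabilityMeasure μ] (a : ℕ → X) (ψ : ℕ → Ω → ℝ)
    (hψ : ∀ k, Integrable (ψ k) μ) (hψ0 : ∀ k, 0 ≤ᵐ[μ] ψ k) (B : ℝ)
    (hB : ∀ k, ∫ ω, ψ k ω ∂μ ≤ B) :
    ∃ u : ℕ → X × (Ω → ℝ), (∀ n, u n ∈ convexHull ℝ ((fun k => (a k, ψ k)) '' Ici n)) ∧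
      ∀ᵐ ω ∂μ, BddAbove (range fun n => (u n).2 ω) := by
  let S : Set (X × (Ω → ℝ)) := {x | Integrable x.2 μ ∧ 0 ≤ᵐ[μ] x.2 ∧ ∫ ω, x.2 ω ∂μ ≤ B}
  have hS : Convex ℝ S := by
    rintro x ⟨hx1, hx2, hx3⟩ z ⟨hz1, hz2, hz3⟩ α β hα hβ hαβ
    refine ⟨(hx1.smul α).add (hz1.smul β), ?_, ?_⟩
    · filter_upwards [hx2, hz2] with ω h1 h2
      simp only [Prod.snd_add, Prod.smul_snd, Pi.add_apply, Pi.smul_apply, smul_eq_mul,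
        Pi.zero_apply] at *
      positivity
    · have : ∫ ω, (α • x + β • z).2 ω ∂μ = α * ∫ ω, x.2 ω ∂μ + β * ∫ ω, z.2 ω ∂μ := by
        rw [← integral_const_mul, ← integral_const_mul,
          ← integral_add (hx1.const_mul α) (hz1.const_mul β)]
        rfl
      rw [this]
      calc _ ≤ α * B + β * B := by gcongr
        _ = B := by rw [← add_mul, hαβ, one_mul]
  have hp : ∀ k, (a k, ψ k) ∈ S := fun k => ⟨hψ k, hψ0 k, hB k⟩
  have hexp : ∀ x ∈ S, Integrable (fun ω => Real.exp (-x.2 ω)) μ := by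
    rintro x ⟨hx1, hx2, -⟩
    refine Integrable.of_bound (Real.continuous_exp.comp_aestronglyMeasurable
      hx1.aestronglyMeasurable.neg) 1 ?_
    filter_upwards [hx2] with ω h
    rw [Real.norm_of_nonneg (Real.exp_pos _).le]
    exact Real.exp_le_one_iff.2 (neg_nonpos.2 h)
  obtain ⟨u, huC, huq⟩ := exists_ae_cauchySeq μ (fun k => (a k, ψ k)) S hS hp
    (fun x ω => Real.exp (-x.2 ω)) hexp
    (fun x hx => Eventually.of_forall fun ω => (Real.exp_pos _).le) 1 (by
      rintro x ⟨hx1, hx2, hx3⟩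
      calc ∫ ω, Real.exp (-x.2 ω) ∂μ ≤ ∫ ω, (1 : ℝ) ∂μ := by
            refine integral_mono_ae (hexp x ⟨hx1, hx2, hx3⟩) (integrable_const _) ?_
            filter_upwards [hx2] with ω h
            exact Real.exp_le_one_iff.2 (neg_nonpos.2 h)
        _ = 1 := by simp)
    (fun x ω => Real.exp (-x.2 ω / 2)) (by
      rintro x ⟨hx1, -, -⟩
      have := (hx1.neg.div_const 2).aestronglyMeasurable
      exact Real.continuous_exp.comp_aestronglyMeasurable this) (by
      intro x hx z hz
      refine Eventually.of_forall fun ω => ?_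
      have e1 : Real.exp (-x.2 ω) = Real.exp (-x.2 ω / 2) ^ 2 := by
        rw [← Real.exp_nat_mul]; congr 1; push_cast; ring
      have e2 : Real.exp (-z.2 ω) = Real.exp (-z.2 ω / 2) ^ 2 := by
        rw [← Real.exp_nat_mul]; congr 1; push_cast; ring
      have e3 : Real.exp (-((1 / 2 : ℝ) • x + (1 / 2 : ℝ) • z).2 ω) =
          Real.exp (-x.2 ω / 2) * Real.exp (-z.2 ω / 2) := by
        rw [← Real.exp_add]; congr 1
        simp only [Prod.snd_add, Prod.smul_snd, Pi.add_apply, Pi.smul_apply, smul_eq_mul]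
        ring
      simp only [e1, e2, e3, Real.norm_eq_abs, sq_abs]
      nlinarith [sq_nonneg (Real.exp (-x.2 ω / 2) - Real.exp (-z.2 ω / 2))])
  refine ⟨u, huC, ?_⟩
  have huS : ∀ n, u n ∈ S := fun n =>
    convexHull_min (by rintro _ ⟨k, -, rfl⟩; exact hp k) hS (huC n)
  have hfatou : ∫⁻ ω, liminf (fun n => ENNReal.ofReal ((u n).2 ω)) atTop ∂μ ≤ ENNReal.ofReal B := by
    refine (lintegral_liminf_le' fun n => (huS n).1.aemeasurable.ennreal_ofReal).trans ?_
    refine liminf_le_of_le (by isBoundedDefault) fun b hb => ?_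
    obtain ⟨n, hn⟩ := hb.exists
    refine hn.trans ?_
    rw [← ofReal_integral_eq_lintegral_ofReal (huS n).1 (huS n).2.1]
    exact ENNReal.ofReal_le_ofReal (huS n).2.2
  have hlm : AEMeasurable (fun ω => liminf (fun n => ENNReal.ofReal ((u n).2 ω)) atTop) μ := by
    simp only [liminf_eq_iSup_iInf_of_nat]
    exact AEMeasurable.iSup fun n => AEMeasurable.iInf fun i => AEMeasurable.iInf fun _ =>
      (huS i).1.aemeasurable.ennreal_ofReal
  have hfin := ae_lt_top' hlm
    (ne_top_of_le_ne_top ENNReal.ofReal_ne_top hfatou)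
  filter_upwards [huq, hfin] with ω hc hω
  obtain ⟨l, hl⟩ := cauchySeq_tendsto_of_complete hc
  have hl0 : 0 ≤ l := ge_of_tendsto' hl fun n => (Real.exp_pos _).le
  have hlpos : l ≠ 0 := by
    rintro rfl
    have h1 : Tendsto (fun n => -(u n).2 ω / 2) atTop atBot := by
      rw [← Real.tendsto_exp_comp_nhds_zero]; exact hl
    have h2 : Tendsto (fun n => (u n).2 ω) atTop atTop := by
      have := (h1.atBot_mul_const (show (0 : ℝ) < 2 by norm_num))
      rw [← tendsto_neg_atBot_iff]
      simpa using this
    have h3 : Tendsto (fun n => ENNReal.ofReal ((u n).2 ω)) atTop (𝓝 ⊤) :=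
      ENNReal.tendsto_ofReal_atTop.comp h2
    rw [h3.liminf_eq] at hω
    exact lt_irrefl _ hω
  have hlog := ((Real.continuousAt_log hlpos).tendsto.comp hl).const_mul (-2)
  have : Tendsto (fun n => (u n).2 ω) atTop (𝓝 (-2 * Real.log l)) := by
    refine hlog.congr fun n => ?_
    simp only [Function.comp, Real.log_exp]; ring
  exact this.bddAbove_range

/-- Forward convex combinations of an almost surely bounded sequence of random vectors can be
chosen almost surely convergent: minimise a weighted `L²`-norm over the tails of the convex
hull. -/
lemma exists_convex_tendsto {E Ω : Type*} [NormedAddCommGroup E] [InnerProductSpace ℝ E]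
    [FiniteDimensional ℝ E] [MeasurableSpace E] [BorelSpace E] [MeasurableSpace Ω]
    (μ : Measure Ω) [IsProbabilityMeasure μ] (T : ℕ) (a : ℕ → ℕ → Ω → E)
    (ha : ∀ k, ∀ s < T, Measurable (a k s))
    (hbd : ∀ s < T, ∀ᵐ ω ∂μ, BddAbove (range fun k => ‖a k s ω‖)) :
    ∃ u : ℕ → ℕ → Ω → E, (∀ n, u n ∈ convexHull ℝ (a '' Ici n)) ∧
      ∀ s < T, ∀ᵐ ω ∂μ, ∃ l, Tendsto (fun n => u n s ω) atTop (𝓝 l) := by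
  let b : Ω → ℝ := fun ω => ∑ s ∈ Finset.range T, (⨆ k, ‖a k s ω‖ₑ).toReal
  have hb : Measurable b := Finset.measurable_sum _ fun s hs =>
    (Measurable.iSup fun k => (ha k s (Finset.mem_range.1 hs)).enorm).ennreal_toReal
  have hb0 : ∀ ω, 0 ≤ b ω := fun ω => Finset.sum_nonneg fun s _ => ENNReal.toReal_nonneg
  let w : Ω → ℝ := fun ω => (1 + b ω)⁻¹
  have hw : Measurable w := (hb.const_add 1).inv
  have hw0 : ∀ ω, 0 < w ω := fun ω => inv_pos.2 (by linarith [hb0 ω])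
  let S : Set (ℕ → Ω → E) :=
    {x | ∀ s < T, Measurable (x s) ∧ ∀ᵐ ω ∂μ, ‖w ω • x s ω‖ ≤ 1}
  have hS : Convex ℝ S := by
    intro x hx z hz α β hα hβ hαβ s hs
    refine ⟨((hx s hs).1.const_smul α).add ((hz s hs).1.const_smul β), ?_⟩
    filter_upwards [(hx s hs).2, (hz s hs).2] with ω h1 h2
    have := (convex_closedBall (0 : E) 1) (mem_closedBall_zero_iff.2 h1)
      (mem_closedBall_zero_iff.2 h2) hα hβ hαβ
    rw [mem_closedBall_zero_iff] at this
    have e : w ω • (α • x + β • z) s ω = α • w ω • x s ω + β • w ω • z s ω := by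
      show w ω • (α • x s ω + β • z s ω) = _
      rw [smul_add, smul_comm (w ω) α, smul_comm (w ω) β]
    rwa [e]
  have hp : ∀ k, a k ∈ S := by
    intro k s hs
    refine ⟨ha k s hs, ?_⟩
    filter_upwards [hbd s hs] with ω ⟨C, hC⟩
    rw [norm_smul, Real.norm_of_nonneg (hw0 ω).le, inv_mul_le_iff₀ (by linarith [hb0 ω])]
    have hfin : (⨆ k, ‖a k s ω‖ₑ) ≠ ⊤ := by
      refine ne_top_of_le_ne_top (ENNReal.ofReal_ne_top (r := C)) (iSup_le fun j => ?_)
      rw [← ofReal_norm]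
      exact ENNReal.ofReal_le_ofReal (hC ⟨j, rfl⟩)
    have h1 : ‖a k s ω‖ ≤ (⨆ k, ‖a k s ω‖ₑ).toReal := by
      rw [← toReal_enorm]
      exact ENNReal.toReal_mono hfin (le_iSup (fun k => ‖a k s ω‖ₑ) k)
    have h2 : (⨆ k, ‖a k s ω‖ₑ).toReal ≤ b ω :=
      Finset.single_le_sum (f := fun s => (⨆ k, ‖a k s ω‖ₑ).toReal)
        (fun _ _ => ENNReal.toReal_nonneg) (Finset.mem_range.2 hs)
    linarith
  let F : (ℕ → Ω → E) → Ω → ℝ := fun x ω => ∑ s ∈ Finset.range T, ‖w ω • x s ω‖ ^ 2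
  have hFb : ∀ x ∈ S, ∀ᵐ ω ∂μ, F x ω ≤ T := by
    intro x hx
    have : ∀ᵐ ω ∂μ, ∀ s ∈ Finset.range T, ‖w ω • x s ω‖ ≤ 1 :=
      (Finset.eventually_all _).2 fun s hs => (hx s (Finset.mem_range.1 hs)).2
    filter_upwards [this] with ω h
    calc F x ω ≤ ∑ s ∈ Finset.range T, (1 : ℝ) :=
          Finset.sum_le_sum fun s hs => pow_le_one₀ (norm_nonneg _) (h s hs)
      _ = T := by simp
  have hF0 : ∀ x ω, 0 ≤ F x ω := fun x ω => Finset.sum_nonneg fun s _ => sq_nonneg _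
  have hFi : ∀ x ∈ S, Integrable (F x) μ := by
    intro x hx
    refine Integrable.of_bound (Measurable.aestronglyMeasurable ?_) T ?_
    · exact Finset.measurable_sum _ fun s hs =>
        ((hw.smul (hx s (Finset.mem_range.1 hs)).1).norm.pow_const 2)
    · filter_upwards [hFb x hx] with ω h
      rwa [Real.norm_of_nonneg (hF0 x ω)]
  obtain ⟨u, huC, huq⟩ := exists_ae_cauchySeq μ a S hS hp F hFi
    (fun x hx => Eventually.of_forall (hF0 x)) T (fun x hx => by
      calc ∫ ω, F x ω ∂μ ≤ ∫ ω, (T : ℝ) ∂μ :=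
            integral_mono_ae (hFi x hx) (integrable_const _) (hFb x hx)
        _ = T := by simp)
    (fun x ω => fun s : Fin T => w ω • x s ω)
    (fun x hx => (measurable_pi_iff.2 fun s : Fin T =>
      hw.smul (hx s s.2).1).aestronglyMeasurable)
    (by
      intro x hx z hz
      refine Eventually.of_forall fun ω => ?_
      have h1 : ‖(fun s : Fin T => w ω • z s ω) - (fun s : Fin T => w ω • x s ω)‖ ^ 2 ≤
          ∑ s ∈ Finset.range T, ‖w ω • z s ω - w ω • x s ω‖ ^ 2 := by
        have hnn : 0 ≤ ∑ s ∈ Finset.range T, ‖w ω • z s ω - w ω • x s ω‖ ^ 2 :=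
          Finset.sum_nonneg fun s _ => sq_nonneg _
        refine (Real.le_sqrt (norm_nonneg _) hnn).1 ?_
        refine (pi_norm_le_iff_of_nonneg (Real.sqrt_nonneg _)).2 fun s => ?_
        refine Real.le_sqrt_of_sq_le ?_
        exact Finset.single_le_sum (f := fun s => ‖w ω • z s ω - w ω • x s ω‖ ^ 2)
          (fun _ _ => sq_nonneg _) (Finset.mem_range.2 s.2)
      refine h1.trans (le_of_eq ?_)
      simp only [F]
      rw [← Finset.sum_add_distrib, Finset.sum_div, ← Finset.sum_sub_distrib, Finset.mul_sum]
      refine Finset.sum_congr rfl fun s _ => ?_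
      have hpar := parallelogram_law_with_norm ℝ (w ω • x s ω) (w ω • z s ω)
      have hm : w ω • ((1 / 2 : ℝ) • x + (1 / 2 : ℝ) • z) s ω =
          (1 / 2 : ℝ) • (w ω • x s ω + w ω • z s ω) := by
        show w ω • ((1 / 2 : ℝ) • x s ω + (1 / 2 : ℝ) • z s ω) = _
        rw [smul_add, smul_comm (w ω) (1 / 2 : ℝ), smul_comm (w ω) (1 / 2 : ℝ), smul_add]
      have hn : ‖(1 / 2 : ℝ) • (w ω • x s ω + w ω • z s ω)‖ =
          1 / 2 * ‖w ω • x s ω + w ω • z s ω‖ := by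
        rw [norm_smul (1 / 2 : ℝ), Real.norm_of_nonneg (by norm_num)]
      rw [hm, hn, norm_sub_rev]
      nlinarith)
  refine ⟨u, huC, fun s hs => ?_⟩
  filter_upwards [huq] with ω hc
  obtain ⟨l, hl⟩ := cauchySeq_tendsto_of_complete hc
  refine ⟨(w ω)⁻¹ • l ⟨s, hs⟩, ?_⟩
  have := ((tendsto_pi_nhds.1 hl) ⟨s, hs⟩).const_smul (w ω)⁻¹
  refine this.congr fun n => ?_
  simp only [inv_smul_smul₀ (hw0 ω).ne']

end ForwardConvex

/-! ### Martingale transforms bounded below -/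

section MartingaleTransform

open Set Filter Topology

/-- The conditional expectation of the inner product with a bounded measurable vector can be
taken inside. -/
lemma condExp_inner_of_bound {E Ω : Type*} [NormedAddCommGroup E] [InnerProductSpace ℝ E]
    [FiniteDimensional ℝ E] [MeasurableSpace E] [BorelSpace E] {mΩ : MeasurableSpace Ω}
    (μ : Measure Ω) [IsProbabilityMeasure μ] {G : MeasurableSpace Ω} (hG : G ≤ mΩ)
    {x v : Ω → E} (hx : Measurable[G] x) (C : ℝ) (hC : ∀ ω, ‖x ω‖ ≤ C) (hv : Integrable v μ) :
    Integrable (fun ω => ⟪x ω, v ω⟫) μ ∧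
      μ[fun ω => ⟪x ω, v ω⟫|G] =ᵐ[μ] fun ω => ⟪x ω, (μ[v|G]) ω⟫ := by
  constructor
  · refine Integrable.mono' (hv.norm.const_mul C)
      ((hx.mono hG le_rfl).aestronglyMeasurable.inner hv.aestronglyMeasurable) ?_
    refine Eventually.of_forall fun ω => (norm_inner_le_norm _ _).trans ?_
    exact mul_le_mul_of_nonneg_right (hC ω) (norm_nonneg _)
  · exact condExp_stronglyMeasurable_bilin_of_bound (innerSL ℝ) hG
      (Measurable.stronglyMeasurable hx) hv C (Eventually.of_forall hC)

/-- A martingale transform bounded from below by an integrable random variable is integrable and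
has zero expectation. -/
lemma integral_transform_eq_zero {E Ω : Type*} [NormedAddCommGroup E] [InnerProductSpace ℝ E]
    [FiniteDimensional ℝ E] [MeasurableSpace E] [BorelSpace E] {mΩ : MeasurableSpace Ω}
    (μ : Measure Ω) [IsProbabilityMeasure μ] (𝓕 : ℕ → MeasurableSpace Ω) (hle : ∀ t, 𝓕 t ≤ mΩ)
    (hmono : ∀ s t, s ≤ t → 𝓕 s ≤ 𝓕 t) (n : ℕ) (x v : ℕ → Ω → E)
    (hx : ∀ t < n, Measurable[𝓕 t] (x t)) (hv : ∀ t < n, Integrable (v t) μ)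
    (hv0 : ∀ t < n, μ[v t|𝓕 t] =ᵐ[μ] 0) (g : Ω → ℝ) (hg : Integrable g μ)
    (hS : ∀ᵐ ω ∂μ, -g ω ≤ ∑ t ∈ Finset.range n, ⟪x t ω, v t ω⟫) :
    Integrable (fun ω => ∑ t ∈ Finset.range n, ⟪x t ω, v t ω⟫) μ ∧
      ∫ ω, ∑ t ∈ Finset.range n, ⟪x t ω, v t ω⟫ ∂μ = 0 := by
  induction n generalizing v g with
  | zero => simp
  | succ n ih =>
    -- Conditioning on `𝓕 n` removes the last increment and keeps the martingale property.
    let v' : ℕ → Ω → E := fun t => μ[v t|𝓕 n]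
    let S : Ω → ℝ := fun ω => ∑ t ∈ Finset.range (n + 1), ⟪x t ω, v t ω⟫
    let S' : Ω → ℝ := fun ω => ∑ t ∈ Finset.range n, ⟪x t ω, v' t ω⟫
    let A : ℕ → Set Ω := fun N => {ω | ∀ t ∈ Finset.range (n + 1), ‖x t ω‖ ≤ N}
    have hxn : ∀ t ∈ Finset.range (n + 1), Measurable[𝓕 n] (x t) := fun t ht =>
      (hx t (Finset.mem_range.1 ht)).mono (hmono _ _ (Nat.lt_succ_iff.1 (Finset.mem_range.1 ht)))
        le_rfl
    have hA : ∀ N, MeasurableSet[𝓕 n] (A N) := by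
      intro N
      have : A N = ⋂ t ∈ Finset.range (n + 1), {ω | ‖x t ω‖ ≤ N} := by ext; simp [A]
      rw [this]
      refine Finset.measurableSet_biInter _ fun t ht => ?_
      exact @measurableSet_le _ _ _ _ _ (𝓕 n) _ _ _ _ _
        (@Measurable.norm _ _ _ _ _ (𝓕 n) _ (hxn t ht)) measurable_const
    have hAc : AECover μ atTop A := by
      refine ⟨Eventually.of_forall fun ω => ?_, fun N => hle n _ (hA N)⟩
      refine (Finset.eventually_all _).2 fun t _ => ?_
      filter_upwards [eventually_ge_atTop ⌈‖x t ω‖⌉₊] with N hN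
      exact (Nat.le_ceil _).trans (by exact_mod_cast hN)
    have hterm : ∀ N, ∀ t ∈ Finset.range (n + 1),
        Integrable (fun ω => ⟪(A N).indicator (x t) ω, v t ω⟫) μ ∧
        μ[fun ω => ⟪(A N).indicator (x t) ω, v t ω⟫|𝓕 n] =ᵐ[μ]
          fun ω => ⟪(A N).indicator (x t) ω, v' t ω⟫ := by
      intro N t ht
      refine condExp_inner_of_bound μ (hle n) (Measurable.indicator (hxn t ht) (hA N)) N (fun ω => ?_) (hv t (Finset.mem_range.1 ht))
      by_cases hω : ω ∈ A N
      · rw [indicator_of_mem hω]; exact hω t ht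
      · rw [indicator_of_notMem hω]; simp
    have hSN : ∀ N, (A N).indicator S = ∑ t ∈ Finset.range (n + 1),
        fun ω => ⟪(A N).indicator (x t) ω, v t ω⟫ := by
      intro N; ext ω
      by_cases hω : ω ∈ A N <;> simp [hω, S]
    have hSNi : ∀ N, Integrable ((A N).indicator S) μ := fun N => by
      rw [hSN]; exact integrable_finsetSum' _ fun t ht => (hterm N t ht).1
    have hvn : v' n =ᵐ[μ] 0 := hv0 n (Nat.lt_succ_self n)
    have hcond : ∀ N, μ[(A N).indicator S|𝓕 n] =ᵐ[μ] (A N).indicator S' := by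
      intro N
      have h1 : μ[(A N).indicator S|𝓕 n] =ᵐ[μ] ∑ t ∈ Finset.range (n + 1),
          μ[fun ω => ⟪(A N).indicator (x t) ω, v t ω⟫|𝓕 n] := by
        rw [hSN]; exact condExp_finsetSum (fun t ht => (hterm N t ht).1) _
      have h2 : ∀ᵐ ω ∂μ, ∀ t ∈ Finset.range (n + 1),
          (μ[fun ω => ⟪(A N).indicator (x t) ω, v t ω⟫|𝓕 n]) ω =
            ⟪(A N).indicator (x t) ω, v' t ω⟫ :=
        (Finset.eventually_all _).2 fun t ht => (hterm N t ht).2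
      filter_upwards [h1, h2, hvn] with ω h1 h2 h3
      rw [h1, Finset.sum_apply, Finset.sum_congr rfl h2, Finset.sum_range_succ, h3]
      by_cases hω : ω ∈ A N <;> simp [hω, S']
    have hlow : ∀ᵐ ω ∂μ, -(μ[g|𝓕 n]) ω ≤ S' ω := by
      have h1 : ∀ N, ∀ᵐ ω ∂μ, ω ∈ A N → -(μ[g|𝓕 n]) ω ≤ S' ω := by
        intro N
        have hle' : (A N).indicator (-g) ≤ᵐ[μ] (A N).indicator S := by
          filter_upwards [hS] with ω hω
          by_cases h : ω ∈ A N
          · rw [indicator_of_mem h, indicator_of_mem h]; exact hω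
          · rw [indicator_of_notMem h, indicator_of_notMem h]
        have h2 := condExp_mono (m := 𝓕 n) (hg.neg.indicator (hle n _ (hA N))) (hSNi N) hle'
        filter_upwards [h2, hcond N, condExp_indicator (m := 𝓕 n) hg.neg (hA N),
          condExp_neg g (𝓕 n) (μ := μ)] with ω e1 e2 e3 e4 h
        rw [e2, e3, indicator_of_mem h, indicator_of_mem h, e4] at e1
        exact e1
      filter_upwards [ae_all_iff.2 h1, hAc.ae_eventually_mem] with ω h2 h3
      obtain ⟨N, hN⟩ := h3.exists
      exact h2 N hN
    obtain ⟨hS'i, hS'0⟩ := ih v' (fun t ht => hx t (ht.trans n.lt_succ_self))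
      (fun t _ => integrable_condExp) (fun t ht =>
        (condExp_condExp_of_le (hmono _ _ ht.le) (hle n)).trans (hv0 t (ht.trans n.lt_succ_self)))
      (μ[g|𝓕 n]) integrable_condExp hlow
    have hint : ∀ N, ∫ ω in A N, S ω ∂μ = ∫ ω in A N, S' ω ∂μ := by
      intro N
      rw [← integral_indicator (hle n _ (hA N)), ← integral_indicator (hle n _ (hA N)),
        ← integral_condExp (hle n) (f := (A N).indicator S)]
      exact integral_congr_ae (hcond N)
    have hSon : ∀ N, IntegrableOn S (A N) μ := fun N =>
      (integrable_indicator_iff (hle n _ (hA N))).1 (hSNi N)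
    have hSg : Integrable (fun ω => S ω + g ω) μ := by
      refine hAc.integrable_of_integral_bounded_of_nonneg_ae
        ((∫ ω, ‖S' ω‖ ∂μ) + ∫ ω, ‖g ω‖ ∂μ) (fun N => (hSon N).add hg.integrableOn) ?_ ?_
      · filter_upwards [hS] with ω h
        show 0 ≤ S ω + g ω
        linarith
      · refine Eventually.of_forall fun N => ?_
        rw [integral_add (hSon N) hg.integrableOn, hint N]
        have hb : ∀ f : Ω → ℝ, Integrable f μ → ∫ ω in A N, f ω ∂μ ≤ ∫ ω, ‖f ω‖ ∂μ :=
          fun f hf => (le_abs_self _).trans ((norm_integral_le_integral_norm _).trans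
            (setIntegral_le_integral hf.norm (Eventually.of_forall fun _ => norm_nonneg _)))
        exact add_le_add (hb _ hS'i) (hb _ hg)
    have hSi : Integrable S μ := by
      refine (hSg.sub hg).congr (Eventually.of_forall fun ω => ?_)
      simp
    refine ⟨hSi, ?_⟩
    have l1 := hAc.integral_tendsto_of_countably_generated hSi
    have l2 := hAc.integral_tendsto_of_countably_generated hS'i
    have := tendsto_nhds_unique (l1.congr hint) l2
    exact this.trans hS'0

end MartingaleTransform

/-! ### The cone of lossless strategies -/

section Lossless

open Set Filter Topology

variable {E : Type*} [NormedAddCommGroup E] [InnerProductSpace ℝ E]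

/-- The strategies with price increments `Δ` that satisfy the recession constraints and have a
nonnegative terminal value; the set `L` of the linearity condition. -/
def Lossless [MeasurableSpace E] {mΩ : MeasurableSpace Ω} (μ : Measure Ω) (T : ℕ)
    (𝓕 : ℕ → MeasurableSpace Ω) (D : ℕ → Ω → Set E) (Δ : ℕ → Ω → E) : Set (ℕ → Ω → E) :=
  {z | (∀ t < T, Measurable[𝓕 t] (z t)) ∧
    (∀ᵐ ω ∂μ, 0 ≤ ∑ t ∈ Finset.range T, ⟪z t ω, Δ t ω⟫) ∧
    ∀ t < T, ∀ᵐ ω ∂μ, z t ω ∈ recCone (D t ω)}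

/-- The lossless strategies that do not trade before time `t`. -/
def LosslessFrom [MeasurableSpace E] {mΩ : MeasurableSpace Ω} (μ : Measure Ω) (T : ℕ)
    (𝓕 : ℕ → MeasurableSpace Ω) (D : ℕ → Ω → Set E) (Δ : ℕ → Ω → E) (t : ℕ) :
    Set (ℕ → Ω → E) :=
  {z | z ∈ Lossless μ T 𝓕 D Δ ∧ ∀ r < t, z r = 0}

lemma smul_mem_recCone {C : Set E} {z : E} (hz : z ∈ recCone C) {r : ℝ} (hr : 0 ≤ r) :
    r • z ∈ recCone C := by
  intro x hx q hq
  rw [smul_smul]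
  exact hz x hx _ (mul_nonneg hq hr)

lemma zero_mem_recCone (C : Set E) : (0 : E) ∈ recCone C := by
  intro x hx q _
  simpa using hx

/-- For a closed convex set, a single unbounded ray suffices to have a recession direction. -/
lemma mem_recCone_of_ray {C : Set E} (hcl : IsClosed C) (hcv : Convex ℝ C) {x₀ z : E}
    (h : ∀ r : ℝ, 0 ≤ r → x₀ + r • z ∈ C) : z ∈ recCone C := by
  intro x hx q hq
  have hmem : ∀ n : ℕ, (1 - 1 / ((n : ℝ) + 1)) • x +
      (1 / ((n : ℝ) + 1)) • (x₀ + (((n : ℝ) + 1) * q) • z) ∈ C := by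
    intro n
    have h0 : (0 : ℝ) < 1 / ((n : ℝ) + 1) := by positivity
    have h1 : 1 / ((n : ℝ) + 1) ≤ 1 := by
      rw [div_le_one (by positivity)]; linarith [(Nat.cast_nonneg n : (0 : ℝ) ≤ n)]
    exact hcv hx (h _ (by positivity)) (by linarith) h0.le (by ring)
  have h0 := tendsto_one_div_add_atTop_nhds_zero_nat (𝕜 := ℝ)
  have hlim : Tendsto (fun n : ℕ => (1 - 1 / ((n : ℝ) + 1)) • x +
      (1 / ((n : ℝ) + 1)) • (x₀ + (((n : ℝ) + 1) * q) • z)) atTop (𝓝 (x + q • z)) := by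
    have e : ∀ n : ℕ, (1 - 1 / ((n : ℝ) + 1)) • x +
        (1 / ((n : ℝ) + 1)) • (x₀ + (((n : ℝ) + 1) * q) • z) =
        (1 - 1 / ((n : ℝ) + 1)) • x + ((1 / ((n : ℝ) + 1)) • x₀ + q • z) := by
      intro n
      have : (n : ℝ) + 1 ≠ 0 := by positivity
      rw [smul_add (1 / ((n : ℝ) + 1)), smul_smul]
      congr 3
      field_simp
    simp only [e]
    have := ((h0.const_sub 1).smul_const x).add ((h0.smul_const x₀).add_const (q • z))
    simpa using this
  exact hcl.mem_of_tendsto hlim (Eventually.of_forall hmem)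

lemma measurable_glue {X : Type*} [MeasurableSpace X] {m : MeasurableSpace Ω} {f : ℕ → Ω → X}
    {κ : Ω → ℕ} (hf : ∀ k, Measurable (f k)) (hκ : Measurable κ) :
    Measurable fun ω => f (κ ω) ω :=
  (measurable_from_prod_countable_right (f := fun p : ℕ × Ω => f p.1 p.2) hf).comp
    (hκ.prodMk measurable_id)

variable [MeasurableSpace E] {mΩ : MeasurableSpace Ω}
  {μ : Measure Ω} {T : ℕ} {𝓕 : ℕ → MeasurableSpace Ω} {D : ℕ → Ω → Set E} {Δ : ℕ → Ω → E}

lemma losslessFrom_glue (hmono : ∀ s t, s ≤ t → 𝓕 s ≤ 𝓕 t) {t : ℕ} {z : ℕ → ℕ → Ω → E}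
    (hz : ∀ k, z k ∈ LosslessFrom μ T 𝓕 D Δ t) {κ : Ω → ℕ} (hκ : Measurable[𝓕 t] κ) :
    (fun s ω => z (κ ω) s ω) ∈ LosslessFrom μ T 𝓕 D Δ t := by
  have h0 : ∀ r < t, (fun ω => z (κ ω) r ω) = 0 := fun r hr => by
    ext ω; rw [(hz (κ ω)).2 r hr]
  refine ⟨⟨fun s hs => ?_, ?_, fun s hs => ?_⟩, h0⟩
  · rcases lt_or_ge s t with h | h
    · show Measurable[𝓕 s] (fun ω => z (κ ω) s ω)
      rw [h0 s h]
      exact measurable_const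
    · exact measurable_glue (m := 𝓕 s) (fun k => (hz k).1.1 s hs) (hκ.mono (hmono _ _ h) le_rfl)
  · filter_upwards [ae_all_iff.2 fun k => (hz k).1.2.1] with ω h using h _
  · filter_upwards [ae_all_iff.2 fun k => (hz k).1.2.2 s hs] with ω h using h _

lemma zero_mem_losslessFrom (t : ℕ) : (0 : ℕ → Ω → E) ∈ LosslessFrom μ T 𝓕 D Δ t :=
  ⟨⟨fun _ _ => measurable_const, Eventually.of_forall fun ω => by simp,
    fun _ _ => Eventually.of_forall fun ω => zero_mem_recCone _⟩, fun _ _ => rfl⟩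

variable {S : Submodule ℝ (ℕ → Ω → E)}

lemma losslessFrom_neg (hS : Lossless μ T 𝓕 D Δ = ↑S) {t : ℕ} {z : ℕ → Ω → E}
    (hz : z ∈ LosslessFrom μ T 𝓕 D Δ t) : -z ∈ LosslessFrom μ T 𝓕 D Δ t := by
  refine ⟨?_, fun r hr => by rw [Pi.neg_apply, hz.2 r hr, neg_zero]⟩
  have := hz.1
  rw [hS] at this ⊢
  exact S.neg_mem this

lemma losslessFrom_add (hS : Lossless μ T 𝓕 D Δ = ↑S) {t : ℕ} {z z' : ℕ → Ω → E}
    (hz : z ∈ LosslessFrom μ T 𝓕 D Δ t) (hz' : z' ∈ LosslessFrom μ T 𝓕 D Δ t) :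
    z + z' ∈ LosslessFrom μ T 𝓕 D Δ t := by
  refine ⟨?_, fun r hr => by rw [Pi.add_apply, hz.2 r hr, hz'.2 r hr, add_zero]⟩
  have h1 := hz.1
  have h2 := hz'.1
  rw [hS] at h1 h2 ⊢
  exact S.add_mem h1 h2

lemma lossless_value_eq_zero (hS : Lossless μ T 𝓕 D Δ = ↑S) {z : ℕ → Ω → E}
    (hz : z ∈ Lossless μ T 𝓕 D Δ) : ∀ᵐ ω ∂μ, ∑ t ∈ Finset.range T, ⟪z t ω, Δ t ω⟫ = 0 := by
  have h2 := (losslessFrom_neg hS (t := 0) ⟨hz, fun r hr => absurd hr (Nat.not_lt_zero r)⟩).1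
  filter_upwards [hz.2.1, h2.2.1] with ω h1 h2
  simp only [Pi.neg_apply, inner_neg_left, Finset.sum_neg_distrib] at h2
  linarith

variable [FiniteDimensional ℝ E] [BorelSpace E]

lemma losslessFrom_smul (hmono : ∀ s t, s ≤ t → 𝓕 s ≤ 𝓕 t) {t : ℕ} {z : ℕ → Ω → E}
    (hz : z ∈ LosslessFrom μ T 𝓕 D Δ t) {r : Ω → ℝ} (hr : Measurable[𝓕 t] r)
    (hr0 : ∀ ω, 0 ≤ r ω) :
    (fun s ω => r ω • z s ω) ∈ LosslessFrom μ T 𝓕 D Δ t := by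
  have h0 : ∀ q < t, (fun ω => r ω • z q ω) = 0 := fun q hq => by
    ext ω; rw [hz.2 q hq]; simp
  refine ⟨⟨fun s hs => ?_, ?_, fun s hs => ?_⟩, h0⟩
  · rcases lt_or_ge s t with h | h
    · show Measurable[𝓕 s] (fun ω => r ω • z s ω)
      rw [h0 s h]
      exact measurable_const
    · exact Measurable.smul (hr.mono (hmono _ _ h) le_rfl) (hz.1.1 s hs)
  · filter_upwards [hz.1.2.1] with ω h
    have : ∑ s ∈ Finset.range T, ⟪r ω • z s ω, Δ s ω⟫ =
        r ω * ∑ s ∈ Finset.range T, ⟪z s ω, Δ s ω⟫ := by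
      rw [Finset.mul_sum]
      exact Finset.sum_congr rfl fun s _ => real_inner_smul_left _ _ _
    rw [this]
    exact mul_nonneg (hr0 ω) h
  · filter_upwards [hz.1.2.2 s hs] with ω h using smul_mem_recCone h (hr0 ω)

/-- Up to a unit error, the norm of the time-`t` position can be minimised over all shifts by
lossless strategies starting at `t`: take a minimising sequence for a bounded functional of the
norm and glue it together along an `𝓕 t`-measurable index. -/
lemma exists_near_min [IsProbabilityMeasure μ] (hle : ∀ t, 𝓕 t ≤ mΩ)
    (hmono : ∀ s t, s ≤ t → 𝓕 s ≤ 𝓕 t) {t : ℕ} (ht : t < T) {x : Ω → E}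
    (hx : Measurable[𝓕 t] x) :
    ∃ z ∈ LosslessFrom μ T 𝓕 D Δ t, ∀ z' ∈ LosslessFrom μ T 𝓕 D Δ t,
      ∀ᵐ ω ∂μ, ‖x ω + z t ω‖ ≤ ‖x ω + z' t ω‖ + 1 := by
  let ρ : (ℕ → Ω → E) → Ω → ℝ := fun z ω => ‖x ω + z t ω‖
  let φ : (ℕ → Ω → E) → Ω → ℝ := fun z ω => Real.arctan (ρ z ω)
  have hρ : ∀ z ∈ LosslessFrom μ T 𝓕 D Δ t, Measurable[𝓕 t] (ρ z) := fun z hz =>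
    measurable_norm.comp (Measurable.add (m := 𝓕 t) hx (hz.1.1 t ht))
  have hφ : ∀ z ∈ LosslessFrom μ T 𝓕 D Δ t, Measurable[𝓕 t] (φ z) := fun z hz =>
    Real.measurable_arctan.comp (hρ z hz)
  have hφi : ∀ z ∈ LosslessFrom μ T 𝓕 D Δ t, Integrable (φ z) μ := fun z hz =>
    Integrable.of_bound ((hφ z hz).mono (hle t) le_rfl).aestronglyMeasurable (Real.pi / 2)
      (Eventually.of_forall fun ω => abs_le.2
        ⟨(Real.neg_pi_div_two_lt_arctan _).le, (Real.arctan_lt_pi_div_two _).le⟩)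
  let I : ℝ := sInf ((fun z => ∫ ω, φ z ω ∂μ) '' LosslessFrom μ T 𝓕 D Δ t)
  have hbdd : BddBelow ((fun z => ∫ ω, φ z ω ∂μ) '' LosslessFrom μ T 𝓕 D Δ t) := by
    refine ⟨0, ?_⟩
    rintro _ ⟨z, _, rfl⟩
    refine integral_nonneg fun ω => ?_
    exact Real.arctan_nonneg.2 (norm_nonneg _)
  have hI : ∀ z ∈ LosslessFrom μ T 𝓕 D Δ t, I ≤ ∫ ω, φ z ω ∂μ := fun z hz =>
    csInf_le hbdd ⟨z, hz, rfl⟩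
  have hseq : ∀ k : ℕ, ∃ z ∈ LosslessFrom μ T 𝓕 D Δ t, ∫ ω, φ z ω ∂μ < I + 1 / ((k : ℝ) + 1) := by
    intro k
    obtain ⟨_, ⟨z, hz, rfl⟩, h⟩ := exists_lt_of_csInf_lt
      (s := (fun z => ∫ ω, φ z ω ∂μ) '' LosslessFrom μ T 𝓕 D Δ t)
      ⟨_, 0, zero_mem_losslessFrom t, rfl⟩
      (lt_add_of_pos_right I (show (0 : ℝ) < 1 / ((k : ℝ) + 1) by positivity))
    exact ⟨z, hz, h⟩
  choose z hz hzI using hseq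
  obtain ⟨κ, hκ, hκA⟩ := @exists_measurable_index Ω (𝓕 t)
    (fun k => {ω | ∀ j, ρ (z k) ω ≤ ρ (z j) ω + 1 / 2}) (fun k => by
      have : {ω | ∀ j, ρ (z k) ω ≤ ρ (z j) ω + 1 / 2} =
        ⋂ j, {ω | ρ (z k) ω ≤ ρ (z j) ω + 1 / 2} := by ext; simp
      rw [this]
      exact MeasurableSet.iInter fun j => measurableSet_le (hρ _ (hz k))
        (Measurable.add_const (hρ _ (hz j)) _))
  have hκ' : ∀ ω j, ρ (z (κ ω)) ω ≤ ρ (z j) ω + 1 / 2 := by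
    intro ω
    refine hκA ω ?_
    have hb : BddBelow (range fun j => ρ (z j) ω) := ⟨0, by
      rintro _ ⟨j, rfl⟩; exact norm_nonneg _⟩
    obtain ⟨k, hk⟩ := exists_lt_of_ciInf_lt
      (show (⨅ j, ρ (z j) ω) < (⨅ j, ρ (z j) ω) + 1 / 2 by linarith)
    exact ⟨k, fun j => by linarith [ciInf_le hb j]⟩
  refine ⟨fun s ω => z (κ ω) s ω, losslessFrom_glue hmono hz hκ, fun z' hz' => ?_⟩
  let d : ℕ → Ω → ℝ := fun k ω => φ (z k) ω - min (φ (z k) ω) (φ z' ω)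
  have hd0 : ∀ k ω, 0 ≤ d k ω := fun k ω => sub_nonneg.2 (min_le_left _ _)
  have hdm : ∀ k, Measurable (d k) := fun k =>
    ((hφ _ (hz k)).mono (hle t) le_rfl).sub
      (((hφ _ (hz k)).mono (hle t) le_rfl).min ((hφ _ hz').mono (hle t) le_rfl))
  have hmin : ∀ k, Integrable (fun ω => min (φ (z k) ω) (φ z' ω)) μ := fun k =>
    (hφi _ (hz k)).inf (hφi _ hz')
  have hdI : ∀ k, ∫ ω, d k ω ∂μ ≤ 1 / ((k : ℝ) + 1) := by
    intro k
    -- Gluing `z k` and `z'` realises the pointwise minimum.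
    let τ : Ω → ℕ := fun ω => if φ (z k) ω ≤ φ z' ω then 0 else 1
    have hτ : Measurable[𝓕 t] τ :=
      Measurable.ite (measurableSet_le (hφ _ (hz k)) (hφ _ hz')) measurable_const measurable_const
    have hg := losslessFrom_glue hmono (μ := μ) (T := T) (D := D) (Δ := Δ)
      (z := fun i => if i = 0 then z k else z')
      (fun i => by split_ifs; exacts [hz k, hz']) hτ
    have hge := hI _ hg
    have he : ∀ ω, φ (fun s ω => (fun i : ℕ => if i = 0 then z k else z') (τ ω) s ω) ω =
        min (φ (z k) ω) (φ z' ω) := by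
      intro ω
      by_cases h : φ (z k) ω ≤ φ z' ω
      · have h0 : τ ω = 0 := if_pos h
        rw [min_eq_left h]; simp [h0, φ, ρ]
      · rw [min_eq_right (not_le.1 h).le]
        have : τ ω = 1 := if_neg h
        simp [this, φ, ρ]
    rw [integral_congr_ae (Eventually.of_forall he)] at hge
    have : ∫ ω, d k ω ∂μ = ∫ ω, φ (z k) ω ∂μ - ∫ ω, min (φ (z k) ω) (φ z' ω) ∂μ :=
      integral_sub (hφi _ (hz k)) (hmin k)
    linarith [hzI k]
  have hzero : ∫⁻ ω, ⨅ k, ENNReal.ofReal (d k ω) ∂μ = 0 := by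
    refine le_antisymm (ge_of_tendsto' (f := fun k : ℕ => ENNReal.ofReal (1 / ((k : ℝ) + 1)))
      (x := atTop) ?_ fun k => ?_) zero_le
    · have := ENNReal.tendsto_ofReal (tendsto_one_div_add_atTop_nhds_zero_nat (𝕜 := ℝ))
      simpa using this
    · refine (lintegral_mono fun ω => iInf_le _ k).trans ?_
      have hdi : Integrable (d k) μ := (hφi _ (hz k)).sub (hmin k)
      rw [← ofReal_integral_eq_lintegral_ofReal hdi
        (Eventually.of_forall (hd0 k))]
      exact ENNReal.ofReal_le_ofReal (hdI k)
  rw [lintegral_eq_zero_iff (Measurable.iInf fun k => (hdm k).ennreal_ofReal)] at hzero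
  filter_upwards [hzero] with ω hω
  have hgap : 0 < Real.arctan (ρ z' ω + 1 / 2) - Real.arctan (ρ z' ω) :=
    sub_pos.2 (Real.arctan_strictMono (by linarith))
  have hlt : (⨅ k, ENNReal.ofReal (d k ω)) <
      ENNReal.ofReal (Real.arctan (ρ z' ω + 1 / 2) - Real.arctan (ρ z' ω)) := by
    have : (⨅ k, ENNReal.ofReal (d k ω)) = 0 := hω
    rw [this]; exact ENNReal.ofReal_pos.2 hgap
  obtain ⟨k, hk⟩ := iInf_lt_iff.1 hlt
  rw [ENNReal.ofReal_lt_ofReal_iff hgap] at hk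
  have h1 : φ (z k) ω < Real.arctan (ρ z' ω + 1 / 2) := by
    have : φ z' ω = Real.arctan (ρ z' ω) := rfl
    have h2 := min_le_right (φ (z k) ω) (φ z' ω)
    simp only [d] at hk
    linarith
  have h2 := Real.arctan_strictMono.lt_iff_lt.1 h1
  have h3 := hκ' ω k
  show ρ (z (κ ω)) ω ≤ ρ z' ω + 1
  linarith

/-- Every adapted process can be shifted by a lossless strategy so that its norm is, at every
time, nearly minimal among the shifts by lossless strategies starting at that time. -/
lemma exists_shift [IsProbabilityMeasure μ] (hle : ∀ t, 𝓕 t ≤ mΩ)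
    (hmono : ∀ s t, s ≤ t → 𝓕 s ≤ 𝓕 t) (hS : Lossless μ T 𝓕 D Δ = ↑S) (x : ℕ → Ω → E)
    (hx : ∀ t < T, Measurable[𝓕 t] (x t)) :
    ∃ z ∈ Lossless μ T 𝓕 D Δ, ∀ t < T, ∀ z' ∈ LosslessFrom μ T 𝓕 D Δ t,
      ∀ᵐ ω ∂μ, ‖x t ω + z t ω‖ ≤ ‖x t ω + z t ω + z' t ω‖ + 1 := by
  suffices h : ∀ n ≤ T, ∃ z ∈ Lossless μ T 𝓕 D Δ, ∀ t < n, ∀ z' ∈ LosslessFrom μ T 𝓕 D Δ t,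
      ∀ᵐ ω ∂μ, ‖x t ω + z t ω‖ ≤ ‖x t ω + z t ω + z' t ω‖ + 1 from h T le_rfl
  intro n
  induction n with
  | zero => exact fun _ => ⟨0, (zero_mem_losslessFrom 0).1, fun t ht => absurd ht (Nat.not_lt_zero t)⟩
  | succ n ih =>
    intro hn
    obtain ⟨z, hz, hzm⟩ := ih (Nat.le_of_succ_le hn)
    obtain ⟨w, hw, hwm⟩ := exists_near_min (μ := μ) (D := D) (Δ := Δ) hle hmono (t := n) hn
      (x := fun ω => x n ω + z n ω) (Measurable.add (hx n hn) (hz.1 n hn))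
    refine ⟨z + w, ?_, fun t ht z' hz' => ?_⟩
    · have h1 := hw.1
      rw [hS] at hz h1 ⊢
      exact S.add_mem hz h1
    · rcases Nat.lt_succ_iff_lt_or_eq.1 ht with h | rfl
      · filter_upwards [hzm t h z' hz'] with ω hω
        have : (z + w) t ω = z t ω := by
          show z t ω + w t ω = _
          rw [hw.2 t h]; simp
        rwa [this]
      · filter_upwards [hwm _ (losslessFrom_add hS hw hz')] with ω hω
        have e1 : (z + w) t ω = z t ω + w t ω := rfl
        have e2 : (w + z') t ω = w t ω + z' t ω := rfl
        rw [e2, ← add_assoc] at hω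
        rwa [e1, ← add_assoc]

/-- The almost sure limit of `G`-measurable random vectors has a `G`-measurable version. -/
lemma exists_measurable_limit {G : MeasurableSpace Ω} (hG : G ≤ mΩ) {f : ℕ → Ω → E}
    (hf : ∀ n, Measurable[G] (f n))
    (hlim : ∀ᵐ ω ∂μ, ∃ l, Tendsto (fun n => f n ω) atTop (𝓝 l)) :
    ∃ z : Ω → E, Measurable[G] z ∧ ∀ᵐ ω ∂μ, Tendsto (fun n => f n ω) atTop (𝓝 (z ω)) := by
  have hset : MeasurableSet[G] {ω | ∃ l, Tendsto (fun n => f n ω) atTop (𝓝 l)} :=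
    measurableSet_exists_tendsto hf
  have h1 : ∀ᵐ ω ∂(μ.trim hG), ∃ l, Tendsto (fun n => f n ω) atTop (𝓝 l) := by
    rw [ae_iff]
    exact (trim_measurableSet_eq hG hset.compl).trans (ae_iff.1 hlim)
  obtain ⟨z, hz, hzl⟩ := measurable_limit_of_tendsto_metrizable_ae
    (fun n => (hf n).aemeasurable) h1
  exact ⟨z, hz, ae_of_ae_trim hG hzl⟩

end Lossless

/-! ### Almost sure boundedness of near-minimal strategies -/

section Bounded

open Set Filter Topology

variable {E : Type*} [NormedAddCommGroup E] [InnerProductSpace ℝ E] [FiniteDimensional ℝ E]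
  [MeasurableSpace E] [BorelSpace E] {mΩ : MeasurableSpace Ω}

/-- The hypotheses on a sequence `a` of strategy increments around a feasible strategy `x₀` that
are propagated through time in the boundedness argument: `x₀ + a k` is feasible, the terminal
values are bounded below, the positions before `t` are bounded, and the positions from `t` on
cannot be made much smaller by adding lossless strategies. Positions before `t` are allowed to be
`𝓕 t`-measurable, because the rescaling at time `t` is. -/
structure NearMinSeq (μ : Measure Ω) (T : ℕ) (𝓕 : ℕ → MeasurableSpace Ω) (D : ℕ → Ω → Set E)
    (Δ : ℕ → Ω → E) (x₀ : ℕ → Ω → E) (t : ℕ) (a : ℕ → ℕ → Ω → E) : Prop where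
  meas : ∀ k, ∀ s < T, Measurable[𝓕 (max s t)] (a k s)
  dom : ∀ k, ∀ s < T, ∀ᵐ ω ∂μ, x₀ s ω + a k s ω ∈ D s ω
  low : ∀ᵐ ω ∂μ, ∃ β : ℝ, ∀ k, -β ≤ ∑ s ∈ Finset.range T, ⟪a k s ω, Δ s ω⟫
  bdd : ∀ s < t, s < T → ∀ᵐ ω ∂μ, BddAbove (range fun k => ‖a k s ω‖)
  nm : ∀ s < T, t ≤ s → ∃ b : Ω → ℝ, (∀ ω, 0 ≤ b ω) ∧ ∀ k, ∀ z ∈ LosslessFrom μ T 𝓕 D Δ s,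
    ∀ᵐ ω ∂μ, ‖a k s ω‖ ≤ ‖a k s ω + z s ω‖ + b ω

variable {μ : Measure Ω} {T : ℕ} {𝓕 : ℕ → MeasurableSpace Ω} {D : ℕ → Ω → Set E}
  {Δ : ℕ → Ω → E} {x₀ : ℕ → Ω → E}

/-- Rescaling by a random factor in `[0, 1]` and passing to a random index, both known at time
`t`, propagates the hypotheses from `t` to `t + 1`, provided the rescaled time-`t` positions are
bounded. -/
lemma NearMinSeq.rescale (hmono : ∀ s t, s ≤ t → 𝓕 s ≤ 𝓕 t)
    (hcv : ∀ t < T, ∀ ω, Convex ℝ (D t ω))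
    (hx₀ : ∀ t < T, ∀ᵐ ω ∂μ, x₀ t ω ∈ D t ω) {t : ℕ} {a : ℕ → ℕ → Ω → E}
    (ha : NearMinSeq μ T 𝓕 D Δ x₀ t a) {τ : ℕ → Ω → ℕ} (hτ : ∀ n, Measurable[𝓕 t] (τ n))
    {r : ℕ → Ω → ℝ} (hr : ∀ n, Measurable[𝓕 t] (r n)) (hr0 : ∀ n ω, 0 ≤ r n ω)
    (hr1 : ∀ n ω, r n ω ≤ 1) (hbd : ∀ n ω, r n ω * ‖a (τ n ω) t ω‖ ≤ 1) :
    NearMinSeq μ T 𝓕 D Δ x₀ (t + 1) (fun n s ω => r n ω • a (τ n ω) s ω) where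
  meas n s hs := by
    have hm : 𝓕 (max s t) ≤ 𝓕 (max s (t + 1)) := hmono _ _ (max_le_max le_rfl t.le_succ)
    have ht : 𝓕 t ≤ 𝓕 (max s (t + 1)) := hmono _ _ (t.le_succ.trans (le_max_right _ _))
    exact Measurable.smul ((hr n).mono ht le_rfl)
      (measurable_glue (m := 𝓕 (max s (t + 1))) (fun k => (ha.meas k s hs).mono hm le_rfl)
        ((hτ n).mono ht le_rfl))
  dom n s hs := by
    filter_upwards [ae_all_iff.2 fun k => ha.dom k s hs, hx₀ s hs] with ω h h0
    have := hcv s hs ω h0 (h (τ n ω)) (sub_nonneg.2 (hr1 n ω)) (hr0 n ω) (by ring)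
    convert this using 1
    module
  low := by
    filter_upwards [ha.low] with ω ⟨β, hβ⟩
    refine ⟨|β|, fun n => ?_⟩
    have e : ∑ s ∈ Finset.range T, ⟪r n ω • a (τ n ω) s ω, Δ s ω⟫ =
        r n ω * ∑ s ∈ Finset.range T, ⟪a (τ n ω) s ω, Δ s ω⟫ := by
      rw [Finset.mul_sum]
      exact Finset.sum_congr rfl fun s _ => real_inner_smul_left _ _ _
    rw [e]
    have h1 := mul_le_mul_of_nonneg_left (hβ (τ n ω)) (hr0 n ω)
    have h2 := mul_le_mul_of_nonneg_left (le_abs_self β) (hr0 n ω)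
    have h3 := mul_le_mul_of_nonneg_right (hr1 n ω) (abs_nonneg β)
    linarith
  bdd s hs hsT := by
    rcases Nat.lt_succ_iff_lt_or_eq.1 hs with h | rfl
    · filter_upwards [ha.bdd s h hsT] with ω ⟨C, hC⟩
      refine ⟨C, ?_⟩
      rintro _ ⟨n, rfl⟩
      dsimp only
      rw [norm_smul, Real.norm_of_nonneg (hr0 n ω)]
      exact (mul_le_of_le_one_left (norm_nonneg _) (hr1 n ω)).trans (hC ⟨τ n ω, rfl⟩)
    · refine Eventually.of_forall fun ω => ⟨1, ?_⟩
      rintro _ ⟨n, rfl⟩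
      dsimp only
      rw [norm_smul, Real.norm_of_nonneg (hr0 n ω)]
      exact hbd n ω
  nm s hs hts := by
    obtain ⟨b, hb0, hb⟩ := ha.nm s hs (Nat.le_of_succ_le hts)
    refine ⟨b, hb0, fun n z hz => ?_⟩
    have hz' := losslessFrom_smul hmono hz (r := fun ω => (r n ω)⁻¹)
      (Measurable.inv ((hr n).mono (hmono _ _ (Nat.le_of_succ_le hts)) le_rfl))
      (fun ω => inv_nonneg.2 (hr0 n ω))
    filter_upwards [ae_all_iff.2 fun k => hb k _ hz'] with ω h
    rcases (hr0 n ω).eq_or_lt with h0 | h0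
    · rw [← h0, zero_smul, norm_zero]
      exact add_nonneg (norm_nonneg _) (hb0 ω)
    · have e : r n ω • a (τ n ω) s ω + z s ω =
          r n ω • (a (τ n ω) s ω + (r n ω)⁻¹ • z s ω) := by
        rw [smul_add, smul_inv_smul₀ h0.ne']
      rw [e, norm_smul, norm_smul, Real.norm_of_nonneg h0.le]
      have h1 := mul_le_mul_of_nonneg_left (h (τ n ω)) h0.le
      have h2 := mul_le_mul_of_nonneg_right (hr1 n ω) (hb0 ω)
      linarith

/-- If `a` is almost surely bounded and `x₀ + (n + 1) • a n` is feasible, with terminal values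
bounded below and bounded positions before `t`, then convex combinations of `a` converge to a
lossless strategy `z` starting at `t`. Closeness of the time-`t` positions to `e` survives in the
limit. -/
lemma exists_lossless_limit [IsProbabilityMeasure μ] (hle : ∀ t, 𝓕 t ≤ mΩ)
    (hcl : ∀ t < T, ∀ ω, IsClosed (D t ω)) (hcv : ∀ t < T, ∀ ω, Convex ℝ (D t ω))
    (hx₀ : ∀ t < T, ∀ᵐ ω ∂μ, x₀ t ω ∈ D t ω) {t : ℕ} (ht : t < T) {a : ℕ → ℕ → Ω → E}
    (ham : ∀ n, ∀ s < T, Measurable[𝓕 (max s t)] (a n s))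
    (hab : ∀ s < T, ∀ᵐ ω ∂μ, BddAbove (range fun n => ‖a n s ω‖))
    (hdom : ∀ n : ℕ, ∀ s < T, ∀ᵐ ω ∂μ, x₀ s ω + ((n : ℝ) + 1) • a n s ω ∈ D s ω)
    (hlow : ∀ᵐ ω ∂μ, ∃ β : ℝ, ∀ n : ℕ, -β ≤
      ((n : ℝ) + 1) * ∑ s ∈ Finset.range T, ⟪a n s ω, Δ s ω⟫)
    (hbd : ∀ s < t, ∀ᵐ ω ∂μ, ∃ C : ℝ, ∀ n : ℕ, ((n : ℝ) + 1) * ‖a n s ω‖ ≤ C)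
    {A : Set Ω} {e : E} (hA : ∀ᵐ ω ∂μ, ω ∈ A → ∀ n, ‖a n t ω - e‖ ≤ 1 / 4) :
    ∃ z ∈ LosslessFrom μ T 𝓕 D Δ t, ∀ᵐ ω ∂μ, ω ∈ A → ‖z t ω - e‖ ≤ 1 / 4 := by
  obtain ⟨u, huC, hul⟩ := exists_convex_tendsto μ T a
    (fun n s hs => (ham n s hs).mono (hle _) le_rfl) hab
  have hum : ∀ n, ∀ s < T, Measurable[𝓕 (max s t)] (u n s) := by
    intro n s hs
    have hconv : Convex ℝ {x : ℕ → Ω → E | Measurable[𝓕 (max s t)] (x s)} := by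
      intro x hx y hy α β _ _ _
      exact Measurable.add (m := 𝓕 (max s t)) (Measurable.const_smul (m := 𝓕 (max s t)) hx α)
        (Measurable.const_smul (m := 𝓕 (max s t)) hy β)
    exact convexHull_min (by rintro _ ⟨k, -, rfl⟩; exact ham k s hs) hconv (huC n)
  -- A convex constraint that holds for all `a k`, `k ≥ n`, passes to `u n`.
  have hull : ∀ (ω : Ω) (n : ℕ) (P : Set (ℕ → E)), Convex ℝ P →
      (∀ k ≥ n, (fun s => a k s ω) ∈ P) → (fun s => u n s ω) ∈ P := by
    intro ω n P hP h
    have hconv : Convex ℝ {x : ℕ → Ω → E | (fun s => x s ω) ∈ P} :=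
      fun x hx y hy α β h1 h2 h3 => hP hx hy h1 h2 h3
    exact convexHull_min (by rintro _ ⟨k, hk, rfl⟩; exact h k hk) hconv (huC n)
  have hlim : ∀ s, ∃ w : Ω → E, s < T → t ≤ s → Measurable[𝓕 s] w ∧
      ∀ᵐ ω ∂μ, Tendsto (fun n => u n s ω) atTop (𝓝 (w ω)) := by
    intro s
    by_cases h : s < T ∧ t ≤ s
    · obtain ⟨w, hw⟩ := exists_measurable_limit (hle s) (f := fun n => u n s)
        (fun n => by have := hum n s h.1; rwa [max_eq_left h.2] at this) (hul s h.1)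
      exact ⟨w, fun _ _ => hw⟩
    · exact ⟨0, fun h1 h2 => absurd ⟨h1, h2⟩ h⟩
  choose w hw using hlim
  let z : ℕ → Ω → E := fun s => if s < t then 0 else w s
  have hcast : Tendsto (fun n : ℕ => (n : ℝ) + 1) atTop atTop :=
    tendsto_atTop_add_const_right _ _ tendsto_natCast_atTop_atTop
  have hzl : ∀ s < T, ∀ᵐ ω ∂μ, Tendsto (fun n => u n s ω) atTop (𝓝 (z s ω)) := by
    intro s hs
    by_cases h : s < t
    · filter_upwards [hbd s h] with ω ⟨C, hC⟩
      simp only [z, if_pos h, Pi.zero_apply]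
      have hb : ∀ n : ℕ, ‖u n s ω‖ ≤ |C| / ((n : ℝ) + 1) := by
        intro n
        have hn : (0 : ℝ) < (n : ℝ) + 1 := by positivity
        have := hull ω n {v : ℕ → E | v s ∈ Metric.closedBall (0 : E) (|C| / ((n : ℝ) + 1))}
          (fun x hx y hy α β h1 h2 h3 => convex_closedBall _ _ hx hy h1 h2 h3)
          (fun k hk => by
            show a k s ω ∈ Metric.closedBall (0 : E) _
            rw [mem_closedBall_zero_iff, le_div_iff₀ hn, mul_comm]
            have hkn : (n : ℝ) ≤ k := by exact_mod_cast hk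
            exact (mul_le_mul_of_nonneg_right (by linarith) (norm_nonneg _)).trans
              ((hC k).trans (le_abs_self C)))
        exact mem_closedBall_zero_iff.1 this
      exact squeeze_zero_norm hb (hcast.const_div_atTop |C|)
    · simp only [z, if_neg h]
      exact (hw s hs (not_lt.1 h)).2
  refine ⟨z, ⟨⟨fun s hs => ?_, ?_, fun s hs => ?_⟩, fun s hs => if_pos hs⟩, ?_⟩
  · by_cases h : s < t
    · simp only [z, if_pos h]; exact measurable_const
    · simp only [z, if_neg h]; exact (hw s hs (not_lt.1 h)).1
  · have hz' : ∀ᵐ ω ∂μ, ∀ s ∈ Finset.range T, Tendsto (fun n => u n s ω) atTop (𝓝 (z s ω)) :=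
      (Finset.eventually_all _).2 fun s hs => hzl s (Finset.mem_range.1 hs)
    filter_upwards [hz', hlow] with ω hω ⟨β, hβ⟩
    have hb : ∀ n : ℕ, -(|β| / ((n : ℝ) + 1)) ≤ ∑ s ∈ Finset.range T, ⟪u n s ω, Δ s ω⟫ := by
      intro n
      have hn : (0 : ℝ) < (n : ℝ) + 1 := by positivity
      refine hull ω n {v : ℕ → E | -(|β| / ((n : ℝ) + 1)) ≤
        ∑ s ∈ Finset.range T, ⟪v s, Δ s ω⟫} ?_ ?_
      · intro x hx y hy α γ h1 h2 h3
        simp only [mem_ofPred_eq] at hx hy ⊢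
        have e : ∑ s ∈ Finset.range T, ⟪(α • x + γ • y) s, Δ s ω⟫ =
            α * ∑ s ∈ Finset.range T, ⟪x s, Δ s ω⟫ + γ * ∑ s ∈ Finset.range T, ⟪y s, Δ s ω⟫ := by
          rw [Finset.mul_sum, Finset.mul_sum, ← Finset.sum_add_distrib]
          refine Finset.sum_congr rfl fun s _ => ?_
          rw [Pi.add_apply, Pi.smul_apply, Pi.smul_apply, inner_add_left, real_inner_smul_left,
            real_inner_smul_left]
        rw [e]
        calc -(|β| / ((n : ℝ) + 1)) = α * -(|β| / ((n : ℝ) + 1)) + γ * -(|β| / ((n : ℝ) + 1)) := by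
              rw [← add_mul, h3, one_mul]
          _ ≤ _ := by gcongr
      · intro k hk
        show -(|β| / ((n : ℝ) + 1)) ≤ ∑ s ∈ Finset.range T, ⟪a k s ω, Δ s ω⟫
        have hkn : (n : ℝ) + 1 ≤ (k : ℝ) + 1 := by
          have : (n : ℝ) ≤ k := by exact_mod_cast hk
          linarith
        have hk0 : (0 : ℝ) < (k : ℝ) + 1 := by positivity
        have h1 : -(|β| / ((k : ℝ) + 1)) ≤ ∑ s ∈ Finset.range T, ⟪a k s ω, Δ s ω⟫ := by
          rw [← neg_div, div_le_iff₀ hk0, mul_comm]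
          exact (neg_le_neg (le_abs_self β)).trans (hβ k)
        have h2 : |β| / ((k : ℝ) + 1) ≤ |β| / ((n : ℝ) + 1) := by gcongr
        linarith
    have l1 : Tendsto (fun n => ∑ s ∈ Finset.range T, ⟪u n s ω, Δ s ω⟫) atTop
        (𝓝 (∑ s ∈ Finset.range T, ⟪z s ω, Δ s ω⟫)) :=
      tendsto_finsetSum _ fun s hs => (hω s hs).inner tendsto_const_nhds
    have l2 : Tendsto (fun n : ℕ => -(|β| / ((n : ℝ) + 1))) atTop (𝓝 0) := by
      simpa using (hcast.const_div_atTop |β|).neg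
    exact le_of_tendsto_of_tendsto' l2 l1 hb
  · filter_upwards [hzl s hs, ae_all_iff.2 fun n => hdom n s hs, hx₀ s hs] with ω hω hd h0
    refine mem_recCone_of_ray (hcl s hs ω) (hcv s hs ω) (x₀ := x₀ s ω) fun r hr => ?_
    refine (hcl s hs ω).mem_of_tendsto ((hω.const_smul r).const_add (x₀ s ω)) ?_
    filter_upwards [eventually_ge_atTop ⌈r⌉₊] with n hn
    refine hull ω n {v : ℕ → E | x₀ s ω + r • v s ∈ D s ω} ?_ ?_
    · intro x hx y hy α γ h1 h2 h3
      have := hcv s hs ω hx hy h1 h2 h3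
      show x₀ s ω + r • (α • x s + γ • y s) ∈ D s ω
      convert this using 1
      have e : x₀ s ω = (α + γ) • x₀ s ω := by rw [h3, one_smul]
      nth_rewrite 1 [e]
      module
    · intro k hk
      show x₀ s ω + r • a k s ω ∈ D s ω
      have hk0 : (0 : ℝ) < (k : ℝ) + 1 := by positivity
      have hrk : r ≤ (k : ℝ) + 1 := by
        have h1 : (n : ℝ) ≤ k := by exact_mod_cast hk
        have h2 : (⌈r⌉₊ : ℝ) ≤ n := by exact_mod_cast hn
        linarith [Nat.le_ceil r]
      have hq : r / ((k : ℝ) + 1) ≤ 1 := (div_le_one hk0).2 hrk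
      have := hcv s hs ω h0 (hd k) (sub_nonneg.2 hq) (div_nonneg hr hk0.le) (by ring)
      convert this using 1
      have e : r • a k s ω = (r / ((k : ℝ) + 1)) • ((k : ℝ) + 1) • a k s ω := by
        rw [smul_smul, div_mul_cancel₀ _ hk0.ne']
      rw [e]
      module
  · filter_upwards [hzl t ht, hA] with ω hω hAω hmem
    have hb : ∀ n, ‖u n t ω - e‖ ≤ 1 / 4 := fun n => by
      have := hull ω n {v : ℕ → E | v t ∈ Metric.closedBall e (1 / 4)}
        (fun x hx y hy α β h1 h2 h3 => convex_closedBall _ _ hx hy h1 h2 h3)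
        (fun k _ => by
          show a k t ω ∈ Metric.closedBall e (1 / 4)
          rw [mem_closedBall_iff_norm]; exact hAω hmem k)
      exact mem_closedBall_iff_norm.1 this
    exact le_of_tendsto' (hω.sub_const e).norm hb

/-- The positions of a near-minimal sequence are almost surely bounded. Otherwise, normalising at
the first time `t` of unboundedness produces a lossless strategy starting at `t` which points in
nearly the same direction as some arbitrarily large positions `a k t`; subtracting a multiple of
it shortens them by half, against near-minimality. -/
lemma NearMinSeq.bddAbove [IsProbabilityMeasure μ] (hle : ∀ t, 𝓕 t ≤ mΩ)
    (hmono : ∀ s t, s ≤ t → 𝓕 s ≤ 𝓕 t)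
    (hcl : ∀ t < T, ∀ ω, IsClosed (D t ω)) (hcv : ∀ t < T, ∀ ω, Convex ℝ (D t ω))
    (hx₀ : ∀ t < T, ∀ᵐ ω ∂μ, x₀ t ω ∈ D t ω) {S : Submodule ℝ (ℕ → Ω → E)}
    (hS : Lossless μ T 𝓕 D Δ = ↑S) (d : ℕ) :
    ∀ t, t + d = T → ∀ a, NearMinSeq μ T 𝓕 D Δ x₀ t a →
      ∀ s < T, ∀ᵐ ω ∂μ, BddAbove (range fun k => ‖a k s ω‖) := by
  induction d with
  | zero => exact fun t ht a ha s hs => ha.bdd s (by omega) hs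
  | succ d ih =>
    intro t htd a ha
    have ht : t < T := by omega
    suffices hbt : ∀ᵐ ω ∂μ, BddAbove (range fun k => ‖a k t ω‖) by
      refine ih (t + 1) (by omega) a ⟨fun k s hs => ?_, ha.dom, ha.low, fun s hs hsT => ?_,
        fun s hs h => ha.nm s hs (Nat.le_of_succ_le h)⟩
      · exact (ha.meas k s hs).mono (hmono _ _ (max_le_max le_rfl t.le_succ)) le_rfl
      · rcases Nat.lt_succ_iff_lt_or_eq.1 hs with h | rfl
        exacts [ha.bdd s h hsT, hbt]
    have hmt : ∀ k, Measurable[𝓕 t] (a k t) := fun k => by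
      have := ha.meas k t ht; rwa [max_self] at this
    obtain ⟨F, -, hFf, hFc⟩ := (isCompact_sphere (0 : E) 1).finite_cover_balls
      (show (0 : ℝ) < 1 / 4 by norm_num)
    let B : E → ℕ → ℕ → Set Ω := fun e n k =>
      {ω | (n : ℝ) + 1 < ‖a k t ω‖ ∧ ‖‖a k t ω‖⁻¹ • a k t ω - e‖ < 1 / 4}
    let A : E → Set Ω := fun e => ⋂ n, ⋃ k, B e n k
    have hB : ∀ e n k, MeasurableSet[𝓕 t] (B e n k) := by
      intro e n k
      have hn : Measurable[𝓕 t] fun ω => ‖a k t ω‖ := measurable_norm.comp (hmt k)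
      have h2 : Measurable[𝓕 t] fun ω => ‖‖a k t ω‖⁻¹ • a k t ω - e‖ :=
        measurable_norm.comp (Measurable.sub_const (m := 𝓕 t)
          (Measurable.smul (Measurable.inv hn) (hmt k)) e)
      exact MeasurableSet.inter (m := 𝓕 t) (measurableSet_lt measurable_const hn)
        (measurableSet_lt h2 measurable_const)
    have hAm : ∀ e, MeasurableSet[𝓕 t] (A e) := fun e =>
      MeasurableSet.iInter fun n => MeasurableSet.iUnion fun k => hB e n k
    -- Pigeonhole: unboundedness occurs along one of finitely many directions.
    have hcover : {ω | ¬ BddAbove (range fun k => ‖a k t ω‖)} ⊆ ⋃ e ∈ F, A e := by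
      intro ω hω
      by_contra hcon
      simp only [A, mem_iUnion, mem_iInter, not_exists, not_forall] at hcon
      have hcon' : ∀ e : E, ∃ n : ℕ, e ∈ F → ∀ k, ω ∉ B e n k := fun e => by
        by_cases he : e ∈ F
        · obtain ⟨n, hn⟩ := hcon e he
          exact ⟨n, fun _ => hn⟩
        · exact ⟨0, fun h => absurd h he⟩
      choose N hN using hcon'
      refine hω ⟨∑ e ∈ hFf.toFinset, ((N e : ℝ) + 1), ?_⟩
      rintro _ ⟨k, rfl⟩
      by_contra hk
      rw [not_le] at hk
      have hnn : ∀ e ∈ hFf.toFinset, (0 : ℝ) ≤ (N e : ℝ) + 1 := fun e _ => by positivity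
      have hpos : 0 < ‖a k t ω‖ := (Finset.sum_nonneg hnn).trans_lt hk
      have hsph : ‖a k t ω‖⁻¹ • a k t ω ∈ Metric.sphere (0 : E) 1 := by
        rw [mem_sphere_zero_iff_norm, norm_smul, norm_inv, norm_norm, inv_mul_cancel₀ hpos.ne']
      obtain ⟨e, he, hball⟩ := mem_iUnion₂.1 (hFc hsph)
      refine hN e he k ⟨?_, mem_ball_iff_norm.1 hball⟩
      exact (Finset.single_le_sum hnn (hFf.mem_toFinset.2 he)).trans_lt hk
    suffices hA0 : ∀ e ∈ F, μ (A e) = 0 by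
      exact measure_mono_null hcover ((measure_biUnion_null_iff hFf.countable).2 hA0)
    intro e _
    have hτ : ∀ n, ∃ κ : Ω → ℕ, Measurable[𝓕 t] κ ∧ ∀ ω ∈ A e, ω ∈ B e n (κ ω) := by
      intro n
      obtain ⟨κ, hκ, hκB⟩ := @exists_measurable_index Ω (𝓕 t) (B e n) (hB e n)
      exact ⟨κ, hκ, fun ω hω => hκB ω (mem_iUnion.1 (mem_iInter.1 hω n))⟩
    choose τ hτ hτB using hτ
    have hbig : ∀ n : ℕ, ∀ ω ∈ A e, (n : ℝ) + 1 < ‖a (τ n ω) t ω‖ := fun n ω hω => (hτB n ω hω).1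
    let r : ℕ → Ω → ℝ := fun n => (A e).indicator fun ω => ‖a (τ n ω) t ω‖⁻¹
    have hrA : ∀ n, ∀ ω ∈ A e, r n ω = ‖a (τ n ω) t ω‖⁻¹ := fun n ω hω => indicator_of_mem hω _
    have hrA' : ∀ n, ∀ ω ∉ A e, r n ω = 0 := fun n ω hω => indicator_of_notMem hω _
    have hr : ∀ n, Measurable[𝓕 t] (r n) := fun n =>
      Measurable.indicator (Measurable.inv (measurable_norm.comp
        (measurable_glue (m := 𝓕 t) hmt (hτ n)))) (hAm e)
    have hr0 : ∀ n ω, 0 ≤ r n ω := fun n ω =>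
      indicator_nonneg (fun ω _ => inv_nonneg.2 (norm_nonneg _)) ω
    have hrn : ∀ (n : ℕ) ω, ((n : ℝ) + 1) * r n ω ≤ 1 := by
      intro n ω
      have hn : (0 : ℝ) < (n : ℝ) + 1 := by positivity
      by_cases hω : ω ∈ A e
      · rw [hrA n ω hω, ← div_eq_mul_inv]
        exact (div_le_one (hn.trans (hbig n ω hω))).2 (hbig n ω hω).le
      · rw [hrA' n ω hω, mul_zero]; exact zero_le_one
    have hr1 : ∀ n ω, r n ω ≤ 1 := fun n ω => by
      have h1 := mul_nonneg (Nat.cast_nonneg n : (0 : ℝ) ≤ n) (hr0 n ω)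
      linarith [hrn n ω]
    have hra : ∀ n ω, r n ω * ‖a (τ n ω) t ω‖ ≤ 1 := by
      intro n ω
      by_cases hω : ω ∈ A e
      · rw [hrA n ω hω]; exact inv_mul_le_one
      · rw [hrA' n ω hω, zero_mul]; exact zero_le_one
    have hseq := ha.rescale hmono hcv hx₀ hτ hr hr0 hr1 hra
    have h_meas : ∀ n, ∀ s < T, Measurable[𝓕 (max s t)] (fun ω => r n ω • a (τ n ω) s ω) := by
      intro n s hs
      have ht' : 𝓕 t ≤ 𝓕 (max s t) := hmono _ _ (le_max_right _ _)
      exact Measurable.smul ((hr n).mono ht' le_rfl) (measurable_glue (m := 𝓕 (max s t))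
        (fun k => ha.meas k s hs) ((hτ n).mono ht' le_rfl))
    have h_dom : ∀ n : ℕ, ∀ s < T, ∀ᵐ ω ∂μ,
        x₀ s ω + ((n : ℝ) + 1) • r n ω • a (τ n ω) s ω ∈ D s ω := by
      intro n s hs
      filter_upwards [ae_all_iff.2 fun k => ha.dom k s hs, hx₀ s hs] with ω h h0
      have hn : (0 : ℝ) ≤ (n : ℝ) + 1 := by positivity
      have := hcv s hs ω h0 (h (τ n ω)) (sub_nonneg.2 (hrn n ω)) (mul_nonneg hn (hr0 n ω))
        (by ring)
      convert this using 1
      module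
    have h_low : ∀ᵐ ω ∂μ, ∃ β : ℝ, ∀ n : ℕ, -β ≤
        ((n : ℝ) + 1) * ∑ s ∈ Finset.range T, ⟪r n ω • a (τ n ω) s ω, Δ s ω⟫ := by
      filter_upwards [ha.low] with ω ⟨β, hβ⟩
      refine ⟨|β|, fun n => ?_⟩
      have e1 : ∑ s ∈ Finset.range T, ⟪r n ω • a (τ n ω) s ω, Δ s ω⟫ =
          r n ω * ∑ s ∈ Finset.range T, ⟪a (τ n ω) s ω, Δ s ω⟫ := by
        rw [Finset.mul_sum]
        exact Finset.sum_congr rfl fun s _ => real_inner_smul_left _ _ _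
      have hn : (0 : ℝ) ≤ ((n : ℝ) + 1) * r n ω := mul_nonneg (by positivity) (hr0 n ω)
      rw [e1, ← mul_assoc]
      have h1 := mul_le_mul_of_nonneg_left (hβ (τ n ω)) hn
      have h2 := mul_le_mul_of_nonneg_left (le_abs_self β) hn
      have h3 := mul_le_mul_of_nonneg_right (hrn n ω) (abs_nonneg β)
      linarith
    have h_bd : ∀ s < t, ∀ᵐ ω ∂μ, ∃ C : ℝ, ∀ n : ℕ,
        ((n : ℝ) + 1) * ‖r n ω • a (τ n ω) s ω‖ ≤ C := by
      intro s hs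
      filter_upwards [ha.bdd s hs (hs.trans ht)] with ω ⟨C, hC⟩
      refine ⟨C, fun n => ?_⟩
      rw [norm_smul, Real.norm_of_nonneg (hr0 n ω), ← mul_assoc]
      exact (mul_le_of_le_one_left (norm_nonneg _) (hrn n ω)).trans (hC ⟨τ n ω, rfl⟩)
    have h_dir : ∀ ω ∈ A e, ∀ n, ‖r n ω • a (τ n ω) t ω - e‖ ≤ 1 / 4 := by
      intro ω hω n
      rw [hrA n ω hω]
      exact (hτB n ω hω).2.le
    obtain ⟨z, hz, hzA⟩ := exists_lossless_limit (Δ := Δ) hle hcl hcv hx₀ ht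
      (a := fun n s ω => r n ω • a (τ n ω) s ω) (A := A e) (e := e) h_meas
      (ih (t + 1) (by omega) _ hseq) h_dom h_low h_bd (Eventually.of_forall h_dir)
    obtain ⟨b, -, hb⟩ := ha.nm t ht le_rfl
    -- Near-minimality against the rescaled negative of `z`.
    have hnm : ∀ n, ∀ᵐ ω ∂μ, ∀ k, ‖a k t ω‖ ≤ ‖a k t ω + (r n ω)⁻¹ • (-z) t ω‖ + b ω := fun n =>
      ae_all_iff.2 fun k => hb k _ (losslessFrom_smul hmono (losslessFrom_neg hS hz)
        (r := fun ω => (r n ω)⁻¹) (Measurable.inv (hr n)) (fun ω => inv_nonneg.2 (hr0 n ω)))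
    have hnot : ∀ᵐ ω ∂μ, ω ∉ A e := by
      filter_upwards [ae_all_iff.2 hnm, hzA] with ω h1 h2 hω
      have h2b : ∀ n : ℕ, (n : ℝ) + 1 < 2 * b ω := by
        intro n
        have hn : (0 : ℝ) < (n : ℝ) + 1 := by positivity
        have hpos := hn.trans (hbig n ω hω)
        have h3 := h1 n (τ n ω)
        rw [hrA n ω hω, inv_inv] at h3
        have h4 : ‖‖a (τ n ω) t ω‖⁻¹ • a (τ n ω) t ω - z t ω‖ ≤ 1 / 2 := by
          have h5 := norm_sub_le_norm_sub_add_norm_sub (‖a (τ n ω) t ω‖⁻¹ • a (τ n ω) t ω) e (z t ω)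
          have h6 := h2 hω
          rw [norm_sub_rev] at h6
          linarith [(hτB n ω hω).2]
        have h5 : a (τ n ω) t ω + ‖a (τ n ω) t ω‖ • (-z) t ω =
            ‖a (τ n ω) t ω‖ • (‖a (τ n ω) t ω‖⁻¹ • a (τ n ω) t ω - z t ω) := by
          rw [smul_sub, smul_inv_smul₀ hpos.ne', Pi.neg_apply, Pi.neg_apply, smul_neg,
            sub_eq_add_neg]
        rw [h5, norm_smul, norm_norm] at h3
        have h6 := mul_le_mul_of_nonneg_left h4 hpos.le
        linarith [hbig n ω hω]
      obtain ⟨n, hn⟩ := exists_nat_gt (2 * b ω)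
      linarith [h2b n]
    exact measure_eq_zero_iff_ae_notMem.2 hnot

end Bounded

/-! ### Strategies of finite cost -/

section Cost

open Set Filter Topology

lemma eInt_eq_integral {mΩ : MeasurableSpace Ω} {μ : Measure Ω} {ξ : Ω → EReal} {v : Ω → ℝ}
    (hv : Integrable v μ) (h : ∀ᵐ ω ∂μ, ξ ω = (v ω : EReal)) :
    EInt μ ξ = ((∫ ω, v ω ∂μ : ℝ) : EReal) := by
  have e1 : ∫⁻ ω, ePos (ξ ω) ∂μ = ∫⁻ ω, ENNReal.ofReal (v ω) ∂μ := by
    refine lintegral_congr_ae ?_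
    filter_upwards [h] with ω hω
    simp [ePos, hω]
  have e2 : ∫⁻ ω, ePos (-(ξ ω)) ∂μ = ∫⁻ ω, ENNReal.ofReal (-v ω) ∂μ := by
    refine lintegral_congr_ae ?_
    filter_upwards [h] with ω hω
    rw [hω, ← EReal.coe_neg]
    simp only [ePos, EReal.coe_ne_top, if_false, EReal.toReal_coe]
  have f1 : ∫⁻ ω, ENNReal.ofReal (v ω) ∂μ ≠ ⊤ := ((lintegral_ofReal_le_lintegral_enorm v).trans_lt hv.2).ne
  have f2 : ∫⁻ ω, ENNReal.ofReal (-v ω) ∂μ ≠ ⊤ := ((lintegral_ofReal_le_lintegral_enorm fun ω => -v ω).trans_lt hv.neg.2).ne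
  rw [EInt, e1, e2, if_neg f1, integral_eq_lintegral_pos_part_sub_lintegral_neg_part hv,
    EReal.coe_sub, EReal.coe_ennreal_toReal f1, EReal.coe_ennreal_toReal f2]

/-- A random variable which is never `-∞` and whose extended integral is not `+∞` is almost
surely real, with an integrable positive part. -/
lemma integrable_pos_of_eInt_ne_top {mΩ : MeasurableSpace Ω} {μ : Measure Ω} {ξ : Ω → EReal}
    (hξ : Measurable ξ) (hb : ∀ ω, ξ ω ≠ ⊥) (h : EInt μ ξ ≠ ⊤) :
    (∀ᵐ ω ∂μ, ξ ω = ((ξ ω).toReal : EReal)) ∧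
      Integrable (fun ω => max (ξ ω).toReal 0) μ := by
  have hfin : ∫⁻ ω, ePos (ξ ω) ∂μ ≠ ⊤ := fun h' => h (by rw [EInt, if_pos h'])
  have hm : Measurable fun ω => ePos (ξ ω) :=
    Measurable.ite (hξ (measurableSet_singleton ⊤)) measurable_const hξ.ereal_toReal.ennreal_ofReal
  constructor
  · filter_upwards [ae_lt_top hm hfin] with ω hω
    refine (EReal.coe_toReal (fun h' => ?_) (hb ω)).symm
    simp [ePos, h'] at hω
  · refine ⟨(hξ.ereal_toReal.max measurable_const).aestronglyMeasurable, ?_⟩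
    rw [hasFiniteIntegral_iff_ofReal (f := fun ω => max (ξ ω).toReal 0)
      (Eventually.of_forall fun ω => le_max_right _ _)]
    refine lt_of_le_of_lt (lintegral_mono fun ω => ?_) hfin.lt_top
    by_cases h' : ξ ω = ⊤
    · simp [ePos, h']
    · rw [ENNReal.ofReal_max, ENNReal.ofReal_zero, max_eq_left zero_le, ePos, if_neg h']

variable {E : Type*} [NormedAddCommGroup E] [InnerProductSpace ℝ E]

/-- The terminal value of the strategy `x` for the price increments `Δ`. -/
def gain (T : ℕ) (Δ x : ℕ → Ω → E) (ω : Ω) : ℝ := ∑ t ∈ Finset.range T, ⟪x t ω, Δ t ω⟫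

lemma gain_add (T : ℕ) (Δ x z : ℕ → Ω → E) (ω : Ω) :
    gain T Δ (x + z) ω = gain T Δ x ω + gain T Δ z ω := by
  simp only [gain, Pi.add_apply, inner_add_left, Finset.sum_add_distrib]

lemma gain_smul (T : ℕ) (Δ x : ℕ → Ω → E) (α : ℝ) (ω : Ω) :
    gain T Δ (α • x) ω = α * gain T Δ x ω := by
  simp only [gain, Pi.smul_apply, real_inner_smul_left, Finset.mul_sum]

lemma gain_sub (T : ℕ) (Δ x z : ℕ → Ω → E) (ω : Ω) :
    gain T Δ (x - z) ω = gain T Δ x ω - gain T Δ z ω := by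
  simp only [gain, Pi.sub_apply, inner_sub_left, Finset.sum_sub_distrib]

lemma cost_comb_le {T : ℕ} {Δ : ℕ → Ω → E} {c : Ω → ℝ} {V : ℝ → Ω → EReal}
    (hVc : ConvexIntegrand V) {x z : ℕ → Ω → E} {ω : Ω} {p q : ℝ}
    (hp : V (c ω - gain T Δ x ω) ω ≤ (p : EReal)) (hq : V (c ω - gain T Δ z ω) ω ≤ (q : EReal))
    {α β : ℝ} (hα : 0 ≤ α) (hβ : 0 ≤ β) (hαβ : α + β = 1) :
    V (c ω - gain T Δ (α • x + β • z) ω) ω ≤ ((α * p + β * q : ℝ) : EReal) := by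
  have e : c ω - gain T Δ (α • x + β • z) ω =
      α • (c ω - gain T Δ x ω) + β • (c ω - gain T Δ z ω) := by
    rw [gain_add, gain_smul, gain_smul, smul_eq_mul, smul_eq_mul]
    linear_combination (-c ω) * hαβ
  rw [e, EReal.coe_add, EReal.coe_mul, EReal.coe_mul]
  refine (hVc ω _ _ α β hα hβ hαβ).trans (add_le_add ?_ ?_)
  · exact mul_le_mul_of_nonneg_left hp (EReal.coe_nonneg.2 hα)
  · exact mul_le_mul_of_nonneg_left hq (EReal.coe_nonneg.2 hβ)

variable [FiniteDimensional ℝ E] [MeasurableSpace E] [BorelSpace E] {mΩ : MeasurableSpace Ω}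

/-- The adapted strategies that satisfy the portfolio constraints. -/
def Feasible (μ : Measure Ω) (T : ℕ) (𝓕 : ℕ → MeasurableSpace Ω) (D : ℕ → Ω → Set E)
    (x : ℕ → Ω → E) : Prop :=
  (∀ t < T, Measurable[𝓕 t] (x t)) ∧ ∀ t < T, ∀ᵐ ω ∂μ, x t ω ∈ D t ω

/-- The feasible strategies whose shortfall cost is almost surely real and integrable, with
expectation at most `b`. -/
def CostLE (μ : Measure Ω) (T : ℕ) (𝓕 : ℕ → MeasurableSpace Ω) (D : ℕ → Ω → Set E)
    (Δ : ℕ → Ω → E) (c : Ω → ℝ) (V : ℝ → Ω → EReal) (b : ℝ) (x : ℕ → Ω → E) : Prop :=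
  Feasible μ T 𝓕 D x ∧ ∃ v : Ω → ℝ, Integrable v μ ∧
    (∀ᵐ ω ∂μ, V (c ω - gain T Δ x ω) ω = (v ω : EReal)) ∧ ∫ ω, v ω ∂μ ≤ b

/-- The dual bounds on feasible strategies provided by the conjugate and the support functions.
Here `η` is the martingale difference part of `y • Δ`, so that `gain T η x` has mean zero as soon
as its negative part is integrable, and `m` collects the integrable error terms. -/
structure DualBound (μ : Measure Ω) (T : ℕ) (𝓕 : ℕ → MeasurableSpace Ω) (D : ℕ → Ω → Set E)
    (Δ : ℕ → Ω → E) (c : Ω → ℝ) (V : ℝ → Ω → EReal) (η : ℕ → Ω → E) (y m : Ω → ℝ) (ε : ℝ) :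
    Prop where
  pos : 0 < ε
  int_η : ∀ t < T, Integrable (η t) μ
  mart : ∀ t < T, μ[η t|𝓕 t] =ᵐ[μ] 0
  int_m : Integrable m μ
  bound : ∀ x, Feasible μ T 𝓕 D x → ∀ᵐ ω ∂μ,
    -|y ω * gain T Δ x ω| - m ω ≤ gain T η x ω ∧
    ∀ v : ℝ, V (c ω - gain T Δ x ω) ω = (v : EReal) →
      -m ω ≤ v + gain T η x ω ∧ ε * |y ω * gain T Δ x ω| ≤ v + gain T η x ω + m ω

variable {μ : Measure Ω} {T : ℕ} {𝓕 : ℕ → MeasurableSpace Ω} {D : ℕ → Ω → Set E}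
  {Δ η : ℕ → Ω → E} {c y m : Ω → ℝ} {V : ℝ → Ω → EReal} {ε : ℝ}

lemma measurable_gain (hle : ∀ t, 𝓕 t ≤ mΩ) (hΔ : ∀ t < T, Measurable (Δ t)) {x : ℕ → Ω → E}
    (hx : Feasible μ T 𝓕 D x) : Measurable (gain T Δ x) :=
  Finset.measurable_sum _ fun t ht =>
    ((hx.1 t (Finset.mem_range.1 ht)).mono (hle t) le_rfl).inner (hΔ t (Finset.mem_range.1 ht))

lemma measurable_cost (hle : ∀ t, 𝓕 t ≤ mΩ) (hΔ : ∀ t < T, Measurable (Δ t))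
    (hc : Measurable c) (hV : IsNormalIntegrand mΩ V) {x : ℕ → Ω → E}
    (hx : Feasible μ T 𝓕 D x) : Measurable fun ω => V (c ω - gain T Δ x ω) ω :=
  hV.1.comp ((hc.sub (measurable_gain hle hΔ hx)).prodMk measurable_id)

lemma Feasible.comb (hcv : ∀ t < T, ∀ ω, Convex ℝ (D t ω)) {x z : ℕ → Ω → E}
    (hx : Feasible μ T 𝓕 D x) (hz : Feasible μ T 𝓕 D z) {α β : ℝ} (hα : 0 ≤ α) (hβ : 0 ≤ β)
    (hαβ : α + β = 1) : Feasible μ T 𝓕 D (α • x + β • z) := by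
  refine ⟨fun t ht => ?_, fun t ht => ?_⟩
  · exact Measurable.add (m := 𝓕 t) (Measurable.const_smul (m := 𝓕 t) (hx.1 t ht) α)
      (Measurable.const_smul (m := 𝓕 t) (hz.1 t ht) β)
  · filter_upwards [hx.2 t ht, hz.2 t ht] with ω h1 h2
    exact hcv t ht ω h1 h2 hα hβ hαβ

lemma DualBound.integrable_gain [IsProbabilityMeasure μ] (hle : ∀ t, 𝓕 t ≤ mΩ)
    (hmono : ∀ s t, s ≤ t → 𝓕 s ≤ 𝓕 t) (h : DualBound μ T 𝓕 D Δ c V η y m ε)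
    {x : ℕ → Ω → E} (hx : Feasible μ T 𝓕 D x) {g : Ω → ℝ} (hg : Integrable g μ)
    (hgx : ∀ᵐ ω ∂μ, -g ω ≤ gain T η x ω) :
    Integrable (gain T η x) μ ∧ ∫ ω, gain T η x ω ∂μ = 0 :=
  integral_transform_eq_zero μ 𝓕 hle hmono T x η hx.1 h.int_η h.mart g hg hgx

/-- If the shortfall cost of a feasible strategy is bounded above by an integrable random variable,
then the cost itself and the martingale transform are integrable, and the latter has mean zero. -/
lemma DualBound.integrable_of_pos [IsProbabilityMeasure μ] (hle : ∀ t, 𝓕 t ≤ mΩ)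
    (hmono : ∀ s t, s ≤ t → 𝓕 s ≤ 𝓕 t) (h : DualBound μ T 𝓕 D Δ c V η y m ε)
    {x : ℕ → Ω → E} (hx : Feasible μ T 𝓕 D x) {v w : Ω → ℝ} (hvm : AEStronglyMeasurable v μ)
    (hv : ∀ᵐ ω ∂μ, V (c ω - gain T Δ x ω) ω = (v ω : EReal)) (hw : Integrable w μ)
    (hvw : ∀ᵐ ω ∂μ, v ω ≤ w ω) :
    Integrable v μ ∧ Integrable (gain T η x) μ ∧ ∫ ω, gain T η x ω ∂μ = 0 := by
  have hM := h.integrable_gain hle hmono hx (g := fun ω => m ω + w ω) (h.int_m.add hw) (by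
    filter_upwards [h.bound x hx, hv, hvw] with ω h1 h2 h3
    linarith [(h1.2 _ h2).1])
  refine ⟨?_, hM⟩
  refine Integrable.mono' ((hw.abs.add h.int_m.abs).add hM.1.abs) hvm ?_
  filter_upwards [h.bound x hx, hv, hvw] with ω h1 h2 h3
  have h4 := (h1.2 _ h2).1
  simp only [Pi.add_apply]
  rw [Real.norm_eq_abs, abs_le]
  constructor <;> linarith [le_abs_self (w ω), le_abs_self (m ω), le_abs_self (gain T η x ω),
    abs_nonneg (w ω), abs_nonneg (m ω), abs_nonneg (gain T η x ω)]

lemma DualBound.costLE_of_eInt [IsProbabilityMeasure μ] (hle : ∀ t, 𝓕 t ≤ mΩ)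
    (hmono : ∀ s t, s ≤ t → 𝓕 s ≤ 𝓕 t) (h : DualBound μ T 𝓕 D Δ c V η y m ε)
    (hΔ : ∀ t < T, Measurable (Δ t)) (hc : Measurable c) (hV : IsNormalIntegrand mΩ V)
    {x : ℕ → Ω → E} (hx : Feasible μ T 𝓕 D x)
    (hE : EInt μ (fun ω => V (c ω - gain T Δ x ω) ω) ≠ ⊤) :
    ∃ b : ℝ, CostLE μ T 𝓕 D Δ c V b x ∧
      EInt μ (fun ω => V (c ω - gain T Δ x ω) ω) = (b : EReal) := by
  have hm := measurable_cost hle hΔ hc hV hx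
  obtain ⟨h1, h2⟩ := integrable_pos_of_eInt_ne_top hm (fun ω => hV.2.2 _ ω) hE
  have h3 := (h.integrable_of_pos hle hmono hx hm.ereal_toReal.aestronglyMeasurable h1 h2
    (Eventually.of_forall fun ω => le_max_left _ _)).1
  exact ⟨_, ⟨hx, _, h3, h1, le_rfl⟩, eInt_eq_integral h3 h1⟩

lemma DualBound.convex_costLE [IsProbabilityMeasure μ] (hle : ∀ t, 𝓕 t ≤ mΩ)
    (hmono : ∀ s t, s ≤ t → 𝓕 s ≤ 𝓕 t) (h : DualBound μ T 𝓕 D Δ c V η y m ε)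
    (hΔ : ∀ t < T, Measurable (Δ t)) (hc : Measurable c) (hV : IsNormalIntegrand mΩ V)
    (hVc : ConvexIntegrand V) (hcv : ∀ t < T, ∀ ω, Convex ℝ (D t ω)) (b : ℝ) :
    Convex ℝ {x | CostLE μ T 𝓕 D Δ c V b x} := by
  rintro x ⟨hx, p, hp, hpV, hpb⟩ z ⟨hz, q, hq, hqV, hqb⟩ α β hα hβ hαβ
  have hxz := hx.comb hcv hz hα hβ hαβ
  have hm := measurable_cost hle hΔ hc hV hxz
  have hle' : ∀ᵐ ω ∂μ, V (c ω - gain T Δ (α • x + β • z) ω) ω ≤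
      ((α * p ω + β * q ω : ℝ) : EReal) := by
    filter_upwards [hpV, hqV] with ω h1 h2
    exact cost_comb_le hVc h1.le h2.le hα hβ hαβ
  have hreal : ∀ᵐ ω ∂μ, V (c ω - gain T Δ (α • x + β • z) ω) ω =
      ((V (c ω - gain T Δ (α • x + β • z) ω) ω).toReal : EReal) := by
    filter_upwards [hle'] with ω h1
    exact (EReal.coe_toReal (h1.trans_lt (EReal.coe_lt_top _)).ne (hV.2.2 _ ω)).symm
  have hle'' : ∀ᵐ ω ∂μ, (V (c ω - gain T Δ (α • x + β • z) ω) ω).toReal ≤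
      α * p ω + β * q ω := by
    filter_upwards [hle', hreal] with ω h1 h2
    rw [h2] at h1
    exact EReal.coe_le_coe_iff.1 h1
  have hw : Integrable (fun ω => α * p ω + β * q ω) μ := (hp.const_mul α).add (hq.const_mul β)
  have hI := (h.integrable_of_pos hle hmono hxz hm.ereal_toReal.aestronglyMeasurable hreal hw
    hle'').1
  refine ⟨hxz, _, hI, hreal, (integral_mono_ae hI hw hle'').trans ?_⟩
  rw [integral_add (hp.const_mul α) (hq.const_mul β), integral_const_mul, integral_const_mul]
  calc α * ∫ ω, p ω ∂μ + β * ∫ ω, q ω ∂μ ≤ α * b + β * b := by gcongr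
    _ = b := by rw [← add_mul, hαβ, one_mul]

/-- The integrand `V(c - gain) + gain T η x + m` is nonnegative and its integral is controlled by
the cost. -/
lemma DualBound.integral_le [IsProbabilityMeasure μ] (hle : ∀ t, 𝓕 t ≤ mΩ)
    (hmono : ∀ s t, s ≤ t → 𝓕 s ≤ 𝓕 t) (h : DualBound μ T 𝓕 D Δ c V η y m ε) {b : ℝ}
    {x : ℕ → Ω → E} (hx : CostLE μ T 𝓕 D Δ c V b x) :
    ∃ v : Ω → ℝ, (∀ᵐ ω ∂μ, V (c ω - gain T Δ x ω) ω = (v ω : EReal)) ∧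
      Integrable (fun ω => v ω + gain T η x ω + m ω) μ ∧
      (∀ᵐ ω ∂μ, 0 ≤ v ω + gain T η x ω + m ω) ∧
      ∫ ω, (v ω + gain T η x ω + m ω) ∂μ ≤ b + ∫ ω, m ω ∂μ := by
  obtain ⟨hf, v, hv, hvV, hvb⟩ := hx
  obtain ⟨-, hM, hM0⟩ := h.integrable_of_pos hle hmono hf hv.aestronglyMeasurable hvV hv
    (Eventually.of_forall fun _ => le_rfl)
  refine ⟨v, hvV, (hv.add hM).add h.int_m, ?_, ?_⟩
  · filter_upwards [h.bound x hf, hvV] with ω h1 h2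
    linarith [(h1.2 _ h2).1]
  · have e1 : ∫ ω, (v ω + gain T η x ω + m ω) ∂μ =
        ∫ ω, (v ω + gain T η x ω) ∂μ + ∫ ω, m ω ∂μ := integral_add (hv.add hM) h.int_m
    rw [e1, integral_add hv hM, hM0]
    linarith

end Cost
/-! ### Attainment of the infimum -/

section Attain

open Set Filter Topology

/-- A nonconstant convex function on the line is unbounded above. -/
lemma exists_lt_of_convex {φ : ℝ → EReal} (hbot : ∀ u, φ u ≠ ⊥) (hconv : ConvexEFn φ)
    (hnc : ∃ u u' : ℝ, φ u ≠ φ u') (K : ℝ) : ∃ u, (K : EReal) < φ u := by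
  obtain ⟨u, u', hlt⟩ : ∃ u u' : ℝ, φ u < φ u' := by
    obtain ⟨u, u', h⟩ := hnc
    rcases h.lt_or_gt with h | h
    exacts [⟨u, u', h⟩, ⟨u', u, h⟩]
  by_contra! hK
  have hreal : ∀ q, φ q = ((φ q).toReal : EReal) := fun q =>
    (EReal.coe_toReal ((hK q).trans_lt (EReal.coe_lt_top K)).ne (hbot q)).symm
  have hle : ∀ q, (φ q).toReal ≤ K := fun q => by
    have := hK q
    rw [hreal q] at this
    exact EReal.coe_le_coe_iff.1 this
  have hd : (φ u).toReal < (φ u').toReal := by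
    rw [hreal u, hreal u'] at hlt
    exact EReal.coe_lt_coe_iff.1 hlt
  -- Along the ray through `u` and `u'` the function grows at least linearly.
  have hgrow : ∀ n : ℕ, ((n : ℝ) + 1) * ((φ u').toReal - (φ u).toReal) ≤ K - (φ u).toReal := by
    intro n
    have hn : (0 : ℝ) < (n : ℝ) + 1 := by positivity
    have hn1 : 1 / ((n : ℝ) + 1) ≤ 1 := by
      rw [div_le_one hn]; linarith [(Nat.cast_nonneg n : (0 : ℝ) ≤ n)]
    have h1 := hconv u (u + ((n : ℝ) + 1) * (u' - u)) (1 - 1 / ((n : ℝ) + 1)) (1 / ((n : ℝ) + 1))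
      (sub_nonneg.2 hn1) (by positivity) (by ring)
    have e : (1 - 1 / ((n : ℝ) + 1)) • u + (1 / ((n : ℝ) + 1)) • (u + ((n : ℝ) + 1) * (u' - u)) =
        u' := by
      simp only [smul_eq_mul]
      field_simp
      ring
    rw [e, hreal u, hreal u', hreal (u + _), ← EReal.coe_mul, ← EReal.coe_mul, ← EReal.coe_add,
      EReal.coe_le_coe_iff] at h1
    have h2 := mul_le_mul_of_nonneg_left (hle (u + ((n : ℝ) + 1) * (u' - u)))
      (by positivity : (0 : ℝ) ≤ 1 / ((n : ℝ) + 1))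
    have h3 : (φ u').toReal - (φ u).toReal ≤ 1 / ((n : ℝ) + 1) * (K - (φ u).toReal) := by
      linarith
    rwa [one_div, ← div_eq_inv_mul, le_div_iff₀ hn, mul_comm] at h3
  obtain ⟨n, hn⟩ := exists_nat_gt ((K - (φ u).toReal) / ((φ u').toReal - (φ u).toReal))
  have hpos := sub_pos.2 hd
  rw [div_lt_iff₀ hpos] at hn
  linarith [hgrow n]

variable {E : Type*} [NormedAddCommGroup E] [InnerProductSpace ℝ E] [FiniteDimensional ℝ E]
  [MeasurableSpace E] [BorelSpace E] {mΩ : MeasurableSpace Ω}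
  {μ : Measure Ω} {T : ℕ} {𝓕 : ℕ → MeasurableSpace Ω} {D : ℕ → Ω → Set E}
  {Δ η : ℕ → Ω → E} {c y m : Ω → ℝ} {V : ℝ → Ω → EReal} {ε : ℝ}

/-- Forward convex combinations of a sequence of strategies of finite cost have almost surely
bounded shortfall costs. -/
lemma DualBound.exists_cost_bdd [IsProbabilityMeasure μ] (hle : ∀ t, 𝓕 t ≤ mΩ)
    (hmono : ∀ s t, s ≤ t → 𝓕 s ≤ 𝓕 t) (h : DualBound μ T 𝓕 D Δ c V η y m ε)
    (hΔ : ∀ t < T, Measurable (Δ t)) (hc : Measurable c) (hV : IsNormalIntegrand mΩ V)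
    (hVc : ConvexIntegrand V) (hcv : ∀ t < T, ∀ ω, Convex ℝ (D t ω)) {b : ℕ → ℝ}
    (hb : Antitone b) {x : ℕ → ℕ → Ω → E} (hx : ∀ n, CostLE μ T 𝓕 D Δ c V (b n) (x n)) :
    ∃ w : ℕ → ℕ → Ω → E, (∀ n, CostLE μ T 𝓕 D Δ c V (b n) (w n)) ∧
      ∀ᵐ ω ∂μ, ∃ K : ℝ, ∀ n, V (c ω - gain T Δ (w n) ω) ω ≤ (K : EReal) := by
  choose v hvV hvi hv0 hvb using fun n => h.integral_le hle hmono (hx n)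
  obtain ⟨u, hu, hub⟩ := exists_convex_bdd μ x (fun n ω => v n ω + gain T η (x n) ω + m ω) hvi hv0
    (b 0 + ∫ ω, m ω ∂μ) (fun n => (hvb n).trans (by linarith [hb (Nat.zero_le n)]))
  -- The second component of the convex combination still dominates the integrand.
  have hP : ∀ n, CostLE μ T 𝓕 D Δ c V (b n) (u n).1 ∧ ∀ᵐ ω ∂μ,
      V (c ω - gain T Δ (u n).1 ω) ω ≤ (((u n).2 ω - gain T η (u n).1 ω - m ω : ℝ) : EReal) := by
    intro n
    have hconv : Convex ℝ {p : (ℕ → Ω → E) × (Ω → ℝ) | CostLE μ T 𝓕 D Δ c V (b n) p.1 ∧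
        ∀ᵐ ω ∂μ, V (c ω - gain T Δ p.1 ω) ω ≤
          ((p.2 ω - gain T η p.1 ω - m ω : ℝ) : EReal)} := by
      rintro p ⟨hp1, hp2⟩ q ⟨hq1, hq2⟩ α β hα hβ hαβ
      refine ⟨h.convex_costLE hle hmono hΔ hc hV hVc hcv (b n) hp1 hq1 hα hβ hαβ, ?_⟩
      filter_upwards [hp2, hq2] with ω h1 h2
      refine (cost_comb_le hVc h1 h2 hα hβ hαβ).trans (le_of_eq ?_)
      rw [EReal.coe_eq_coe_iff]
      simp only [Prod.fst_add, Prod.smul_fst, Prod.snd_add, Prod.smul_snd, gain_add, gain_smul,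
        Pi.add_apply, Pi.smul_apply, smul_eq_mul]
      linear_combination (-m ω) * hαβ
    refine convexHull_min ?_ hconv (hu n)
    rintro _ ⟨k, hk, rfl⟩
    refine ⟨?_, ?_⟩
    · obtain ⟨hf, q, hq, hqV, hqb⟩ := hx k
      exact ⟨hf, q, hq, hqV, hqb.trans (hb hk)⟩
    · filter_upwards [hvV k] with ω h1
      rw [h1, EReal.coe_le_coe_iff]
      linarith
  refine ⟨fun n => (u n).1, fun n => (hP n).1, ?_⟩
  have hreal : ∀ n, ∃ q : Ω → ℝ, ∀ᵐ ω ∂μ, V (c ω - gain T Δ (u n).1 ω) ω = (q ω : EReal) := by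
    intro n
    obtain ⟨-, q, -, hq, -⟩ := (hP n).1
    exact ⟨q, hq⟩
  choose q hq using hreal
  filter_upwards [hub, ae_all_iff.2 fun n => (hP n).2, ae_all_iff.2 hq,
    ae_all_iff.2 fun n => h.bound _ (hP n).1.1] with ω ⟨C, hC⟩ h1 h2 h3
  refine ⟨C + C / ε, fun n => ?_⟩
  have h4 := h1 n
  rw [h2 n, EReal.coe_le_coe_iff] at h4 ⊢
  have h5 : (u n).2 ω ≤ C := hC ⟨n, rfl⟩
  have h6 := ((h3 n).2 _ (h2 n)).2
  have h7 : |y ω * gain T Δ (u n).1 ω| ≤ C / ε := by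
    rw [le_div_iff₀ h.pos, mul_comm]
    linarith
  linarith [(h3 n).1]

/-- Bounded shortfall costs can be realised, at the same cost levels, by almost surely bounded
strategies: it suffices to make the strategies near-minimal modulo lossless ones. -/
lemma exists_strategy_bdd [IsProbabilityMeasure μ] (hle : ∀ t, 𝓕 t ≤ mΩ)
    (hmono : ∀ s t, s ≤ t → 𝓕 s ≤ 𝓕 t) (hV : IsNormalIntegrand mΩ V)
    (hVm : ∀ ω, Monotone fun u => V u ω) (hVc : ConvexIntegrand V)
    (hVnc : ∀ ω, ∃ u u' : ℝ, V u ω ≠ V u' ω)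
    (hcl : ∀ t < T, ∀ ω, IsClosed (D t ω)) (hcv : ∀ t < T, ∀ ω, Convex ℝ (D t ω))
    {S : Submodule ℝ (ℕ → Ω → E)} (hS : Lossless μ T 𝓕 D Δ = ↑S) {b : ℕ → ℝ}
    {x : ℕ → ℕ → Ω → E} (hx : ∀ n, CostLE μ T 𝓕 D Δ c V (b n) (x n))
    (hK : ∀ᵐ ω ∂μ, ∃ K : ℝ, ∀ n, V (c ω - gain T Δ (x n) ω) ω ≤ (K : EReal)) :
    ∃ w : ℕ → ℕ → Ω → E, (∀ n, CostLE μ T 𝓕 D Δ c V (b n) (w n)) ∧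
      ∀ s < T, ∀ᵐ ω ∂μ, BddAbove (range fun n => ‖w n s ω‖) := by
  choose z hz hzmin using fun n => exists_shift hle hmono hS (x n) (hx n).1.1
  have hgain : ∀ n, ∀ᵐ ω ∂μ, gain T Δ (x n + z n) ω = gain T Δ (x n) ω := fun n => by
    filter_upwards [lossless_value_eq_zero hS (hz n)] with ω hω
    rw [gain_add]
    simpa [gain] using hω
  have hw : ∀ n, CostLE μ T 𝓕 D Δ c V (b n) (x n + z n) := by
    intro n
    obtain ⟨hf, v, hv, hvV, hvb⟩ := hx n
    refine ⟨⟨fun t ht => ?_, fun t ht => ?_⟩, v, hv, ?_, hvb⟩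
    · exact Measurable.add (m := 𝓕 t) (hf.1 t ht) ((hz n).1 t ht)
    · filter_upwards [hf.2 t ht, (hz n).2.2 t ht] with ω h1 h2
      have := h2 _ h1 1 zero_le_one
      rwa [one_smul] at this
    · filter_upwards [hvV, hgain n] with ω h1 h2
      rw [h2, h1]
  have hlow : ∀ᵐ ω ∂μ, ∃ β : ℝ, ∀ n, -β ≤ gain T Δ (x n + z n) ω := by
    filter_upwards [hK, ae_all_iff.2 hgain] with ω ⟨K, hKω⟩ hg
    obtain ⟨u, hu⟩ := exists_lt_of_convex (fun u => hV.2.2 u ω) (hVc ω) (hVnc ω) K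
    refine ⟨u - c ω, fun n => ?_⟩
    rw [hg n]
    have h1 : c ω - gain T Δ (x n) ω < u := by
      by_contra hcon
      exact absurd ((hVm ω (not_lt.1 hcon)).trans (hKω n)) (not_le.2 hu)
    linarith
  refine ⟨fun n => x n + z n, hw, ?_⟩
  let w : ℕ → ℕ → Ω → E := fun n => x n + z n
  have hseq : NearMinSeq μ T 𝓕 D Δ (w 0) 0 (fun n => w n - w 0) := by
    refine ⟨fun k s hs => ?_, fun k s hs => ?_, ?_, fun s hs => absurd hs (Nat.not_lt_zero s),
      fun s hs _ => ⟨fun ω => 1 + 2 * ‖w 0 s ω‖, fun ω => by positivity, fun k z' hz' => ?_⟩⟩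
    · have e : 𝓕 (max s 0) = 𝓕 s := by rw [Nat.max_zero]
      rw [e]
      exact Measurable.sub (m := 𝓕 s) ((hw k).1.1 s hs) ((hw 0).1.1 s hs)
    · filter_upwards [(hw k).1.2 s hs] with ω h1
      simp only [Pi.sub_apply, add_sub_cancel]
      exact h1
    · filter_upwards [hlow] with ω ⟨β, hβ⟩
      refine ⟨β + gain T Δ (w 0) ω, fun k => ?_⟩
      have := gain_sub T Δ (w k) (w 0) ω
      rw [gain] at this
      rw [this]
      linarith [hβ k]
    · filter_upwards [hzmin k s hs z' hz'] with ω h1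
      have h2 : ‖w k s ω‖ ≤ ‖w k s ω + z' s ω‖ + 1 := h1
      have h3 := norm_sub_le (w k s ω) (w 0 s ω)
      have h4 := norm_add_le (w k s ω - w 0 s ω + z' s ω) (w 0 s ω)
      have e : w k s ω - w 0 s ω + z' s ω + w 0 s ω = w k s ω + z' s ω := by abel
      rw [e] at h4
      simp only [Pi.sub_apply]
      linarith
  intro s hs
  filter_upwards [hseq.bddAbove hle hmono hcl hcv (hw 0).1.2 hS T 0 (zero_add T) _ s hs]
    with ω ⟨C, hC⟩
  refine ⟨C + ‖w 0 s ω‖, ?_⟩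
  rintro _ ⟨n, rfl⟩
  have h1 : ‖w n s ω - w 0 s ω‖ ≤ C := hC ⟨n, rfl⟩
  have h2 := norm_add_le (w n s ω - w 0 s ω) (w 0 s ω)
  rw [sub_add_cancel] at h2
  exact h2.trans (by linarith)

/-- Fatou's lemma along a convergent sequence of strategies. -/
lemma DualBound.costLE_of_tendsto [IsProbabilityMeasure μ] (hle : ∀ t, 𝓕 t ≤ mΩ)
    (hmono : ∀ s t, s ≤ t → 𝓕 s ≤ 𝓕 t) (h : DualBound μ T 𝓕 D Δ c V η y m ε)
    (hΔ : ∀ t < T, Measurable (Δ t)) (hc : Measurable c) (hV : IsNormalIntegrand mΩ V)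
    {b : ℕ → ℝ} {I : ℝ} (hb : Tendsto b atTop (𝓝 I)) {u : ℕ → ℕ → Ω → E}
    (hu : ∀ n, CostLE μ T 𝓕 D Δ c V (b n) (u n)) {x : ℕ → Ω → E} (hx : Feasible μ T 𝓕 D x)
    (hlim : ∀ t < T, ∀ᵐ ω ∂μ, Tendsto (fun n => u n t ω) atTop (𝓝 (x t ω))) :
    CostLE μ T 𝓕 D Δ c V I x := by
  choose v hvV hvi hv0 hvb using fun n => h.integral_le hle hmono (hu n)
  let f : ℕ → Ω → ℝ≥0∞ := fun n ω => ENNReal.ofReal (v n ω + gain T η (u n) ω + m ω)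
  let F : Ω → ℝ≥0∞ := fun ω => liminf (fun n => f n ω) atTop
  have hfm : ∀ n, AEMeasurable (f n) μ := fun n => (hvi n).aemeasurable.ennreal_ofReal
  have hF : ∫⁻ ω, F ω ∂μ ≤ ENNReal.ofReal (I + ∫ ω, m ω ∂μ) := by
    refine (lintegral_liminf_le' hfm).trans ?_
    have hlim' : Tendsto (fun n => ENNReal.ofReal (b n + ∫ ω, m ω ∂μ)) atTop
        (𝓝 (ENNReal.ofReal (I + ∫ ω, m ω ∂μ))) :=
      ENNReal.tendsto_ofReal (hb.add_const _)
    rw [← hlim'.liminf_eq]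
    refine liminf_le_liminf (Eventually.of_forall fun n => ?_)
    dsimp only [f]
    rw [← ofReal_integral_eq_lintegral_ofReal (hvi n) (hv0 n)]
    exact ENNReal.ofReal_le_ofReal (hvb n)
  have hFfin : ∫⁻ ω, F ω ∂μ ≠ ⊤ := (hF.trans_lt ENNReal.ofReal_lt_top).ne
  have hFm : AEMeasurable F μ := by
    have e : F = fun ω => ⨆ n, ⨅ i, f (i + n) ω := by
      funext ω
      exact liminf_eq_iSup_iInf_of_nat'
    rw [e]
    exact AEMeasurable.iSup fun n => AEMeasurable.iInf fun i => hfm _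
  have hgl : ∀ (θ : ℕ → Ω → E), ∀ᵐ ω ∂μ,
      Tendsto (fun n => gain T θ (u n) ω) atTop (𝓝 (gain T θ x ω)) := by
    intro θ
    have hz' : ∀ᵐ ω ∂μ, ∀ t ∈ Finset.range T, Tendsto (fun n => u n t ω) atTop (𝓝 (x t ω)) :=
      (Finset.eventually_all _).2 fun t ht => hlim t (Finset.mem_range.1 ht)
    filter_upwards [hz'] with ω hω
    exact tendsto_finsetSum _ fun t ht => (hω t ht).inner tendsto_const_nhds
  -- Lower semicontinuity bounds the limit cost by `F`.
  have hup : ∀ᵐ ω ∂μ, V (c ω - gain T Δ x ω) ω ≤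
      (((F ω).toReal - gain T η x ω - m ω : ℝ) : EReal) := by
    filter_upwards [hgl Δ, hgl η, ae_all_iff.2 hvV, ae_lt_top' hFm hFfin] with ω h1 h2 h3 h4
    refine EReal.ge_of_forall_gt_iff_ge.1 fun r hr => ?_
    rw [EReal.coe_le_coe_iff]
    have h5 : ∀ᶠ n in atTop, (r : EReal) < V (c ω - gain T Δ (u n) ω) ω :=
      (h1.const_sub (c ω)).eventually (hV.2.1 ω _ _ hr)
    have h6 : ENNReal.ofReal (r + gain T η x ω + m ω) ≤ F ω := by
      have h7 : Tendsto (fun n => ENNReal.ofReal (r + gain T η (u n) ω + m ω)) atTop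
          (𝓝 (ENNReal.ofReal (r + gain T η x ω + m ω))) :=
        ENNReal.tendsto_ofReal ((h2.const_add r).add_const (m ω))
      rw [← h7.liminf_eq]
      refine liminf_le_liminf ?_
      filter_upwards [h5] with n hn
      rw [h3 n, EReal.coe_lt_coe_iff] at hn
      exact ENNReal.ofReal_le_ofReal (by linarith)
    have h8 := (ENNReal.ofReal_le_iff_le_toReal h4.ne).1 h6
    linarith
  have hm := measurable_cost hle hΔ hc hV hx
  let p : Ω → ℝ := fun ω => (V (c ω - gain T Δ x ω) ω).toReal
  have hp : ∀ᵐ ω ∂μ, V (c ω - gain T Δ x ω) ω = (p ω : EReal) := by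
    filter_upwards [hup] with ω h1
    exact (EReal.coe_toReal (h1.trans_lt (EReal.coe_lt_top _)).ne (hV.2.2 _ ω)).symm
  have hpF : ∀ᵐ ω ∂μ, p ω + gain T η x ω + m ω ≤ (F ω).toReal := by
    filter_upwards [hup, hp] with ω h1 h2
    rw [h2, EReal.coe_le_coe_iff] at h1
    linarith
  have hFi : Integrable (fun ω => (F ω).toReal) μ := integrable_toReal_of_lintegral_ne_top hFm hFfin
  have hbd := h.bound x hx
  -- The dual bounds show that the martingale transform is bounded below by an integrable variable.
  obtain ⟨hM, hM0⟩ := h.integrable_gain hle hmono hx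
    (g := fun ω => (F ω).toReal / ε + m ω) ((hFi.div_const ε).add h.int_m) (by
      filter_upwards [hbd, hp, hpF] with ω h1 h2 h3
      have h4 : |y ω * gain T Δ x ω| ≤ (F ω).toReal / ε := by
        rw [le_div_iff₀ h.pos, mul_comm]
        linarith [(h1.2 _ h2).2]
      linarith [h1.1])
  have hpw : Integrable (fun ω => (F ω).toReal - gain T η x ω - m ω) μ := (hFi.sub hM).sub h.int_m
  obtain ⟨hpi, -, -⟩ := h.integrable_of_pos hle hmono hx hm.ereal_toReal.aestronglyMeasurable hp
    hpw (by filter_upwards [hpF] with ω h1; linarith)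
  refine ⟨hx, p, hpi, hp, ?_⟩
  have hI0 : 0 ≤ I + ∫ ω, m ω ∂μ := by
    refine ge_of_tendsto' (hb.add_const (∫ ω, m ω ∂μ)) fun n => ?_
    exact (integral_nonneg_of_ae (hv0 n)).trans (hvb n)
  have h1 : ∫ ω, p ω ∂μ ≤ ∫ ω, ((F ω).toReal - gain T η x ω - m ω) ∂μ :=
    integral_mono_ae hpi hpw (by filter_upwards [hpF] with ω h1; linarith)
  have e1 : ∫ ω, ((F ω).toReal - gain T η x ω - m ω) ∂μ =
      ∫ ω, ((F ω).toReal - gain T η x ω) ∂μ - ∫ ω, m ω ∂μ := integral_sub (hFi.sub hM) h.int_m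
  rw [e1, integral_sub hFi hM, hM0, integral_toReal hFm (ae_lt_top' hFm hFfin)] at h1
  have h2 := ENNReal.toReal_le_of_le_ofReal hI0 hF
  linarith

/-- The infimum over the strategies of finite cost is attained. -/
lemma DualBound.exists_min [IsProbabilityMeasure μ] (hle : ∀ t, 𝓕 t ≤ mΩ)
    (hmono : ∀ s t, s ≤ t → 𝓕 s ≤ 𝓕 t) (h : DualBound μ T 𝓕 D Δ c V η y m ε)
    (hΔ : ∀ t < T, Measurable (Δ t)) (hc : Measurable c) (hV : IsNormalIntegrand mΩ V)
    (hVm : ∀ ω, Monotone fun u => V u ω) (hVc : ConvexIntegrand V)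
    (hVnc : ∀ ω, ∃ u u' : ℝ, V u ω ≠ V u' ω)
    (hcl : ∀ t < T, ∀ ω, IsClosed (D t ω)) (hcv : ∀ t < T, ∀ ω, Convex ℝ (D t ω))
    {S : Submodule ℝ (ℕ → Ω → E)} (hS : Lossless μ T 𝓕 D Δ = ↑S)
    (hne : ∃ b x, CostLE μ T 𝓕 D Δ c V b x) :
    ∃ I x, CostLE μ T 𝓕 D Δ c V I x ∧ ∀ b x', CostLE μ T 𝓕 D Δ c V b x' → I ≤ b := by
  let R : Set ℝ := {b | ∃ x, CostLE μ T 𝓕 D Δ c V b x}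
  have hRne : R.Nonempty := hne
  have hRb : BddBelow R := by
    refine ⟨-∫ ω, m ω ∂μ, ?_⟩
    rintro b ⟨x, hx⟩
    obtain ⟨v, -, -, h0, hb⟩ := h.integral_le hle hmono hx
    linarith [integral_nonneg_of_ae h0]
  let b : ℕ → ℝ := fun n => sInf R + 1 / ((n : ℝ) + 1)
  have hx : ∀ n, ∃ x, CostLE μ T 𝓕 D Δ c V (b n) x := by
    intro n
    obtain ⟨r, ⟨x, hf, v, hv, hvV, hvr⟩, hr⟩ := exists_lt_of_csInf_lt hRne
      (show sInf R < b n from lt_add_of_pos_right _ (by positivity))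
    exact ⟨x, hf, v, hv, hvV, hvr.trans hr.le⟩
  have hb : Antitone b := fun k n hkn =>
    add_le_add le_rfl (one_div_le_one_div_of_le (by positivity) (by
      have : (k : ℝ) ≤ n := by exact_mod_cast hkn
      linarith))
  have hbl : Tendsto b atTop (𝓝 (sInf R)) := by
    have := tendsto_one_div_add_atTop_nhds_zero_nat (𝕜 := ℝ)
    simpa [b] using this.const_add (sInf R)
  choose x hx using hx
  obtain ⟨x₁, hx₁, hK⟩ := h.exists_cost_bdd hle hmono hΔ hc hV hVc hcv hb hx
  obtain ⟨w, hw, hwb⟩ := exists_strategy_bdd hle hmono hV hVm hVc hVnc hcl hcv hS hx₁ hK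
  obtain ⟨u, hu, hul⟩ := exists_convex_tendsto μ T w
    (fun k s hs => ((hw k).1.1 s hs).mono (hle s) le_rfl) hwb
  have huC : ∀ n, CostLE μ T 𝓕 D Δ c V (b n) (u n) := by
    intro n
    refine convexHull_min ?_ (h.convex_costLE hle hmono hΔ hc hV hVc hcv (b n)) (hu n)
    rintro _ ⟨k, hk, rfl⟩
    obtain ⟨hf, v, hv, hvV, hvb⟩ := hw k
    exact ⟨hf, v, hv, hvV, hvb.trans (hb hk)⟩
  have hlim : ∀ t, ∃ z : Ω → E, t < T → Measurable[𝓕 t] z ∧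
      ∀ᵐ ω ∂μ, Tendsto (fun n => u n t ω) atTop (𝓝 (z ω)) := by
    intro t
    by_cases ht : t < T
    · obtain ⟨z, hz⟩ := exists_measurable_limit (hle t) (f := fun n => u n t)
        (fun n => (huC n).1.1 t ht) (hul t ht)
      exact ⟨z, fun _ => hz⟩
    · exact ⟨0, fun h' => absurd h' ht⟩
  choose z hz using hlim
  refine ⟨sInf R, z, h.costLE_of_tendsto hle hmono hΔ hc hV hbl huC
    ⟨fun t ht => (hz t ht).1, fun t ht => ?_⟩ (fun t ht => (hz t ht).2),
    fun b' x' hx' => csInf_le hRb ⟨x', hx'⟩⟩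
  filter_upwards [(hz t ht).2, ae_all_iff.2 fun n => (huC n).1.2 t ht] with ω h1 h2
  exact (hcl t ht ω).mem_of_tendsto h1 (Eventually.of_forall h2)

end Attain
/-! ### The dual bounds -/

section Dual

open Set Filter Topology

variable {E : Type*} [NormedAddCommGroup E] [InnerProductSpace ℝ E] [FiniteDimensional ℝ E]
  [MeasurableSpace E] [BorelSpace E] {mΩ : MeasurableSpace Ω}
  {μ : Measure Ω} {T : ℕ} {𝓕 : ℕ → MeasurableSpace Ω} {D : ℕ → Ω → Set E}
  {Δ : ℕ → Ω → E} {c y : Ω → ℝ} {V : ℝ → Ω → EReal} {ε : ℝ}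

lemma le_of_conj_eq {φ : ℝ → EReal} {q g : ℝ}
    (h : (⨆ u : ℝ, ((u * q : ℝ) : EReal) - φ u) = (g : EReal)) {u v : ℝ} (hv : φ u = (v : EReal)) :
    u * q - v ≤ g := by
  have h1 := le_iSup (fun u : ℝ => ((u * q : ℝ) : EReal) - φ u) u
  rw [h] at h1
  rw [hv, ← EReal.coe_sub, EReal.coe_le_coe_iff] at h1
  exact h1

/-- Fenchel's inequality at the multiples `1 - ε`, `1` and `1 + ε` of `y`, together with the bound
on `⟪x t, E_t[y Δ t]⟫` by the support function, gives the dual bounds. -/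
lemma exists_dualBound [IsProbabilityMeasure μ] (hle : ∀ t, 𝓕 t ≤ mΩ) (hε : 0 < ε)
    (hcy : Integrable (fun ω => c ω * y ω) μ)
    (hys : ∀ t < T, Integrable (fun ω => y ω • Δ t ω) μ)
    (hsupp : ∀ t < T, ∃ g : Ω → ℝ, Integrable g μ ∧ ∀ᵐ ω ∂μ,
      (⨆ z : D t ω, ((⟪z.1, (μ[fun ω' => y ω' • Δ t ω'|𝓕 t]) ω⟫ : ℝ) : EReal))
        = ((g ω : ℝ) : EReal))
    (hVconj : ∀ l ∈ Set.Icc (1 - ε) (1 + ε), ∃ g : Ω → ℝ, Integrable g μ ∧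
      ∀ᵐ ω ∂μ, (⨆ u : ℝ, ((u * (l * y ω) : ℝ) : EReal) - V u ω) = ((g ω : ℝ) : EReal)) :
    ∃ (η : ℕ → Ω → E) (m : Ω → ℝ), DualBound μ T 𝓕 D Δ c V η y m ε := by
  choose! G hGi hG using hsupp
  obtain ⟨g₀, hg₀i, hg₀⟩ := hVconj (1 - ε) ⟨le_rfl, by linarith⟩
  obtain ⟨g₁, hg₁i, hg₁⟩ := hVconj 1 ⟨by linarith, by linarith⟩
  obtain ⟨g₂, hg₂i, hg₂⟩ := hVconj (1 + ε) ⟨by linarith, le_rfl⟩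
  let p : ℕ → Ω → E := fun t => μ[fun ω => y ω • Δ t ω|𝓕 t]
  let m : Ω → ℝ := fun ω => (1 + ε) * |c ω * y ω| + |g₀ ω| + |g₁ ω| + |g₂ ω| +
    ∑ t ∈ Finset.range T, |G t ω|
  refine ⟨fun t ω => y ω • Δ t ω - p t ω, m, hε, fun t ht => (hys t ht).sub integrable_condExp,
    fun t ht => ?_, ?_, fun x hx => ?_⟩
  · have h1 : μ[p t|𝓕 t] = p t := condExp_of_stronglyMeasurable (hle t)
      stronglyMeasurable_condExp integrable_condExp
    filter_upwards [condExp_sub (m := 𝓕 t) (hys t ht) (integrable_condExp (m := 𝓕 t)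
      (f := fun ω => y ω • Δ t ω))] with ω hω
    refine Eq.trans hω ?_
    rw [Pi.sub_apply]
    change p t ω - (μ[p t|𝓕 t]) ω = 0
    rw [h1, sub_self]
  · exact ((((hcy.abs.const_mul _).add hg₀i.abs).add hg₁i.abs).add hg₂i.abs).add
      (integrable_finsetSum _ fun t ht => (hGi t (Finset.mem_range.1 ht)).abs)
  · have hD' : ∀ᵐ ω ∂μ, ∀ t ∈ Finset.range T, x t ω ∈ D t ω :=
      (Finset.eventually_all _).2 fun t ht => hx.2 t (Finset.mem_range.1 ht)
    have hG' : ∀ᵐ ω ∂μ, ∀ t ∈ Finset.range T,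
        (⨆ z : D t ω, ((⟪z.1, p t ω⟫ : ℝ) : EReal)) = ((G t ω : ℝ) : EReal) :=
      (Finset.eventually_all _).2 fun t ht => hG t (Finset.mem_range.1 ht)
    filter_upwards [hD', hG', hg₀, hg₁, hg₂] with ω h1 h2 h3 h4 h5
    have hP : ∑ t ∈ Finset.range T, ⟪x t ω, p t ω⟫ ≤ ∑ t ∈ Finset.range T, |G t ω| := by
      refine Finset.sum_le_sum fun t ht => ?_
      have h6 := le_iSup (fun z : D t ω => ((⟪z.1, p t ω⟫ : ℝ) : EReal)) ⟨x t ω, h1 t ht⟩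
      rw [h2 t ht, EReal.coe_le_coe_iff] at h6
      exact h6.trans (le_abs_self _)
    have hM : gain T (fun t ω => y ω • Δ t ω - p t ω) x ω =
        y ω * gain T Δ x ω - ∑ t ∈ Finset.range T, ⟪x t ω, p t ω⟫ := by
      simp only [gain, inner_sub_right, real_inner_smul_right, Finset.sum_sub_distrib,
        Finset.mul_sum]
    rw [hM]
    have hm : m ω = (1 + ε) * |c ω * y ω| + |g₀ ω| + |g₁ ω| + |g₂ ω| +
      ∑ t ∈ Finset.range T, |G t ω| := rfl
    have e0 := abs_nonneg (g₀ ω)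
    have e1 := abs_nonneg (g₁ ω)
    have e2 := abs_nonneg (g₂ ω)
    have f0 := le_abs_self (g₀ ω)
    have f1 := le_abs_self (g₁ ω)
    have f2 := le_abs_self (g₂ ω)
    have k0 := neg_abs_le (c ω * y ω)
    have k1 := le_abs_self (c ω * y ω)
    have k2 := mul_nonneg hε.le (abs_nonneg (c ω * y ω))
    have k3 := mul_nonneg hε.le (sub_nonneg.2 k1)
    have k4 := mul_nonneg hε.le (sub_nonneg.2 k0)
    have k5 := abs_nonneg (c ω * y ω)
    refine ⟨?_, fun v hv => ⟨?_, ?_⟩⟩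
    · linarith [neg_abs_le (y ω * gain T Δ x ω)]
    · have h6 := le_of_conj_eq h4 hv
      linarith
    · have h6 := le_of_conj_eq h3 hv
      have h7 := le_of_conj_eq h5 hv
      have e : ε * |y ω * gain T Δ x ω| = |ε * (y ω * gain T Δ x ω)| := by
        rw [abs_mul ε, abs_of_pos hε]
      rw [e, abs_le]
      constructor <;> linarith

end Dual
/-- Theorem 5.6: existence of optimal solutions for the hedging
problem (ALM) under the integrability condition (1) and the linearity condition (2). -/
theorem statement17 {Ω : Type*} {mΩ : MeasurableSpace Ω} (μ : Measure Ω)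
    [IsProbabilityMeasure μ] (hcompl : μ.IsComplete)
    (T J : ℕ) (𝓕 : ℕ → MeasurableSpace Ω)
    (hle : ∀ t, 𝓕 t ≤ mΩ) (hmono : ∀ s t, s ≤ t → 𝓕 s ≤ 𝓕 t)
    (s : ℕ → Ω → EuclideanSpace ℝ (Fin J))
    (hs : ∀ t ≤ T, Measurable[𝓕 t] (s t))
    (c : Ω → ℝ) (hc : Measurable c)
    (V : ℝ → Ω → EReal) (hVNI : IsNormalIntegrand mΩ V)
    (hVmono : ∀ ω, Monotone fun u => V u ω)
    (hVconv : ConvexIntegrand V)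
    (hVnc : ∀ ω, ∃ u u' : ℝ, V u ω ≠ V u' ω)
    (D : ℕ → Ω → Set (EuclideanSpace ℝ (Fin J)))
    (hDmeas : ∀ t < T, MeasurableSet[MeasurableSpace.prod inferInstance (𝓕 t)]
      {q : EuclideanSpace ℝ (Fin J) × Ω | q.1 ∈ D t q.2})
    (hDne : ∀ t < T, ∀ ω, (D t ω).Nonempty)
    (hDcl : ∀ t < T, ∀ ω, IsClosed (D t ω))
    (hDconv : ∀ t < T, ∀ ω, Convex ℝ (D t ω))
    (y : Ω → ℝ) (hy : Measurable y) (ε : ℝ) (hε : 0 < ε)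
    (hcy : Integrable (fun ω => c ω * y ω) μ)
    (hys : ∀ t < T, Integrable (fun ω => y ω • (s (t + 1) ω - s t ω)) μ)
    (hsupp : ∀ t < T, ∃ g : Ω → ℝ, Integrable g μ ∧ ∀ᵐ ω ∂μ,
      (⨆ z : D t ω,
        ((⟪z.1, (μ[fun ω' => y ω' • (s (t + 1) ω' - s t ω')|𝓕 t]) ω⟫ : ℝ) : EReal))
        = ((g ω : ℝ) : EReal))
    (hVconj : ∀ l ∈ Set.Icc (1 - ε) (1 + ε), ∃ g : Ω → ℝ, Integrable g μ ∧
      ∀ᵐ ω ∂μ, (⨆ u : ℝ, ((u * (l * y ω) : ℝ) : EReal) - V u ω) = ((g ω : ℝ) : EReal))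
    (hlin : ∃ S : Submodule ℝ (ℕ → Ω → EuclideanSpace ℝ (Fin J)),
      {x : ℕ → Ω → EuclideanSpace ℝ (Fin J) |
        (∀ t < T, Measurable[𝓕 t] (x t)) ∧
        (∀ᵐ ω ∂μ, 0 ≤ ∑ t ∈ Finset.range T, ⟪x t ω, s (t + 1) ω - s t ω⟫) ∧
        ∀ t < T, ∀ᵐ ω ∂μ, x t ω ∈ recCone (D t ω)} = ↑S) :
    ∃ x : ℕ → Ω → EuclideanSpace ℝ (Fin J),
      (∀ t < T, Measurable[𝓕 t] (x t)) ∧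
      (∀ t < T, ∀ᵐ ω ∂μ, x t ω ∈ D t ω) ∧
      ∀ x' : ℕ → Ω → EuclideanSpace ℝ (Fin J),
        (∀ t < T, Measurable[𝓕 t] (x' t)) → (∀ t < T, ∀ᵐ ω ∂μ, x' t ω ∈ D t ω) →
        EInt μ (fun ω =>
            V (c ω - ∑ t ∈ Finset.range T, ⟪x t ω, s (t + 1) ω - s t ω⟫) ω) ≤
          EInt μ (fun ω =>
            V (c ω - ∑ t ∈ Finset.range T, ⟪x' t ω, s (t + 1) ω - s t ω⟫) ω) := by
  let Δ : ℕ → Ω → EuclideanSpace ℝ (Fin J) := fun t ω => s (t + 1) ω - s t ω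
  have hΔ : ∀ t < T, Measurable (Δ t) := fun t ht =>
    ((hs (t + 1) ht).mono (hle _) le_rfl).sub ((hs t ht.le).mono (hle _) le_rfl)
  obtain ⟨S, hS⟩ := hlin
  obtain ⟨η, m, h⟩ := exists_dualBound (Δ := Δ) (c := c) hle hε hcy hys hsupp hVconj
  by_cases hne : ∃ b x, CostLE μ T 𝓕 D Δ c V b x
  · obtain ⟨I, x, ⟨hx, v, hv, hvV, hvI⟩, hmin⟩ :=
      h.exists_min hle hmono hΔ hc hVNI hVmono hVconv hVnc hDcl hDconv (S := S) hS hne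
    refine ⟨x, hx.1, hx.2, fun x' hx'm hx'D => ?_⟩
    change EInt μ (fun ω => V (c ω - gain T Δ x ω) ω) ≤
      EInt μ (fun ω => V (c ω - gain T Δ x' ω) ω)
    by_cases htop : EInt μ (fun ω => V (c ω - gain T Δ x' ω) ω) = ⊤
    · rw [htop]
      exact le_top
    · obtain ⟨b, hb, hbE⟩ := h.costLE_of_eInt hle hmono hΔ hc hVNI ⟨hx'm, hx'D⟩ htop
      rw [hbE, eInt_eq_integral hv hvV, EReal.coe_le_coe_iff]
      exact hvI.trans (hmin b x' hb)
  · -- Without strategies of finite cost every feasible strategy is optimal.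
    have hsel : ∀ t, ∃ f : Ω → EuclideanSpace ℝ (Fin J), t < T → Measurable[𝓕 t] f ∧
        ∀ᵐ ω ∂μ, f ω ∈ D t ω := by
      intro t
      by_cases ht : t < T
      · have := isFiniteMeasure_trim (μ := μ) (hle t)
        obtain ⟨f, hf, hfD⟩ := @exists_ae_selection _ Ω _ _ _ _ _ (𝓕 t) (μ.trim (hle t)) _ (D t)
          (hDmeas t ht) (hDne t ht) (hDcl t ht) (hDconv t ht)
        exact ⟨f, fun _ => ⟨hf, ae_of_ae_trim (hle t) hfD⟩⟩
      · exact ⟨0, fun h' => absurd h' ht⟩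
    choose x hx using hsel
    refine ⟨x, fun t ht => (hx t ht).1, fun t ht => (hx t ht).2, fun x' hx'm hx'D => ?_⟩
    change EInt μ (fun ω => V (c ω - gain T Δ x ω) ω) ≤
      EInt μ (fun ω => V (c ω - gain T Δ x' ω) ω)
    by_cases htop : EInt μ (fun ω => V (c ω - gain T Δ x' ω) ω) = ⊤
    · rw [htop]
      exact le_top
    · obtain ⟨b, hb, -⟩ := h.costLE_of_eInt hle hmono hΔ hc hVNI ⟨hx'm, hx'D⟩ htop
      exact absurd ⟨b, x', hb⟩ hne

end PaperDP
end
end
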